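/- arXiv:1705.09707 — 5 statements merged into one kernel-verified Lean document; each statement's English description precedes it below -/
import Mathlib

section
/- Let X be a standard Borel space equipped with a Borel probability measure μ, let Y be a standard Borel space, and let A ⊆ X × Y be an analytic set such that for every x ∈ X the fiber {y ∈ Y : (x, y) ∈ A} is uncountable. Then there exists a Borel set Ā ⊆ A such that for μ-almost-every x ∈ X the fiber {y ∈ Y : (x, y) ∈ Ā} is uncountable. -/
open MeasureTheory Set Function
open scoped ENNReal symmDiff

/-- A set in a measurable space is *analytic* if it is the image of a Borel subset of a
standard Borel space under a Borel (measurable) map. -/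
def IsAnalyticS {W : Type*} [MeasurableSpace W] (A : Set W) : Prop :=
  ∃ (Z : Type) (mZ : MeasurableSpace Z), @StandardBorelSpace Z mZ ∧
    ∃ (B : Set Z) (f : Z → W), MeasurableSet[mZ] B ∧ @Measurable Z W mZ _ f ∧ f '' B = A

/-- The smallest `G`-invariant sub-σ-algebra containing the collection `ξ`. -/
def sigmaG (G : Type*) {X : Type*} [Group G] [MulAction G X] (ξ : Set (Set X)) :
    MeasurableSpace X :=
  MeasurableSpace.generateFrom {B | ∃ (g : G), ∃ A ∈ ξ, B = (fun x => g • x) ⁻¹' A}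

/-- The σ-algebra of `G`-invariant measurable sets. -/
def invSigma (G X : Type*) [Group G] [MulAction G X] [MeasurableSpace X] :
    MeasurableSpace X :=
  MeasurableSpace.generateFrom {A | MeasurableSet A ∧ ∀ g : G, (fun x => g • x) ⁻¹' A = A}

/-- Conditional Shannon entropy `H_μ(α | m)` of a countable partition `α` given a
sub-σ-algebra `m`, valued in `[0,∞]`. -/
noncomputable def condEnt {X : Type*} (m : MeasurableSpace X) [mX : MeasurableSpace X]
    (μ : Measure X) {ι : Type*} (α : ι → Set X) : ℝ≥0∞ :=
  ∫⁻ x, ∑' i, ENNReal.ofReal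
    (Real.negMulLog ((μ[(α i).indicator (fun _ => (1 : ℝ)) | m]) x)) ∂μ

/-- Shannon entropy `H_μ(α)` of a countable partition. -/
noncomputable def shEnt {X : Type*} [MeasurableSpace X] (μ : Measure X)
    {ι : Type*} (α : ι → Set X) : ℝ≥0∞ :=
  ∑' i, ENNReal.ofReal (Real.negMulLog (μ (α i)).toReal)

/-- `α` is a countable Borel partition of `X` (indexed by `ℕ`, cells may be empty). -/
def IsPartition {X : Type*} [MeasurableSpace X] (α : ℕ → Set X) : Prop :=
  (∀ i, MeasurableSet (α i)) ∧ Pairwise (Function.onFun Disjoint α) ∧ (⋃ i, α i) = univ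

/-- Every set of `ξ` agrees with an `m`-measurable set modulo `μ`-null sets. -/
def SubsetMod {X : Type*} (m : MeasurableSpace X) [mX : MeasurableSpace X] (μ : Measure X)
    (ξ : Set (Set X)) : Prop :=
  ∀ A ∈ ξ, ∃ B, MeasurableSet[m] B ∧ μ (A ∆ B) = 0

/-- Outer Rokhlin entropy `rh_{G,μ}(ξ | F)`. -/
noncomputable def outerRokhlin (G : Type*) {X : Type*} (ξ : Set (Set X))
    (F : MeasurableSpace X) [Group G] [MulAction G X] [mX : MeasurableSpace X]
    (μ : Measure X) : ℝ≥0∞ :=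
  sInf { h | ∃ α : ℕ → Set X, IsPartition α ∧
      SubsetMod (sigmaG G (Set.range α) ⊔ F ⊔ invSigma G X) μ ξ ∧
      h = condEnt (F ⊔ invSigma G X) μ α }

/-- Rokhlin entropy `rh_G(X, μ | F)`. -/
noncomputable def rokhlin (G : Type*) {X : Type*} (F : MeasurableSpace X) [Group G]
    [MulAction G X] [mX : MeasurableSpace X] (μ : Measure X) : ℝ≥0∞ :=
  outerRokhlin G {A | MeasurableSet A} F μ

/-- Outer Rokhlin entropy `rh_{G,μ}(S | F)` of a sub-σ-algebra `S`. -/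
noncomputable def outerRokhlinAlg (G : Type*) {X : Type*} (S F : MeasurableSpace X) [Group G]
    [MulAction G X] [mX : MeasurableSpace X] (μ : Measure X) : ℝ≥0∞ :=
  outerRokhlin G {A | MeasurableSet[S] A} F μ

/-- The action of `G` on `(X, μ)` is probability-measure-preserving. -/
def IsPmp (G : Type*) {X : Type*} [Group G] [MulAction G X] [MeasurableSpace X]
    (μ : Measure X) : Prop :=
  ∀ g : G, MeasurePreserving (fun x => g • x) μ μ

/-- Aperiodicity: μ-almost-every `G`-orbit is infinite. -/
def Aperiodic (G : Type*) {X : Type*} [Group G] [MulAction G X] [MeasurableSpace X]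
    (μ : Measure X) : Prop :=
  ∀ᵐ x ∂μ, (MulAction.orbit G x).Infinite

/-- Ergodicity of a measure: every invariant Borel set is null or conull. -/
def IsErgodicInv (G : Type*) {X : Type*} [Group G] [MulAction G X] [MeasurableSpace X]
    (ν : Measure X) : Prop :=
  ∀ A : Set X, MeasurableSet A → (∀ g : G, (fun x => g • x) ⁻¹' A = A) → ν A = 0 ∨ ν A = 1

/-- `F` is a `G`-invariant σ-algebra. -/
def InvariantAlg (G : Type*) {X : Type*} (F : MeasurableSpace X) [Group G] [MulAction G X] :
    Prop :=
  ∀ (g : G) (A : Set X), MeasurableSet[F] A → MeasurableSet[F] ((fun x => g • x) ⁻¹' A)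

/-- `F` is countably generated. -/
def CountablyGen {X : Type*} (F : MeasurableSpace X) : Prop :=
  ∃ S : Set (Set X), S.Countable ∧ F = MeasurableSpace.generateFrom S

/-- `π` is an ergodic decomposition map for `μ`. -/
def IsErgDecomp (G : Type*) {X : Type*} [Group G] [MulAction G X] [MeasurableSpace X]
    (μ : Measure X) (π : X → Measure X) : Prop :=
  Measurable π ∧
  (∀ x, IsProbabilityMeasure (π x) ∧ IsPmp G (π x) ∧ IsErgodicInv G (π x)) ∧
  (∀ (g : G) (x : X), π (g • x) = π x) ∧
  (∀ ν : Measure X, IsProbabilityMeasure ν → IsPmp G ν → IsErgodicInv G ν →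
      ν {x | π x = ν} = 1) ∧
  (∀ B : Set X, MeasurableSet B → μ B = ∫⁻ x, π x B ∂μ)

open Filter Topology in
/-- Splitting step for the perfect set theorem. -/
theorem aux_splitting {α β : Type*} [MetricSpace α] [SecondCountableTopology α]
    [TopologicalSpace β] [T2Space β] {q : α → β} (hq : Continuous q) {C : Set α}
    (hC : IsClosed C) (hun : ¬ (q '' C).Countable) {ε : ℝ≥0∞} (hε : 0 < ε) :
    ∃ C₀ C₁ : Set α, (IsClosed C₀ ∧ ¬ (q '' C₀).Countable ∧ C₀ ⊆ C ∧ Metric.ediam C₀ ≤ ε) ∧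
      (IsClosed C₁ ∧ ¬ (q '' C₁).Countable ∧ C₁ ⊆ C ∧ Metric.ediam C₁ ≤ ε) ∧
      Disjoint (q '' C₀) (q '' C₁) := by
  let bad : Set α := {a | a ∈ C ∧ ∃ U ∈ 𝓝 a, (q '' (U ∩ C)).Countable}
  have hbad : (q '' bad).Countable := by
    have h : ∀ a, ∃ U : Set α, a ∈ bad → U ∈ 𝓝 a ∧ (q '' (U ∩ C)).Countable := by
      intro a
      by_cases ha : a ∈ bad
      · obtain ⟨-, U, hU, h⟩ := ha
        exact ⟨U, fun _ => ⟨hU, h⟩⟩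
      · exact ⟨∅, fun h => absurd h ha⟩
    choose U hU using h
    obtain ⟨t, hts, htc, ht⟩ := TopologicalSpace.countable_cover_nhdsWithin (f := U) (s := bad)
      (fun x hx => mem_nhdsWithin_of_mem_nhds (hU x hx).1)
    refine (htc.biUnion (t := fun x _ => q '' (U x ∩ C)) (fun x hx => (hU x (hts hx)).2)).mono ?_
    rintro _ ⟨a, ha, rfl⟩
    obtain ⟨x, hx, hax⟩ := mem_iUnion₂.1 (ht ha)
    exact mem_iUnion₂.2 ⟨x, hx, a, ⟨hax, ha.1⟩, rfl⟩
  have hgood : ¬ (q '' (C \ bad)).Countable := by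
    intro h
    apply hun
    refine (h.union hbad).mono ?_
    rintro _ ⟨a, ha, rfl⟩
    by_cases hab : a ∈ bad
    · exact Or.inr ⟨a, hab, rfl⟩
    · exact Or.inl ⟨a, ⟨ha, hab⟩, rfl⟩
  have hnt : (q '' (C \ bad)).Nontrivial := by
    by_contra h
    exact hgood (not_nontrivial_iff.1 h).countable
  obtain ⟨_, ⟨a, ha, rfl⟩, _, ⟨b, hb, rfl⟩, hab⟩ := hnt
  obtain ⟨U, V, hU, hV, haU, hbV, hUV⟩ := t2_separation hab
  have key : ∀ c ∈ C \ bad, ∀ W : Set β, IsOpen W → q c ∈ W → ∃ D : Set α, IsClosed D ∧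
      ¬ (q '' D).Countable ∧ D ⊆ C ∧ Metric.ediam D ≤ ε ∧ q '' D ⊆ W := by
    intro c hc W hW hcW
    have h1 : q ⁻¹' W ∈ 𝓝 c := (hW.preimage hq).mem_nhds hcW
    have h2 : Metric.eball c (ε / 2) ∈ 𝓝 c := Metric.eball_mem_nhds _ (ENNReal.half_pos hε.ne')
    obtain ⟨F, hF, hFc, hFs⟩ := exists_mem_nhds_isClosed_subset (inter_mem h1 h2)
    refine ⟨F ∩ C, hFc.inter hC, fun h => hc.2 ⟨hc.1, F, hF, h⟩, inter_subset_right, ?_, ?_⟩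
    · refine (Metric.ediam_mono (inter_subset_left.trans (hFs.trans inter_subset_right))).trans ?_
      refine Metric.ediam_eball_le.trans ?_
      rw [mul_comm, ENNReal.div_mul_cancel] <;> norm_num
    · rintro _ ⟨z, hz, rfl⟩
      exact (hFs hz.1).1
  obtain ⟨D₀, h1, h2, h3, h4, h5⟩ := key a ha U hU haU
  obtain ⟨D₁, k1, k2, k3, k4, k5⟩ := key b hb V hV hbV
  exact ⟨D₀, D₁, ⟨h1, h2, h3, h4⟩, ⟨k1, k2, k3, k4⟩, hUV.mono h5 k5⟩

open Filter Topology CantorScheme in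
/-- Perfect set theorem for continuous images of closed sets. -/
theorem aux_perfect {α β : Type*} [MetricSpace α] [CompleteSpace α] [SecondCountableTopology α]
    [TopologicalSpace β] [T2Space β] {q : α → β} (hq : Continuous q) {C : Set α}
    (hC : IsClosed C) (hun : ¬ (q '' C).Countable) :
    ∃ f : (ℕ → Bool) → α, range f ⊆ C ∧ Continuous f ∧ Injective (q ∘ f) := by
  obtain ⟨u, -, upos', hu⟩ := exists_seq_strictAnti_tendsto' (zero_lt_one' ℝ≥0∞)
  have upos := fun n => (upos' n).1
  let P := Subtype fun E : Set α => IsClosed E ∧ ¬ (q '' E).Countable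
  choose C0 C1 h0 h1 hdisj using
    fun {C : Set α} (hC : IsClosed C) (hnonempty : ¬ (q '' C).Countable) {ε : ℝ≥0∞} (hε : 0 < ε) =>
    aux_splitting hq hC hnonempty hε
  let DP : List Bool → P := fun l => by
    induction l with
    | nil => exact ⟨C, ⟨hC, hun⟩⟩
    | cons a l ih =>
      cases a
      · use C0 ih.property.1 ih.property.2 (upos (l.length + 1))
        exact ⟨(h0 _ _ _).1, (h0 _ _ _).2.1⟩
      use C1 ih.property.1 ih.property.2 (upos (l.length + 1))
      exact ⟨(h1 _ _ _).1, (h1 _ _ _).2.1⟩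
  let D : List Bool → Set α := fun l => (DP l).val
  have hanti : ClosureAntitone D := by
    refine Antitone.closureAntitone ?_ fun l => (DP l).property.1
    intro l a
    cases a
    · exact (h0 _ _ _).2.2.1
    exact (h1 _ _ _).2.2.1
  have hdiam : VanishingDiam D := by
    intro x
    apply tendsto_of_tendsto_of_tendsto_of_le_of_le' tendsto_const_nhds hu
    · simp
    rw [eventually_atTop]
    refine ⟨1, fun m (hm : 1 ≤ m) => ?_⟩
    rw [Nat.one_le_iff_ne_zero] at hm
    rcases Nat.exists_eq_succ_of_ne_zero hm with ⟨n, rfl⟩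
    dsimp
    cases x n
    · convert! (h0 _ _ _).2.2.2
      rw [PiNat.res_length]
    convert! (h1 _ _ _).2.2.2
    rw [PiNat.res_length]
  have hdisj' : ∀ l : List Bool, Pairwise fun a b => Disjoint (q '' D (a :: l)) (q '' D (b :: l)) := by
    rintro l (a | a) (b | b) hab <;> try contradiction
    · exact hdisj _ _ _
    exact (hdisj _ _ _).symm
  have hne : ∀ l, (D l).Nonempty := by
    intro l
    by_contra h
    refine (DP l).property.2 ?_
    change (q '' D l).Countable
    rw [not_nonempty_iff_eq_empty.1 h]
    simp
  have hdom : ∀ {x : ℕ → Bool}, x ∈ (inducedMap D).1 := fun {x} => by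
    rw [hanti.map_of_vanishingDiam hdiam hne]
    apply mem_univ
  refine ⟨fun x => (inducedMap D).2 ⟨x, hdom⟩, ?_, ?_, ?_⟩
  · rintro y ⟨x, rfl⟩
    exact map_mem ⟨_, hdom⟩ 0
  · apply hdiam.map_continuous.comp
    fun_prop
  intro x y hxy
  apply PiNat.res_injective
  ext n : 1
  induction n with
  | zero => simp
  | succ n ih =>
    simp only [PiNat.res_succ, List.cons.injEq]
    refine ⟨?_, ih⟩
    by_contra hne'
    refine (Set.disjoint_left.1 (hdisj' (PiNat.res x n) hne') :
      ∀ ⦃a⦄, _ → _) (a := q ((inducedMap D).2 ⟨x, hdom⟩)) ?_ ?_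
    · exact ⟨_, map_mem ⟨x, hdom⟩ (n + 1), rfl⟩
    · refine ⟨(inducedMap D).2 ⟨y, hdom⟩, ?_, hxy.symm⟩
      rw [ih]
      exact map_mem ⟨y, hdom⟩ (n + 1)

open Filter Topology in
/-- Inner regularity of continuous images of the Baire space with respect to compact sets. -/
theorem aux_capacity {X : Type*} [MetricSpace X] [MeasurableSpace X] [BorelSpace X]
    (μ : Measure X) [IsFiniteMeasure μ] {π : (ℕ → ℕ) → X} (hπ : Continuous π) {c : ℝ≥0∞}
    (hc : c < μ (range π)) : ∃ K : Set (ℕ → ℕ), IsCompact K ∧ c ≤ μ (π '' K) := by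
  let E : ℕ → (ℕ → ℕ) → Set (ℕ → ℕ) := fun k b => {z | ∀ i < k, z i ≤ b i}
  have hstep : ∀ (k : ℕ) (b : ℕ → ℕ), c < μ (π '' E k b) →
      ∃ m, c < μ (π '' E (k + 1) (update b k m)) := by
    intro k b h
    have hU : π '' E k b = ⋃ m, π '' E (k + 1) (update b k m) := by
      rw [← image_iUnion]
      congr 1
      ext z
      simp only [E, mem_iUnion, mem_ofPred_eq]
      constructor
      · intro hz
        refine ⟨z k, fun i hi => ?_⟩
        rcases Nat.lt_succ_iff_lt_or_eq.1 hi with hi | rfl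
        · rw [update_of_ne hi.ne]; exact hz i hi
        · simp
      · rintro ⟨m, hm⟩ i hi
        have := hm i (by omega)
        rwa [update_of_ne hi.ne] at this
    have hmono : Monotone fun m => π '' E (k + 1) (update b k m) := by
      intro m m' hmm
      refine image_mono ?_
      intro z hz i hi
      exact (hz i hi).trans ((update_le_update_iff (x := b) (y := b)).2 ⟨hmm, fun _ _ => le_rfl⟩ i)
    rw [hU, hmono.measure_iUnion] at h
    exact lt_iSup_iff.1 h
  let S : ℕ → Type := fun k => {b : ℕ → ℕ // c < μ (π '' E k b)}
  have h0 : c < μ (π '' E 0 0) := by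
    have : E 0 0 = univ := by ext; simp [E]
    rwa [this, image_univ]
  let B : (k : ℕ) → S k := fun k => Nat.rec (motive := S) ⟨0, h0⟩
    (fun k b => ⟨update b.1 k (hstep k b.1 b.2).choose, (hstep k b.1 b.2).choose_spec⟩) k
  have hB : ∀ k i, i ≠ k → (B (k + 1)).1 i = (B k).1 i := by
    intro k i hi
    change update (B k).1 k _ i = _
    rw [update_of_ne hi]
  let b : ℕ → ℕ := fun i => (B (i + 1)).1 i
  have hBb : ∀ k i, i < k → (B k).1 i = b i := by
    intro k i hi
    induction k, hi using Nat.le_induction with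
    | base => rfl
    | succ k hk ih => rw [hB k i (by have := Nat.lt_of_succ_le hk; omega), ih]
  have hE : ∀ k, c < μ (π '' E k b) := by
    intro k
    have : E k b = E k (B k).1 := by
      ext z
      simp only [E, mem_ofPred_eq]
      exact forall₂_congr fun i hi => by rw [hBb k i hi]
    rw [this]
    exact (B k).2
  let K : Set (ℕ → ℕ) := univ.pi fun i => Iic (b i)
  have hK : IsCompact K := isCompact_univ_pi fun i => (finite_Iic (b i)).isCompact
  refine ⟨K, hK, ?_⟩
  have hanti : Antitone fun k => closure (π '' E k b) := by
    intro k k' hkk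
    exact closure_mono (image_mono fun z hz i hi => hz i (hi.trans_le hkk))
  have hsub : (⋂ k, closure (π '' E k b)) ⊆ π '' K := by
    intro x hx
    have h : ∀ k : ℕ, ∃ z ∈ E k b, dist x (π z) < 1 / ((k : ℝ) + 1) := by
      intro k
      obtain ⟨_, ⟨z, hz, rfl⟩, hd⟩ := Metric.mem_closure_iff.1 (mem_iInter.1 hx k) _
        (Nat.one_div_pos_of_nat (n := k) (α := ℝ))
      exact ⟨z, hz, hd⟩
    choose z hz hd using h
    let w : ℕ → ℕ → ℕ := fun k i => min (z k i) (b i)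
    have hw : ∀ k, w k ∈ K := fun k i _ => min_le_right (z k i) (b i)
    obtain ⟨v, hv, φ, hφ, hlim⟩ := hK.tendsto_subseq hw
    refine ⟨v, hv, ?_⟩
    have hz' : Tendsto (z ∘ φ) atTop (𝓝 v) := by
      rw [tendsto_pi_nhds] at hlim ⊢
      intro i
      refine (hlim i).congr' ?_
      filter_upwards [eventually_gt_atTop i] with k hk
      exact min_eq_left (hz (φ k) i (hk.trans_le (hφ.id_le k)))
    have h1 : Tendsto (fun k => π (z (φ k))) atTop (𝓝 (π v)) := (hπ.tendsto v).comp hz'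
    have h2 : Tendsto (fun k => π (z k)) atTop (𝓝 x) := by
      rw [tendsto_iff_dist_tendsto_zero]
      refine squeeze_zero (fun _ => dist_nonneg) (fun k => ?_)
        (tendsto_one_div_add_atTop_nhds_zero_nat (𝕜 := ℝ))
      rw [dist_comm]
      exact (hd k).le
    exact tendsto_nhds_unique h1 (h2.comp hφ.tendsto_atTop)
  calc c ≤ ⨅ k, μ (closure (π '' E k b)) :=
        le_iInf fun k => (hE k).le.trans (measure_mono subset_closure)
    _ = μ (⋂ k, closure (π '' E k b)) :=
        (hanti.measure_iInter (fun k => isClosed_closure.measurableSet.nullMeasurableSet)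
          ⟨0, measure_ne_top _ _⟩).symm
    _ ≤ _ := measure_mono hsub

/-- The space of Cantor sets inside the fibers is Borel. -/
theorem aux_borel {X Y : Type*} [TopologicalSpace X] [T2Space X] [TopologicalSpace Y] [T2Space Y]
    [MeasurableSpace C(ℕ → Bool, ℕ → ℕ)] [BorelSpace C(ℕ → Bool, ℕ → ℕ)]
    (p : (ℕ → ℕ) → X) (q : (ℕ → ℕ) → Y) (hp : Continuous p) (hq : Continuous q) :
    MeasurableSet {g : C(ℕ → Bool, ℕ → ℕ) | (∀ a, p (g a) = p (g 0)) ∧ Injective (q ∘ g)} := by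
  have h1 : IsClosed {g : C(ℕ → Bool, ℕ → ℕ) | ∀ a, p (g a) = p (g 0)} := by
    rw [ofPred_forall]
    refine isClosed_iInter fun a => isClosed_eq ?_ ?_
    · exact hp.comp (continuous_eval_const a)
    · exact hp.comp (continuous_eval_const 0)
  have h2 : {g : C(ℕ → Bool, ℕ → ℕ) | Injective (q ∘ g)} =
      ⋂ m : ℕ, {g | MapsTo (fun ab : (ℕ → Bool) × (ℕ → Bool) => (q (g ab.1), q (g ab.2)))
        {ab | ab.1 m ≠ ab.2 m} {y : Y × Y | y.1 ≠ y.2}} := by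
    ext g
    simp only [mem_ofPred_eq, mem_iInter, MapsTo, Injective, comp_apply]
    constructor
    · intro h m ab hab heq
      exact hab (by rw [h heq])
    · intro h a b hab
      funext m
      by_contra hm
      exact h m (x := (a, b)) hm hab
  have h3 : ∀ m : ℕ, IsOpen {g : C(ℕ → Bool, ℕ → ℕ) |
      MapsTo (fun ab : (ℕ → Bool) × (ℕ → Bool) => (q (g ab.1), q (g ab.2)))
        {ab | ab.1 m ≠ ab.2 m} {y : Y × Y | y.1 ≠ y.2}} := by
    intro m
    let Q : C(ℕ → ℕ, Y) := ⟨q, hq⟩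
    have hc : Continuous fun g : C(ℕ → Bool, ℕ → ℕ) => (Q.comp g).prodMap (Q.comp g) := by
      refine ContinuousMap.continuous_of_continuous_uncurry _ ?_
      change Continuous fun z : C(ℕ → Bool, ℕ → ℕ) × ((ℕ → Bool) × (ℕ → Bool)) =>
        (q (z.1 z.2.1), q (z.1 z.2.2))
      fun_prop
    have hK : IsCompact {ab : (ℕ → Bool) × (ℕ → Bool) | ab.1 m ≠ ab.2 m} := by
      apply IsClosed.isCompact
      have : IsClopen ((fun ab : (ℕ → Bool) × (ℕ → Bool) => (ab.1 m, ab.2 m)) ⁻¹'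
          {y : Bool × Bool | y.1 ≠ y.2}) := (isClopen_discrete _).preimage (by fun_prop)
      exact this.1
    have hU : IsOpen {y : Y × Y | y.1 ≠ y.2} := isOpen_ne_fun continuous_fst continuous_snd
    exact (ContinuousMap.isOpen_setOfPred_mapsTo hK hU).preimage hc
  have h4 : MeasurableSet {g : C(ℕ → Bool, ℕ → ℕ) | Injective (q ∘ g)} := by
    rw [h2]
    exact MeasurableSet.iInter fun m => (h3 m).measurableSet
  exact h1.measurableSet.inter h4

/-- Lemma 2.1: Borel refinement of an analytic set with uncountable
fibers, keeping almost all fibers uncountable. -/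
theorem statement0 {X Y : Type} [MeasurableSpace X] [StandardBorelSpace X]
    [MeasurableSpace Y] [StandardBorelSpace Y]
    (μ : Measure X) [IsProbabilityMeasure μ]
    (A : Set (X × Y)) (hA : IsAnalyticS A)
    (hfib : ∀ x : X, ¬ {y : Y | (x, y) ∈ A}.Countable) :
    ∃ Abar : Set (X × Y), MeasurableSet Abar ∧ Abar ⊆ A ∧
      ∀ᵐ x ∂μ, ¬ {y : Y | (x, y) ∈ Abar}.Countable := by
  let := upgradeStandardBorel X
  let := upgradeStandardBorel Y
  let := TopologicalSpace.upgradeIsCompletelyMetrizable X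
  obtain ⟨Z, mZ, hZ, B, f, hB, hf, rfl⟩ := hA
  have hAn : AnalyticSet (f '' B) := hB.analyticSet_image hf
  obtain ⟨x₀⟩ : Nonempty X := nonempty_of_isProbabilityMeasure μ
  generalize f '' B = A at hAn hfib
  clear hf hB f B hZ mZ Z
  rw [AnalyticSet] at hAn
  rcases hAn with rfl | ⟨F, hF, rfl⟩
  · exact absurd (by simp) (hfib x₀)
  let p : (ℕ → ℕ) → X := fun z => (F z).1
  let q : (ℕ → ℕ) → Y := fun z => (F z).2
  have hp : Continuous p := continuous_fst.comp hF
  have hq : Continuous q := continuous_snd.comp hF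
  let : MeasurableSpace C(ℕ → Bool, ℕ → ℕ) := borel _
  have : BorelSpace C(ℕ → Bool, ℕ → ℕ) := ⟨rfl⟩
  have hG := (aux_borel p q hp hq).analyticSet
  set G := {g : C(ℕ → Bool, ℕ → ℕ) | (∀ a, p (g a) = p (g 0)) ∧ Injective (q ∘ g)} with hGdef
  have hsurj : ∀ x, ∃ g ∈ G, p (g 0) = x := by
    intro x
    let := TopologicalSpace.upgradeIsCompletelyMetrizable (ℕ → ℕ)
    have hun : ¬ (q '' (p ⁻¹' {x})).Countable := by
      intro h
      refine hfib x (h.mono ?_)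
      rintro y ⟨z, hz⟩
      exact ⟨z, by simp [p, hz], by simp [q, hz]⟩
    obtain ⟨g, hg1, hg2, hg3⟩ := aux_perfect hq (isClosed_singleton.preimage hp) hun
    have hg : ∀ a, p (g a) = x := fun a => hg1 (mem_range_self a)
    exact ⟨⟨g, hg2⟩, ⟨fun a => (hg a).trans (hg 0).symm, hg3⟩, hg 0⟩
  rw [AnalyticSet] at hG
  rcases hG with hG | ⟨H, hH, hHG⟩
  · obtain ⟨g, hg, -⟩ := hsurj x₀
    rw [hG] at hg
    exact absurd hg (notMem_empty _)
  let π : (ℕ → ℕ) → X := fun z => p (H z 0)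
  have hπ : Continuous π := hp.comp ((continuous_eval_const 0).comp hH)
  have hπr : range π = univ := by
    rw [eq_univ_iff_forall]
    intro x
    obtain ⟨g, hg, hgx⟩ := hsurj x
    rw [← hHG] at hg
    obtain ⟨z, rfl⟩ := hg
    exact ⟨z, hgx⟩
  obtain ⟨u, -, hu, hulim⟩ := exists_seq_strictMono_tendsto' (zero_lt_one' ℝ≥0∞)
  have hcap : ∀ n, ∃ K : Set (ℕ → ℕ), IsCompact K ∧ u n ≤ μ (π '' K) := fun n =>
    aux_capacity μ hπ (by rw [hπr, measure_univ]; exact (hu n).2)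
  choose K hK hKu using hcap
  let ev : (ℕ → ℕ) × (ℕ → Bool) → X × Y := fun za => F (H za.1 za.2)
  have hev : Continuous ev := by
    refine hF.comp ?_
    exact continuous_eval.comp ((hH.comp continuous_fst).prodMk continuous_snd)
  refine ⟨⋃ n, ev '' (K n ×ˢ univ), ?_, ?_, ?_⟩
  · exact MeasurableSet.iUnion fun n =>
      (((hK n).prod isCompact_univ).image hev).isClosed.measurableSet
  · refine iUnion_subset fun n => ?_
    rintro _ ⟨za, -, rfl⟩
    exact mem_range_self _
  · have hall : ∀ᵐ x ∂μ, x ∈ ⋃ n, π '' K n := by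
      have hm : MeasurableSet (⋃ n, π '' K n) :=
        MeasurableSet.iUnion fun n => ((hK n).image hπ).isClosed.measurableSet
      refine (prob_compl_eq_zero_iff hm).2 (le_antisymm prob_le_one ?_)
      exact le_of_tendsto' hulim fun n => (hKu n).trans (measure_mono (subset_iUnion (fun n => π '' K n) n))
    filter_upwards [hall] with x hx hcount
    obtain ⟨n, z, hz, rfl⟩ := mem_iUnion.1 hx
    have hzG : H z ∈ G := hHG ▸ mem_range_self z
    have : (range (q ∘ H z)).Countable := by
      refine hcount.mono ?_
      rintro _ ⟨a, rfl⟩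
      refine mem_iUnion.2 ⟨n, (z, a), ⟨hz, mem_univ _⟩, ?_⟩
      exact Prod.ext (hzG.1 a) rfl
    rw [← image_univ] at this
    have h2 := countable_univ_iff.1 (countable_of_injective_of_countable_image hzG.2.injOn this)
    obtain ⟨e, he⟩ := exists_surjective_nat (ℕ → Bool)
    obtain ⟨k, hk⟩ := he (fun k => !(e k k))
    have h3 := congrFun hk k
    simp at h3
end

section
/- Let X be a standard Borel space equipped with a Borel probability measure μ, let Y be a standard Borel space, and let A ⊆ X × Y be an analytic set such that for every x ∈ X the fiber {y ∈ Y : (x, y) ∈ A} is uncountable. Then there exists a μ-conull Borel set X' ⊆ X and a Borel injection f : X' → Y such that (x, f(x)) ∈ A for every x ∈ X'. -/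
open MeasureTheory Set Function
open scoped ENNReal symmDiff

open Filter Topology in
/-- Choquet-type capacitability for continuous images of Baire space. -/
lemma capacity_aux {X : Type} [TopologicalSpace X] [PolishSpace X] [MeasurableSpace X]
    [BorelSpace X] (μ : Measure X) [IsFiniteMeasure μ] (u : (ℕ → ℕ) → X) (hu : Continuous u)
    (a : ℝ≥0∞) (ha : a < μ (range u)) :
    ∃ b : ℕ → ℕ, a ≤ μ (u '' {σ | ∀ i, σ i ≤ b i}) := by
  classical
  let := TopologicalSpace.upgradeIsCompletelyMetrizable X
  have key : ∀ (j : ℕ) (T : {T : Set (ℕ → ℕ) // a < μ (u '' T)}),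
      ∃ m : ℕ, a < μ (u '' (T.1 ∩ {σ | σ j ≤ m})) := by
    rintro j ⟨T, hT⟩
    have hmono : Monotone fun m : ℕ => u '' (T ∩ {σ | σ j ≤ m}) := by
      intro m m' h
      apply image_mono
      rintro σ ⟨h1, h2⟩
      exact ⟨h1, le_trans h2 h⟩
    have hUn : (⋃ m : ℕ, u '' (T ∩ {σ | σ j ≤ m})) = u '' T := by
      ext x
      simp only [mem_iUnion, mem_image]
      constructor
      · rintro ⟨m, σ, h, rfl⟩
        exact ⟨σ, h.1, rfl⟩
      · rintro ⟨σ, h, rfl⟩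
        exact ⟨σ j, σ, ⟨h, le_refl (σ j)⟩, rfl⟩
    have ht := tendsto_measure_iUnion_atTop (μ := μ) hmono
    rw [hUn] at ht
    exact (ht.eventually (lt_mem_nhds hT)).exists
  choose m hm using key
  let T : ℕ → {T : Set (ℕ → ℕ) // a < μ (u '' T)} := fun j =>
    Nat.rec ⟨univ, by simpa using ha⟩ (fun j T => ⟨T.1 ∩ {σ | σ j ≤ m j T}, hm j T⟩) j
  let b : ℕ → ℕ := fun j => m j (T j)
  have hTs : ∀ j, (T (j + 1)).1 = (T j).1 ∩ {σ | σ j ≤ b j} := fun j => rfl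
  have hT : ∀ j, (T j).1 = {σ | ∀ i < j, σ i ≤ b i} := by
    intro j
    induction j with
    | zero => ext σ; simp [T]
    | succ j ih =>
      rw [hTs, ih]
      ext σ
      constructor
      · rintro ⟨h1, h2⟩ i hi
        rcases Nat.lt_succ_iff_lt_or_eq.1 hi with h | rfl
        · exact h1 i h
        · exact h2
      · intro h
        exact ⟨fun i hi => h i (by omega), h j (by omega)⟩
  refine ⟨b, ?_⟩
  have hK : IsCompact {σ : ℕ → ℕ | ∀ i, σ i ≤ b i} := by
    have := isCompact_univ_pi (fun i => (Set.finite_Iic (b i)).isCompact)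
    convert this using 1
    ext σ; simp [Pi.le_def]
  have hsub : (⋂ j, closure (u '' (T j).1)) ⊆ u '' {σ | ∀ i, σ i ≤ b i} := by
    intro x hx
    rw [mem_iInter] at hx
    have : ∀ j : ℕ, ∃ σ ∈ (T j).1, dist x (u σ) < 1 / ((j : ℝ) + 1) := by
      intro j
      obtain ⟨y, ⟨σ, hσ, rfl⟩, hy⟩ := Metric.mem_closure_iff.1 (hx j) (1 / ((j : ℝ) + 1))
        (by positivity)
      exact ⟨σ, hσ, hy⟩
    choose σ hσ hd using this
    let τ : ℕ → ℕ → ℕ := fun j i => min (σ j i) (b i)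
    obtain ⟨t, htK, φ, hφ, hlim⟩ := hK.tendsto_subseq (x := τ) (fun j i => min_le_right _ _)
    refine ⟨t, htK, ?_⟩
    have hσlim : Tendsto (fun j => σ (φ j)) atTop (𝓝 t) := by
      rw [tendsto_pi_nhds] at hlim ⊢
      intro i
      refine (hlim i).congr' ?_
      filter_upwards [hφ.tendsto_atTop.eventually_gt_atTop i] with j hj
      have := hσ (φ j)
      rw [hT] at this
      exact min_eq_left (this i hj)
    have h1 : Tendsto (fun j => u (σ (φ j))) atTop (𝓝 (u t)) := (hu.tendsto t).comp hσlim
    have h2 : Tendsto (fun j => u (σ j)) atTop (𝓝 x) := by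
      rw [tendsto_iff_dist_tendsto_zero]
      refine squeeze_zero (fun _ => dist_nonneg) (fun j => ?_)
        (tendsto_one_div_add_atTop_nhds_zero_nat (𝕜 := ℝ))
      rw [dist_comm]; exact (hd j).le
    exact tendsto_nhds_unique h1 (h2.comp hφ.tendsto_atTop)
  refine le_trans ?_ (measure_mono hsub)
  have hanti : Antitone fun j => closure (u '' (T j).1) := by
    apply antitone_nat_of_succ_le
    intro j
    apply closure_mono
    apply image_mono
    rw [hTs]
    exact inter_subset_left
  have := tendsto_measure_iInter_atTop (μ := μ)
    (fun j => (isClosed_closure (s := u '' (T j).1)).measurableSet.nullMeasurableSet) hanti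
    ⟨0, measure_ne_top _ _⟩
  refine ge_of_tendsto this (Eventually.of_forall fun j => ?_)
  exact le_trans (T j).2.le (measure_mono subset_closure)

lemma exists_baire_real : ∃ e : (ℕ → ℕ) → ℝ, Continuous e ∧ Injective e := by
  let e1 : (ℕ → ℕ) → (ℕ → Bool) := fun σ k => decide (σ k.unpair.1 = k.unpair.2)
  have h1 : Continuous e1 := by
    refine continuous_pi fun k => ?_
    exact (continuous_of_discreteTopology (f := fun n : ℕ => decide (n = k.unpair.2))).comp
      (continuous_apply k.unpair.1)
  have i1 : Injective e1 := by
    intro σ τ h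
    funext i
    have := congrFun h (Nat.pair i (τ i))
    simpa [e1] using this
  refine ⟨fun σ => (cantorSetHomeomorphNatToBool.symm (e1 σ) : ℝ), ?_, ?_⟩
  · exact continuous_subtype_val.comp (cantorSetHomeomorphNatToBool.symm.continuous.comp h1)
  · exact Subtype.val_injective.comp (cantorSetHomeomorphNatToBool.symm.injective.comp i1)

lemma section_aux {X : Type} [TopologicalSpace X] [T2Space X] [MeasurableSpace X]
    [BorelSpace X] (u : (ℕ → ℕ) → X) (hu : Continuous u) (K : Set (ℕ → ℕ)) (hK : IsCompact K) :
    ∃ s : X → (ℕ → ℕ), Measurable s ∧ ∀ x ∈ u '' K, u (s x) = x := by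
  classical
  obtain ⟨e, he, hei⟩ := exists_baire_real
  have hemb : MeasurableEmbedding e := he.measurableEmbedding hei
  let m : X → ℝ := fun x => sInf (e '' (K ∩ u ⁻¹' {x}))
  have hmin : ∀ x ∈ u '' K, ∃ σ ∈ K, u σ = x ∧ m x = e σ ∧ ∀ τ ∈ K, u τ = x → e σ ≤ e τ := by
    rintro _ ⟨σ0, h0, rfl⟩
    have hc : IsCompact (K ∩ u ⁻¹' {u σ0}) := hK.inter_right (isClosed_singleton.preimage hu)
    obtain ⟨σ, ⟨h1, h2⟩, h3⟩ := hc.exists_sInf_image_eq ⟨σ0, h0, rfl⟩ he.continuousOn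
    refine ⟨σ, h1, h2, h3, fun τ hτ hτ' => ?_⟩
    rw [← h3]
    exact csInf_le (hc.image he).bddBelow ⟨τ, ⟨hτ, hτ'⟩, rfl⟩
  have hmeas : Measurable m := by
    refine measurable_of_Iic fun r => ?_
    have h0 : MeasurableSet (u '' K) := (hK.image hu).isClosed.measurableSet
    have hr : MeasurableSet (u '' (K ∩ e ⁻¹' Iic r)) :=
      ((hK.inter_right (isClosed_Iic.preimage he)).image hu).isClosed.measurableSet
    have : m ⁻¹' Iic r = u '' (K ∩ e ⁻¹' Iic r) ∪ (if 0 ≤ r then (u '' K)ᶜ else ∅) := by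
      ext x
      by_cases hx : x ∈ u '' K
      · obtain ⟨σ, h1, h2, h3, h4⟩ := hmin x hx
        have : x ∉ (if 0 ≤ r then (u '' K)ᶜ else ∅) := by split_ifs <;> simp [hx] 
        rw [mem_union, or_iff_left this, mem_preimage, h3]
        constructor
        · intro h; exact ⟨σ, ⟨h1, h⟩, h2⟩
        · rintro ⟨τ, ⟨g1, g2⟩, g3⟩
          exact le_trans (h4 τ g1 g3) g2
      · have hne : K ∩ u ⁻¹' {x} = ∅ := by
          ext σ
          simp only [mem_inter_iff, mem_preimage, mem_singleton_iff, mem_empty_iff_false, iff_false]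
          rintro ⟨h1, h2⟩
          exact hx ⟨σ, h1, h2⟩
        have hn : x ∉ u '' (K ∩ e ⁻¹' Iic r) := fun ⟨σ, h, h'⟩ => hx ⟨σ, h.1, h'⟩
        rw [mem_union, or_iff_right hn, mem_preimage]
        have : m x = 0 := by simp only [m, hne]; simp
        rw [this]
        split_ifs with h <;> simp [h, hx] 
    rw [this]
    refine hr.union ?_
    split_ifs
    · exact h0.compl
    · exact MeasurableSet.empty
  refine ⟨fun x => hemb.invFun (m x), hemb.measurable_invFun.comp hmeas, fun x hx => ?_⟩
  obtain ⟨σ, h1, h2, h3, h4⟩ := hmin x hx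
  simp only [h3]
  rw [hemb.leftInverse_invFun σ, h2]

/-- Measurable uniformization (Jankov-von Neumann, almost everywhere version). -/
lemma unif_aux {X Z : Type} [MeasurableSpace X] [StandardBorelSpace X] [MeasurableSpace Z]
    [StandardBorelSpace Z] (μ : Measure X) [IsProbabilityMeasure μ] (P : Set (X × Z))
    (hP : MeasurableSet P) (hproj : ∀ᵐ x ∂μ, ∃ z, (x, z) ∈ P) :
    ∃ f : X → Z, Measurable f ∧ ∀ᵐ x ∂μ, (x, f x) ∈ P := by
  classical
  let := upgradeStandardBorel X
  let := upgradeStandardBorel Z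
  have hPA := hP.analyticSet
  rw [AnalyticSet] at hPA
  rcases hPA with rfl | ⟨g, hg, rfl⟩
  · exfalso
    obtain ⟨x, z, h⟩ := hproj.exists
    exact h
  let u : (ℕ → ℕ) → X := fun σ => (g σ).1
  have hu : Continuous u := continuous_fst.comp hg
  have hfull : μ (range u) = 1 := by
    have h : ∀ᵐ x ∂μ, x ∈ range u := by
      filter_upwards [hproj] with x hx
      obtain ⟨z, σ, hσ⟩ := hx
      exact ⟨σ, by simp [u, hσ]⟩
    have h' : range u =ᵐ[μ] univ := Filter.eventuallyEq_univ.2 h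
    rw [measure_congr h']
    exact measure_univ
  have hs : ∀ n : ℕ, ∃ s : X → (ℕ → ℕ), Measurable s ∧
      1 - 1 / ((n : ℝ≥0∞) + 2) ≤ μ {x | u (s x) = x} := by
    intro n
    obtain ⟨b, hb⟩ := capacity_aux μ u hu (1 - 1 / ((n : ℝ≥0∞) + 2)) (by
      rw [hfull]
      apply ENNReal.sub_lt_self (by simp) (by simp)
      simp)
    have hK : IsCompact {σ : ℕ → ℕ | ∀ i, σ i ≤ b i} := by
      have := isCompact_univ_pi (fun i => (Set.finite_Iic (b i)).isCompact)
      convert this using 1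
      ext σ; simp [Pi.le_def]
    obtain ⟨s, hs, hs'⟩ := section_aux u hu _ hK
    exact ⟨s, hs, hb.trans (measure_mono hs')⟩
  choose s hs hs' using hs
  have hE : ∀ n, MeasurableSet {x | u (s n x) = x} := fun n =>
    measurableSet_eq_fun (hu.measurable.comp (hs n)) measurable_id
  have hall : ∀ᵐ x ∂μ, ∃ n, u (s n x) = x := by
    have hm : MeasurableSet (⋃ n, {x | u (s n x) = x}) := MeasurableSet.iUnion hE
    have h1 : μ (⋃ n, {x | u (s n x) = x}) = 1 := by
      refine le_antisymm prob_le_one ?_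
      have ht : Filter.Tendsto (fun n : ℕ => 1 - 1 / ((n : ℝ≥0∞) + 2)) Filter.atTop
          (nhds (1 - 0)) := by
        refine ENNReal.Tendsto.sub tendsto_const_nhds ?_ (by simp)
        have := (Filter.tendsto_add_atTop_iff_nat 2).2 ENNReal.tendsto_inv_nat_nhds_zero
        simpa using this
      rw [tsub_zero] at ht
      exact le_of_tendsto ht (Filter.Eventually.of_forall fun n =>
        (hs' n).trans (measure_mono (subset_iUnion (fun n => {x | u (s n x) = x}) n)))
    have := (prob_compl_eq_zero_iff hm).2 h1
    rw [ae_iff]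
    convert this using 2
    ext x; simp
  let p : ℕ → X → Prop := fun n x => u (s n x) = x ∨ ∀ k, u (s k x) ≠ x
  have hp : ∀ x, ∃ n, p n x := by
    intro x
    by_cases h : ∃ n, u (s n x) = x
    · exact h.imp fun n hn => Or.inl hn
    · push Not at h
      exact ⟨0, Or.inr h⟩
  have hpm : ∀ n, MeasurableSet {x | p n x} := by
    intro n
    have : {x | p n x} = {x | u (s n x) = x} ∪ ⋂ k, {x | u (s k x) = x}ᶜ := by
      ext x; simp [p]
    rw [this]
    exact (hE n).union (MeasurableSet.iInter fun k => (hE k).compl)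
  have hS : Measurable fun x => s (Nat.find (hp x)) x := Measurable.find hs hpm hp
  refine ⟨fun x => (g (s (Nat.find (hp x)) x)).2,
    (continuous_snd.comp hg).measurable.comp hS, ?_⟩
  filter_upwards [hall] with x hx
  have h := Nat.find_spec (hp x)
  rcases h with h | h
  · refine ⟨s (Nat.find (hp x)) x, ?_⟩
    exact Prod.ext h rfl
  · obtain ⟨n, hn⟩ := hx
    exact absurd hn (h n)

/-- First-coordinate projection of a sequence of pairs. -/
def seqFst (w : ℕ → Bool × ℕ) : ℕ → Bool := fun l => (w l).1

lemma dense_aux (F : Set (ℕ → Bool × ℕ)) (hunc : ¬ (seqFst '' F).Countable) :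
    ∃ z : ℕ → ℕ → Bool × ℕ, (∀ i, z i ∈ F) ∧
      ∀ i n, ∃ j, (∀ l < n, z j l = z i l) ∧ seqFst (z j) ≠ seqFst (z i) := by
  classical
  let cyl : (Σ n : ℕ, Fin n → Bool × ℕ) → Set (ℕ → Bool × ℕ) :=
    fun s => F ∩ {w | ∀ l : Fin s.1, w l = s.2 l}
  let O : Set (ℕ → Bool × ℕ) := ⋃ s ∈ {s | (seqFst '' cyl s).Countable}, cyl s
  have hO : (seqFst '' O).Countable := by
    simp only [O, image_iUnion]
    exact Countable.biUnion (Set.to_countable _) fun s hs => hs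
  let G : Set (ℕ → Bool × ℕ) := F \ O
  have hG : G.Nonempty := by
    by_contra h
    rw [not_nonempty_iff_eq_empty] at h
    apply hunc
    exact hO.mono (image_mono (sdiff_eq_empty.1 h))
  have hsplit : ∀ w ∈ G, ∀ n : ℕ, ∃ w' ∈ G, (∀ l < n, w' l = w l) ∧ seqFst w' ≠ seqFst w := by
    intro w hw n
    by_contra hcon
    push Not at hcon
    let s : Σ n : ℕ, Fin n → Bool × ℕ := ⟨n, fun l => w l⟩
    have hws : w ∈ cyl s := ⟨hw.1, fun l => rfl⟩
    have hc : (seqFst '' cyl s).Countable := by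
      refine (hO.union (countable_singleton (seqFst w))).mono ?_
      rintro _ ⟨w', hw', rfl⟩
      by_cases h : w' ∈ O
      · exact Or.inl ⟨w', h, rfl⟩
      · right
        exact hcon w' ⟨hw'.1, h⟩ fun l hl => hw'.2 ⟨l, hl⟩
    exact hw.2 (mem_biUnion (show s ∈ {s | (seqFst '' cyl s).Countable} from hc) hws)
  have : Nonempty G := hG.to_subtype
  let d : ℕ → G := TopologicalSpace.denseSeq G
  have hd : DenseRange d := TopologicalSpace.denseRange_denseSeq G
  refine ⟨fun i => (d i).1, fun i => (d i).2.1, fun i n => ?_⟩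
  obtain ⟨w', hw', h1, h2⟩ := hsplit (d i).1 (d i).2 n
  have hopen : IsOpen {w : G | (∀ l < n, w.1 l = (d i).1 l) ∧ seqFst w.1 ≠ seqFst (d i).1} := by
    refine IsOpen.inter ?_ ?_
    · have : {w : G | ∀ l < n, w.1 l = (d i).1 l} =
          ⋂ l ∈ Finset.range n, (fun w : G => w.1 l) ⁻¹' {(d i).1 l} := by
        ext w; simp
      change IsOpen {w : G | ∀ l < n, w.1 l = (d i).1 l}
      rw [this]
      refine isOpen_biInter_finset fun l _ => ?_
      exact (isOpen_discrete _).preimage ((continuous_apply l).comp continuous_subtype_val)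
    · have hcont : Continuous fun w : G => seqFst w.1 :=
        continuous_pi fun l =>
          continuous_fst.comp ((continuous_apply l).comp continuous_subtype_val)
      exact isOpen_ne.preimage hcont
  obtain ⟨j, hj⟩ := hd.exists_mem_open hopen ⟨⟨w', hw'⟩, h1, h2⟩
  exact ⟨j, hj⟩

lemma infinite_aux (z : ℕ → ℕ → Bool × ℕ)
    (h : ∀ i n, ∃ j, (∀ l < n, z j l = z i l) ∧ seqFst (z j) ≠ seqFst (z i)) (i n M : ℕ) :
    ∃ p : ℕ, ∃ T : Finset (Fin p → Bool), M ≤ T.card ∧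
      ∀ a ∈ T, ∃ j, (∀ l < n, z j l = z i l) ∧ ∀ l : Fin p, (z j l).1 = a l := by
  classical
  induction M generalizing i n with
  | zero => exact ⟨0, ∅, by simp, by simp⟩
  | succ M ih =>
    obtain ⟨j, hj, hne⟩ := h i n
    obtain ⟨q, hq⟩ : ∃ q, (z j q).1 ≠ (z i q).1 := by
      by_contra hcon
      push Not at hcon
      exact hne (funext hcon)
    obtain ⟨p, T, hT, hT'⟩ := ih i (max n (q + 1))
    -- pass to level `r` refining both
    let r := max p (q + 1)
    have hpr : p ≤ r := le_max_left _ _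
    choose! J hJ1 hJ2 using hT'
    let φ : (Fin p → Bool) → (Fin r → Bool) := fun a l => (z (J a) l).1
    have hinj : Set.InjOn φ T := by
      intro a ha b hb hab
      funext l
      rw [← hJ2 a ha l, ← hJ2 b hb l]
      exact congrFun hab ⟨l, lt_of_lt_of_le l.2 hpr⟩
    let c : Fin r → Bool := fun l => (z j l).1
    have hc : c ∉ T.image φ := by
      intro hmem
      obtain ⟨a, ha, hac⟩ := Finset.mem_image.1 hmem
      have h1 := congrFun hac ⟨q, by omega⟩
      have h2 := hJ1 a ha q (by omega)
      apply hq
      simp only [φ, c] at h1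
      rw [← h1, h2]
    refine ⟨r, insert c (T.image φ), ?_, ?_⟩
    · rw [Finset.card_insert_of_notMem hc, Finset.card_image_of_injOn hinj]
      omega
    · intro a ha
      rcases Finset.mem_insert.1 ha with rfl | ha
      · exact ⟨j, hj, fun l => rfl⟩
      · obtain ⟨a, ha', rfl⟩ := Finset.mem_image.1 ha
        exact ⟨J a, fun l hl => hJ1 a ha' l (by omega), fun l => rfl⟩

lemma count_aux {F : Type} [Fintype F] [DecidableEq F] (T : Finset F) (b : Bool) :
    (Finset.univ.filter fun W : F → Bool => ∀ a ∈ T, W a = b).card * 2 ^ T.card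
      = 2 ^ Fintype.card F := by
  have : (Finset.univ.filter fun W : F → Bool => ∀ a ∈ T, W a = b) =
      Fintype.piFinset fun a => if a ∈ T then ({b} : Finset Bool) else Finset.univ := by
    ext W
    simp only [Finset.mem_filter, Finset.mem_univ, true_and, Fintype.mem_piFinset]
    refine forall_congr' fun a => ?_
    split_ifs with h <;> simp [h]
  rw [this, Fintype.card_piFinset]
  have h2 : (2 : ℕ) ^ T.card = ∏ a : F, if a ∈ T then 2 else 1 := by
    simp
  rw [h2, ← Finset.prod_mul_distrib]
  rw [← Finset.card_univ, ← Finset.prod_const]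
  refine Finset.prod_congr rfl fun a _ => ?_
  split_ifs <;> simp

lemma random_aux {X F ι : Type} [MeasurableSpace X] (μ : Measure X) [IsProbabilityMeasure μ]
    [Fintype F] [DecidableEq F] [Fintype ι] (S : X → ι → Set F)
    (hS : ∀ i a, MeasurableSet {x | a ∈ S x i}) (M : ℕ) (N : Set X) (hN : MeasurableSet N)
    (hM : ∀ x ∉ N, ∀ i, ∃ T : Finset F, M ≤ T.card ∧ ∀ a ∈ T, a ∈ S x i) :
    ∃ W : F → Bool, μ {x | ∃ i b, ∀ a ∈ S x i, W a = b} ≤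
      μ N + (Fintype.card ι * 2 : ℝ≥0∞) * (2 ^ M)⁻¹ := by
  classical
  let bad : (F → Bool) → Set X := fun W => {x | ∃ i b, ∀ a ∈ S x i, W a = b}
  let c : ℝ≥0∞ := (Fintype.card ι * 2 : ℝ≥0∞) * (2 ^ M)⁻¹
  let Q : ℝ≥0∞ := 2 ^ Fintype.card F
  have hbad : ∀ W, MeasurableSet (bad W) := by
    intro W
    have : bad W = ⋃ i, ⋃ b, ⋂ a, ({x | a ∈ S x i}ᶜ ∪ {_x | W a = b}) := by
      ext x
      simp only [bad, mem_iUnion, mem_iInter]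
      refine exists_congr fun i => exists_congr fun b => forall_congr' fun a => ?_
      exact imp_iff_not_or
    rw [this]
    exact MeasurableSet.iUnion fun i => MeasurableSet.iUnion fun b => MeasurableSet.iInter fun a =>
      (hS i a).compl.union (MeasurableSet.const _)
  have hpt : ∀ x, ∑ W : F → Bool, (bad W).indicator (fun _ => (1 : ℝ≥0∞)) x ≤
      Q * N.indicator (fun _ => (1 : ℝ≥0∞)) x + Q * c := by
    intro x
    by_cases hx : x ∈ N
    · refine le_trans (Finset.sum_le_sum (g := fun _ => (1 : ℝ≥0∞)) fun W _ => ?_) ?_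
      · exact indicator_le_self' (fun _ _ => zero_le) x
      · simp [hx, Q]
    · choose T hT hT' using hM x hx
      have h1 : ∀ W : F → Bool, (bad W).indicator (fun _ => (1 : ℝ≥0∞)) x ≤
          ∑ i : ι, ∑ b : Bool, if ∀ a ∈ T i, W a = b then (1 : ℝ≥0∞) else 0 := by
        intro W
        by_cases hW : x ∈ bad W
        · rw [indicator_of_mem hW]
          obtain ⟨i, b, hib⟩ := hW
          have h : ∀ a ∈ T i, W a = b := fun a ha => hib a (hT' i a ha)
          refine le_trans ?_ (Finset.single_le_sum (fun _ _ => zero_le) (Finset.mem_univ i))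
          refine le_trans ?_ (Finset.single_le_sum (fun _ _ => zero_le) (Finset.mem_univ b))
          rw [if_pos h]
        · rw [indicator_of_notMem hW]; exact zero_le
      refine le_trans (Finset.sum_le_sum fun W _ => h1 W) ?_
      rw [Finset.sum_comm]
      have h2 : ∀ i : ι, ∑ W : F → Bool, ∑ b : Bool,
          (if ∀ a ∈ T i, W a = b then (1 : ℝ≥0∞) else 0) ≤ 2 * (Q * (2 ^ M)⁻¹) := by
        intro i
        rw [Finset.sum_comm]
        have h3 : ∀ b : Bool, ∑ W : F → Bool,
            (if ∀ a ∈ T i, W a = b then (1 : ℝ≥0∞) else 0) ≤ Q * (2 ^ M)⁻¹ := by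
          intro b
          rw [Finset.sum_boole, ← div_eq_mul_inv, ENNReal.le_div_iff_mul_le (by simp) (by simp)]
          have := count_aux (T i) b
          have h4 : (Finset.univ.filter fun W : F → Bool => ∀ a ∈ T i, W a = b).card * 2 ^ M
              ≤ 2 ^ Fintype.card F := by
            rw [← this]
            exact Nat.mul_le_mul_left _ (Nat.pow_le_pow_right (by norm_num) (hT i))
          simp only [Q]
          exact_mod_cast h4
        refine le_trans (Finset.sum_le_sum fun b _ => h3 b) ?_
        simp
      refine le_trans (Finset.sum_le_sum fun i _ => h2 i) ?_
      simp only [Finset.sum_const, Finset.card_univ, nsmul_eq_mul]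
      refine le_trans (le_of_eq ?_) le_add_self
      simp only [c]
      ring
  have hsumle : ∑ W : F → Bool, μ (bad W) ≤ Q * μ N + Q * c := by
    calc ∑ W : F → Bool, μ (bad W)
        = ∑ W : F → Bool, ∫⁻ x, (bad W).indicator (fun _ => (1 : ℝ≥0∞)) x ∂μ := by
          refine Finset.sum_congr rfl fun W _ => ?_
          rw [lintegral_indicator (hbad W)]; simp
      _ = ∫⁻ x, ∑ W : F → Bool, (bad W).indicator (fun _ => (1 : ℝ≥0∞)) x ∂μ := by
          rw [lintegral_finsetSum]
          exact fun W _ => measurable_const.indicator (hbad W)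
      _ ≤ ∫⁻ x, (Q * N.indicator (fun _ => (1 : ℝ≥0∞)) x + Q * c) ∂μ := lintegral_mono hpt
      _ = Q * μ N + Q * c := by
          rw [lintegral_add_right _ measurable_const, lintegral_const_mul _
            (measurable_const.indicator hN), lintegral_indicator hN]
          simp
  by_contra hcon
  push Not at hcon
  have h5 : ∑ W : F → Bool, (μ N + c) < ∑ W : F → Bool, μ (bad W) :=
    ENNReal.sum_lt_sum_of_nonempty Finset.univ_nonempty fun W _ => hcon W
  have h6 : ∑ W : F → Bool, (μ N + c) = Q * μ N + Q * c := by
    simp [Q]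
  exact absurd hsumle (not_le.2 (h6 ▸ h5))

open Filter Topology in
lemma small_aux {X : Type} [MeasurableSpace X] (μ : Measure X) [IsProbabilityMeasure μ]
    (D : ℕ → Set X) (hD : ∀ q, MeasurableSet (D q)) (hanti : Antitone D) (δ : ℝ≥0∞)
    (h : μ (⋂ q, D q) < δ) : ∃ q, μ (D q) < δ := by
  have := tendsto_measure_iInter_atTop (μ := μ) (fun q => (hD q).nullMeasurableSet) hanti
    ⟨0, measure_ne_top _ _⟩
  exact (this.eventually (gt_mem_nhds h)).exists

open Filter Topology in
lemma step_aux {X : Type} [MeasurableSpace X] (μ : Measure X) [IsProbabilityMeasure μ]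
    (z : X → ℕ → ℕ → Bool × ℕ) (hz : Measurable z)
    (h : ∀ᵐ x ∂μ, ∀ i n, ∃ j, (∀ l < n, z x j l = z x i l) ∧ seqFst (z x j) ≠ seqFst (z x i))
    (n : ℕ) (ε : ℝ≥0∞) (hε : ε ≠ 0) (hε' : ε ≠ ∞) :
    ∃ n' > n, ∃ W : (ℕ → Bool) → Bool, Measurable W ∧
      (∀ c c' : ℕ → Bool, (∀ l < n', c l = c' l) → W c = W c') ∧
      μ {x | ¬ ∀ i ≤ n, ∀ b, ∃ j ≤ n', (∀ l < n, z x j l = z x i l) ∧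
        W (seqFst (z x j)) = b} ≤ ε := by
  classical
  have hzm : ∀ j l, Measurable fun x => z x j l := fun j l =>
    (measurable_pi_apply l).comp ((measurable_pi_apply j).comp hz)
  have hag : ∀ i j, MeasurableSet {x | ∀ l < n, z x j l = z x i l} := by
    intro i j
    have : {x | ∀ l < n, z x j l = z x i l} = ⋂ l : Fin n, {x | z x j l = z x i l} := by
      ext x
      simp only [mem_iInter]
      exact ⟨fun h l => h l l.2, fun h l hl => h ⟨l, hl⟩⟩
    rw [this]
    exact MeasurableSet.iInter fun l => measurableSet_eq_fun (hzm j l) (hzm i l)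
  have h3 : ε / 3 ≠ 0 := by simp [hε]
  obtain ⟨M, hM⟩ : ∃ M : ℕ, ((Fintype.card (Fin (n + 1)) * 2 : ℕ) : ℝ≥0∞) * (2 ^ M)⁻¹ < ε / 3 := by
    have h1 : Tendsto (fun M : ℕ => (2⁻¹ : ℝ≥0∞) ^ M) atTop (𝓝 0) :=
      ENNReal.tendsto_pow_atTop_nhds_zero_of_lt_one (by simp)
    have h2 := ENNReal.Tendsto.const_mul
      (a := ((Fintype.card (Fin (n + 1)) * 2 : ℕ) : ℝ≥0∞)) h1
      (Or.inr (ENNReal.natCast_ne_top _))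
    rw [mul_zero] at h2
    obtain ⟨M, hM⟩ := (h2.eventually (gt_mem_nhds (pos_iff_ne_zero.2 h3))).exists
    refine ⟨M, ?_⟩
    rwa [ENNReal.inv_pow] 
  let S : (p : ℕ) → X → Fin (n + 1) → Set (Fin p → Bool) := fun p x i =>
    {a | ∃ j, (∀ l < n, z x j l = z x i l) ∧ ∀ l : Fin p, (z x j l).1 = a l}
  have hS : ∀ p i a, MeasurableSet {x | a ∈ S p x i} := by
    intro p i a
    have : {x | a ∈ S p x i} = ⋃ j, ({x | ∀ l < n, z x j l = z x i l} ∩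
        ⋂ l : Fin p, {x | (z x j l).1 = a l}) := by
      ext x
      simp [S]
    rw [this]
    exact MeasurableSet.iUnion fun j => (hag i j).inter (MeasurableSet.iInter fun l =>
      measurableSet_eq_fun (measurable_fst.comp (hzm j l)) measurable_const)
  let N : ℕ → Set X := fun p =>
    {x | ∀ i, ∃ T : Finset (Fin p → Bool), M ≤ T.card ∧ ∀ a ∈ T, a ∈ S p x i}ᶜ
  have hN : ∀ p, MeasurableSet (N p) := by
    intro p
    refine MeasurableSet.compl ?_
    have : {x | ∀ i, ∃ T : Finset (Fin p → Bool), M ≤ T.card ∧ ∀ a ∈ T, a ∈ S p x i} =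
        ⋂ i, ⋃ T ∈ {T : Finset (Fin p → Bool) | M ≤ T.card}, ⋂ a ∈ T, {x | a ∈ S p x i} := by
      ext x
      simp
    rw [this]
    exact MeasurableSet.iInter fun i => MeasurableSet.biUnion (Set.to_countable _) fun T _ =>
      MeasurableSet.biInter (Set.to_countable _) fun a _ => hS p i a
  have hmonoT : ∀ p q x i, p ≤ q →
      (∃ T : Finset (Fin p → Bool), M ≤ T.card ∧ ∀ a ∈ T, a ∈ S p x i) →
      ∃ T : Finset (Fin q → Bool), M ≤ T.card ∧ ∀ a ∈ T, a ∈ S q x i := by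
    rintro p q x i hpq ⟨T, hT, hT'⟩
    choose! J hJ1 hJ2 using hT'
    let φ : (Fin p → Bool) → (Fin q → Bool) := fun a l => (z x (J a) l).1
    have hinj : Set.InjOn φ T := by
      intro a ha b hb hab
      funext l
      rw [← hJ2 a ha l, ← hJ2 b hb l]
      exact congrFun hab ⟨l, lt_of_lt_of_le l.2 hpq⟩
    refine ⟨T.image φ, by rwa [Finset.card_image_of_injOn hinj], fun a ha => ?_⟩
    obtain ⟨a, ha', rfl⟩ := Finset.mem_image.1 ha
    exact ⟨J a, hJ1 a ha', fun l => rfl⟩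
  have hNanti : Antitone N := by
    intro p q hpq
    refine compl_subset_compl.2 fun x hx i => hmonoT p q x i hpq (hx i)
  have hNint : μ (⋂ p, N p) = 0 := by
    refine measure_mono_null ?_ (ae_iff.1 h)
    intro x hx hgood
    rw [mem_iInter] at hx
    have : ∀ i : Fin (n + 1), ∃ p : ℕ, ∃ T : Finset (Fin p → Bool), M ≤ T.card ∧
        ∀ a ∈ T, a ∈ S p x i := fun i => infinite_aux (z x) hgood i n M
    choose p hp using this
    exact hx (Finset.univ.sup p) fun i =>
      hmonoT _ _ x i (Finset.le_sup (f := p) (Finset.mem_univ i)) (hp i)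
  obtain ⟨p, hp⟩ := small_aux μ N hN hNanti (ε / 3) (by rw [hNint]; exact pos_iff_ne_zero.2 h3)
  obtain ⟨W, hW⟩ := random_aux μ (S p) (hS p) M (N p) (hN p)
    (fun x hx => notMem_compl_iff.1 hx)
  have hW' : μ {x | ∃ i b, ∀ a ∈ S p x i, W a = b} < ε := by
    refine lt_of_le_of_lt hW ?_
    calc _ < ε / 3 + ε / 3 := ENNReal.add_lt_add hp (by exact_mod_cast hM)
      _ ≤ ε / 3 + ε / 3 + ε / 3 := le_self_add
      _ = ε := ENNReal.add_thirds ε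
  let V : (ℕ → Bool) → Bool := fun c => W fun l => c l
  have hV : Measurable V :=
    (measurable_of_finite W).comp (measurable_pi_lambda _ fun l => measurable_pi_apply _)
  have hVz : ∀ j, Measurable fun x => V (seqFst (z x j)) := fun j =>
    hV.comp (measurable_pi_lambda _ fun l => measurable_fst.comp (hzm j l))
  let D : ℕ → Set X := fun q => {x | ∀ i : Fin (n + 1), ∀ b, ∃ j : Fin (q + 1),
    (∀ l < n, z x j l = z x i l) ∧ V (seqFst (z x j)) = b}ᶜ
  have hD : ∀ q, MeasurableSet (D q) := by
    intro q
    refine MeasurableSet.compl ?_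
    have : {x | ∀ i : Fin (n + 1), ∀ b, ∃ j : Fin (q + 1),
        (∀ l < n, z x j l = z x i l) ∧ V (seqFst (z x j)) = b} =
        ⋂ i : Fin (n + 1), ⋂ b, ⋃ j : Fin (q + 1), ({x | ∀ l < n, z x j l = z x i l} ∩
          {x | V (seqFst (z x j)) = b}) := by
      ext x
      simp only [mem_iInter, mem_iUnion]
      rfl
    rw [this]
    exact MeasurableSet.iInter fun i => MeasurableSet.iInter fun b => MeasurableSet.iUnion fun j =>
      (hag i j).inter (measurableSet_eq_fun (hVz j) measurable_const)
  have hDanti : Antitone D := by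
    intro q r hqr
    refine compl_subset_compl.2 fun x hx i b => ?_
    obtain ⟨j, hj⟩ := hx i b
    exact ⟨⟨j, by omega⟩, hj⟩
  have hDint : μ (⋂ q, D q) < ε := by
    refine lt_of_le_of_lt (measure_mono ?_) hW'
    intro x hx
    by_contra hcon
    have hcon' : ∀ i b, ∃ a ∈ S p x i, W a ≠ b := by
      by_contra h'
      push Not at h'
      exact hcon h'
    have : ∀ (i : Fin (n + 1)) (b : Bool), ∃ j, (∀ l < n, z x j l = z x i l) ∧
        V (seqFst (z x j)) = b := by
      intro i b
      obtain ⟨a, ⟨j, hj, hja⟩, hb⟩ := hcon' i (!b)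
      refine ⟨j, hj, ?_⟩
      have : (fun l : Fin p => seqFst (z x j) l) = a := funext hja
      simp only [V, this]
      simpa using hb
    choose J hJ1 hJ2 using this
    rw [mem_iInter] at hx
    refine hx (Finset.univ.sup fun ib : Fin (n + 1) × Bool => J ib.1 ib.2) fun i b => ?_
    have := Finset.le_sup (f := fun ib : Fin (n + 1) × Bool => J ib.1 ib.2)
      (Finset.mem_univ (i, b))
    exact ⟨⟨J i b, Nat.lt_succ_of_le this⟩, hJ1 i b, hJ2 i b⟩
  obtain ⟨q, hq⟩ := small_aux μ D hD hDanti ε hDint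
  refine ⟨max (n + 1) (max p q), by omega, V, hV, ?_, ?_⟩
  · intro c c' hcc
    simp only [V]
    congr 1
    funext l
    exact hcc l (by omega)
  · refine le_trans (measure_mono ?_) hq.le
    intro x hx hx'
    apply hx
    intro i hi b
    obtain ⟨j, hj⟩ := hx' ⟨i, by omega⟩ b
    exact ⟨j, by omega, hj⟩

open Filter Topology in
lemma main_aux {X : Type} [MeasurableSpace X] [StandardBorelSpace X] (μ : Measure X)
    [IsProbabilityMeasure μ] (F : Set (X × (ℕ → Bool × ℕ))) (hF : MeasurableSet F)
    (hcl : ∀ x, IsClosed {w | (x, w) ∈ F})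
    (hunc : ∀ x, ¬ (seqFst '' {w | (x, w) ∈ F}).Countable) :
    ∃ f : X → (ℕ → Bool × ℕ), Measurable f ∧ ∃ X' : Set X, MeasurableSet X' ∧ μ X'ᶜ = 0 ∧
      (∀ x ∈ X', (x, f x) ∈ F) ∧ InjOn (fun x => seqFst (f x)) X' := by
  classical
  have hsF : Measurable seqFst :=
    measurable_pi_lambda _ fun l => measurable_fst.comp (measurable_pi_apply l)
  -- choose dense sequences measurably
  let Q : Set (X × (ℕ → ℕ → Bool × ℕ)) := {q | (∀ i, (q.1, q.2 i) ∈ F) ∧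
    ∀ i n, ∃ j, (∀ l < n, q.2 j l = q.2 i l) ∧ seqFst (q.2 j) ≠ seqFst (q.2 i)}
  have hQ : MeasurableSet Q := by
    have hm : ∀ j, Measurable fun q : X × (ℕ → ℕ → Bool × ℕ) => q.2 j := fun j =>
      (measurable_pi_apply j).comp measurable_snd
    have hm' : ∀ j l, Measurable fun q : X × (ℕ → ℕ → Bool × ℕ) => q.2 j l := fun j l =>
      (measurable_pi_apply l).comp (hm j)
    have : Q = (⋂ i, {q | (q.1, q.2 i) ∈ F}) ∩ ⋂ i, ⋂ n : ℕ, ⋃ j,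
        ((⋂ l : Fin n, {q | q.2 j l = q.2 i l}) ∩ {q | seqFst (q.2 j) = seqFst (q.2 i)}ᶜ) := by
      ext q
      simp only [Q, mem_inter_iff, mem_iInter, mem_iUnion]
      refine and_congr Iff.rfl (forall_congr' fun i => forall_congr' fun n =>
        exists_congr fun j => and_congr ?_ Iff.rfl)
      exact ⟨fun h l => h l l.2, fun h l hl => h ⟨l, hl⟩⟩
    rw [this]
    refine (MeasurableSet.iInter fun i => ?_).inter (MeasurableSet.iInter fun i =>
      MeasurableSet.iInter fun n => MeasurableSet.iUnion fun j =>
      (MeasurableSet.iInter fun l : Fin n => measurableSet_eq_fun (hm' j l) (hm' i l)).inter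
      (measurableSet_eq_fun (hsF.comp (hm j)) (hsF.comp (hm i))).compl)
    exact (measurable_fst.prodMk (hm i)) hF
  obtain ⟨z, hz, hzQ⟩ := unif_aux μ Q hQ (Eventually.of_forall fun x => dense_aux _ (hunc x))
  have hstep := step_aux μ z hz (hzQ.mono fun x hx => hx.2)
  have hpow : ∀ k : ℕ, (2⁻¹ : ℝ≥0∞) ^ k ≠ 0 := fun k => pow_ne_zero _ (by simp)
  have hpow' : ∀ k : ℕ, (2⁻¹ : ℝ≥0∞) ^ k ≠ ∞ := fun k => ENNReal.pow_ne_top (by simp)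
  choose nx hnx W hWm hWloc hWμ using fun (n k : ℕ) => hstep n ((2⁻¹ : ℝ≥0∞) ^ k) (hpow k) (hpow' k)
  let N : ℕ → ℕ := fun k => Nat.rec 0 (fun k n => nx n k) k
  have hN : ∀ k, N (k + 1) = nx (N k) k := fun k => rfl
  let V : ℕ → (ℕ → Bool) → Bool := fun k => W (N k) k
  have hNmono : StrictMono N := strictMono_nat_of_lt_succ fun k => by rw [hN]; exact hnx _ _
  have hbc := ae_eventually_notMem (μ := μ) (s := fun k => {x | ¬ ∀ i ≤ N k, ∀ b,
      ∃ j ≤ N (k + 1), (∀ l < N k, z x j l = z x i l) ∧ V k (seqFst (z x j)) = b}) (by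
    refine ne_top_of_le_ne_top ?_ (ENNReal.tsum_le_tsum fun k => hWμ (N k) k)
    rw [ENNReal.tsum_geometric]
    simp)
  let e : X → ℕ → Bool := MeasurableSpace.mapNatBool X
  have he : Measurable e := MeasurableSpace.measurable_mapNatBool X
  have hei : Injective e := MeasurableSpace.injective_mapNatBool X
  let P : Set (X × (ℕ → Bool × ℕ)) :=
    F ∩ ⋃ k0 : ℕ, ⋂ k : ℕ, {q | k0 ≤ k → V k (seqFst q.2) = e q.1 k.unpair.1}
  have hP : MeasurableSet P := by
    refine hF.inter (MeasurableSet.iUnion fun k0 => MeasurableSet.iInter fun k => ?_)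
    by_cases hk : k0 ≤ k
    · simp only [hk, true_imp_iff]
      exact measurableSet_eq_fun ((hWm _ _).comp (hsF.comp measurable_snd))
        ((measurable_pi_apply _).comp (he.comp measurable_fst))
    · simp [hk]
  have hproj : ∀ᵐ x ∂μ, ∃ w, (x, w) ∈ P := by
    filter_upwards [hzQ, hbc] with x hx hb
    obtain ⟨k0, hk0⟩ := eventually_atTop.1 hb
    have hgood : ∀ k, k0 ≤ k → ∀ i ≤ N k, ∀ b,
      ∃ j ≤ N (k + 1), (∀ l < N k, z x j l = z x i l) ∧ V k (seqFst (z x j)) = b :=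
      fun k hk => not_not.1 (hk0 k hk)
    choose! J hJ1 hJ2 hJ3 using hgood
    let s : ℕ → ℕ := fun m => Nat.rec 0
      (fun m j => J (k0 + m) j (e x (k0 + m).unpair.1)) m
    have hs : ∀ m, s (m + 1) = J (k0 + m) (s m) (e x (k0 + m).unpair.1) := fun m => rfl
    have hsN : ∀ m, s m ≤ N (k0 + m) := by
      intro m
      induction m with
      | zero => exact Nat.zero_le _
      | succ m ih => rw [hs]; exact hJ1 (k0 + m) (by omega) _ ih _
    have hs2 : ∀ m, ∀ l < N (k0 + m), z x (s (m + 1)) l = z x (s m) l := fun m => by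
      rw [hs]; exact hJ2 (k0 + m) (by omega) _ (hsN m) _
    have hs3 : ∀ m, V (k0 + m) (seqFst (z x (s (m + 1)))) = e x (k0 + m).unpair.1 := fun m => by
      rw [hs]; exact hJ3 (k0 + m) (by omega) _ (hsN m) _
    have hs4 : ∀ m d, ∀ l < N (k0 + m), z x (s (m + d)) l = z x (s m) l := by
      intro m d
      induction d with
      | zero => intro l _; rfl
      | succ d ih =>
        intro l hl
        rw [← ih l hl]
        exact hs2 (m + d) l (lt_of_lt_of_le hl (hNmono.monotone (by omega)))
    let w : ℕ → Bool × ℕ := fun l => z x (s (l + 1)) l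
    have hw : ∀ m, ∀ l < N (k0 + m), w l = z x (s m) l := by
      intro m l hl
      have hl' : l < N (k0 + (l + 1)) :=
        lt_of_lt_of_le (by omega) (hNmono.le_apply (x := k0 + (l + 1)))
      rcases le_total m (l + 1) with hml | hml
      · obtain ⟨d, hd⟩ := Nat.exists_eq_add_of_le hml
        simp only [w]
        rw [hd]
        exact hs4 m d l hl
      · obtain ⟨d, hd⟩ := Nat.exists_eq_add_of_le hml
        rw [hd]
        exact (hs4 (l + 1) d l hl').symm
    have hlim : Tendsto (fun m => z x (s m)) atTop (𝓝 w) := by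
      rw [tendsto_pi_nhds]
      intro l
      refine tendsto_const_nhds.congr' ?_
      filter_upwards [eventually_gt_atTop l] with m hm
      exact hw m l (lt_of_lt_of_le (by omega) (hNmono.le_apply (x := k0 + m)))
    refine ⟨w, (hcl x).mem_of_tendsto hlim (Eventually.of_forall fun m => hx.1 (s m)), ?_⟩
    rw [mem_iUnion]
    refine ⟨k0, ?_⟩
    rw [mem_iInter]
    intro k hk
    obtain ⟨m, rfl⟩ := Nat.exists_eq_add_of_le hk
    change V (k0 + m) (seqFst w) = e x (k0 + m).unpair.1
    rw [← hs3 m]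
    refine hWloc _ _ _ _ fun l hl => ?_
    have := hw (m + 1) l hl
    simp only [seqFst, this]
  obtain ⟨f, hf, hfP⟩ := unif_aux μ P hP hproj
  have hXm : MeasurableSet {x | (x, f x) ∈ P} := (measurable_id.prodMk hf) hP
  refine ⟨f, hf, {x | (x, f x) ∈ P}, hXm, ae_iff.1 hfP, fun x hx => hx.1, ?_⟩
  intro x hx y hy hxy
  obtain ⟨k0, h0⟩ := mem_iUnion.1 hx.2
  obtain ⟨k1, h1⟩ := mem_iUnion.1 hy.2
  rw [mem_iInter] at h0 h1
  apply hei
  funext i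
  have hle : max k0 k1 ≤ Nat.pair i (max k0 k1) := Nat.right_le_pair _ _
  have g0 := h0 (Nat.pair i (max k0 k1)) (by omega)
  have g1 := h1 (Nat.pair i (max k0 k1)) (by omega)
  simp only [Nat.unpair_pair] at g0 g1
  have hxy' : seqFst (f x) = seqFst (f y) := hxy
  rw [← g0, ← g1, hxy']

/-- Corollary 2.2: measurable injective selection from an analytic set
with uncountable fibers, on a conull Borel set. -/
theorem statement1 {X Y : Type} [MeasurableSpace X] [StandardBorelSpace X]
    [MeasurableSpace Y] [StandardBorelSpace Y]
    (μ : Measure X) [IsProbabilityMeasure μ]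
    (A : Set (X × Y)) (hA : IsAnalyticS A)
    (hfib : ∀ x : X, ¬ {y : Y | (x, y) ∈ A}.Countable) :
    ∃ X' : Set X, MeasurableSet X' ∧ μ X'ᶜ = 0 ∧
      ∃ f : X' → Y, Measurable f ∧ Function.Injective f ∧
        ∀ x : X', ((x : X), f x) ∈ A := by
  classical
  obtain ⟨Z, mZ, hZ, B, φ, hB, hφ, rfl⟩ := hA
  obtain ⟨x0⟩ : Nonempty X := μ.nonempty_of_neZero
  obtain ⟨y0, -⟩ : ({y : Y | (x0, y) ∈ φ '' B}).Nonempty := by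
    by_contra h
    rw [not_nonempty_iff_eq_empty] at h
    exact hfib x0 (h ▸ countable_empty)
  have : Nonempty Y := ⟨y0⟩
  let := upgradeStandardBorel X
  let ι : Y → ℕ → Bool := MeasurableSpace.mapNatBool Y
  have hι : Measurable ι := MeasurableSpace.measurable_mapNatBool Y
  have hιi : Injective ι := MeasurableSpace.injective_mapNatBool Y
  have hemb : MeasurableEmbedding ι := hι.measurableEmbedding hιi
  let ψ : Z → X × (ℕ → Bool) := fun t => ((φ t).1, ι (φ t).2)
  have hψ : Measurable ψ := (measurable_fst.comp hφ).prodMk (hι.comp (measurable_snd.comp hφ))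
  have hAn : AnalyticSet (ψ '' B) := hB.analyticSet_image hψ
  have hmem : ∀ x c, (x, c) ∈ ψ '' B ↔ ∃ y, (x, y) ∈ φ '' B ∧ ι y = c := by
    intro x c
    constructor
    · rintro ⟨t, ht, h⟩
      obtain ⟨h1, h2⟩ := Prod.mk.inj h
      exact ⟨(φ t).2, ⟨t, ht, Prod.ext h1 rfl⟩, h2⟩
    · rintro ⟨y, ⟨t, ht, h⟩, rfl⟩
      exact ⟨t, ht, by simp [ψ, h]⟩
  rw [AnalyticSet] at hAn
  rcases hAn with hAn | ⟨g, hg, hgr⟩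
  · exfalso
    apply hfib x0
    have : {y : Y | (x0, y) ∈ φ '' B} = ∅ := by
      ext y
      simp only [mem_empty_iff_false, iff_false]
      intro hy
      have := (hmem x0 (ι y)).2 ⟨y, hy, rfl⟩
      rw [hAn] at this
      exact this
    rw [this]; exact countable_empty
  let F : Set (X × (ℕ → Bool × ℕ)) := {q | g (fun l => (q.2 l).2) = (q.1, seqFst q.2)}
  have hFcl : IsClosed F := by
    refine isClosed_eq (hg.comp ?_) (continuous_fst.prodMk ?_)
    · exact continuous_pi fun l => continuous_snd.comp ((continuous_apply l).comp continuous_snd)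
    · exact continuous_pi fun l => continuous_fst.comp ((continuous_apply l).comp continuous_snd)
  have hFA : ∀ x w, (x, w) ∈ F → ∃ y, (x, y) ∈ φ '' B ∧ ι y = seqFst w := by
    intro x w h
    refine (hmem x (seqFst w)).1 ?_
    rw [← hgr]
    exact ⟨_, h⟩
  obtain ⟨f, hf, X', hX', hnull, hfF, hinj⟩ := main_aux μ F hFcl.measurableSet
    (fun x => hFcl.preimage (continuous_const.prodMk continuous_id)) (by
      intro x hc
      apply hfib x
      refine Countable.mono ?_ (hc.preimage hιi)
      intro y hy
      have : (x, ι y) ∈ range g := by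
        rw [hgr]; exact (hmem x (ι y)).2 ⟨y, hy, rfl⟩
      obtain ⟨σ, hσ⟩ := this
      exact ⟨fun l => (ι y l, σ l), hσ, rfl⟩)
  have hsF : Measurable seqFst :=
    measurable_pi_lambda _ fun l => measurable_fst.comp (measurable_pi_apply l)
  refine ⟨X', hX', hnull, fun x => hemb.invFun (seqFst (f x)),
    hemb.measurable_invFun.comp (hsF.comp (hf.comp measurable_subtype_coe)), ?_, ?_⟩
  · intro x x' hxx
    obtain ⟨y, -, hy⟩ := hFA x (f x) (hfF x x.2)
    obtain ⟨y', -, hy'⟩ := hFA x' (f x') (hfF x' x'.2)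
    simp only [← hy, ← hy'] at hxx
    rw [hemb.leftInverse_invFun, hemb.leftInverse_invFun] at hxx
    apply Subtype.ext
    apply hinj x.2 x'.2
    simp only [← hy, ← hy', hxx]
  · intro x
    obtain ⟨y, hyA, hy⟩ := hFA x (f x) (hfF x x.2)
    simp only [← hy]
    rw [hemb.leftInverse_invFun]
    exact hyA
end

section
/- Let X be a standard Borel space equipped with a Borel probability measure μ, let Y and Z be standard Borel spaces, let f : X × Y → Z be a Borel map, and let A ⊆ X × Y be a Borel set such that for every x ∈ X the image f(A ∩ ({x} × Y)) is uncountable. Then there exists a μ-conull Borel set X' ⊆ X and a Borel function φ : X' → Y such that (x, φ(x)) ∈ A for every x ∈ X' and the map x ↦ f(x, φ(x)) is injective on X'. -/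
open MeasureTheory Set Function
open scoped ENNReal symmDiff

open Topology Filter in
lemma exists_cont_inj_real : ∃ r : (ℕ → ℕ) → ℝ, Continuous r ∧ Injective r := by
  let b : (ℕ → ℕ) → (ℕ → Bool) := fun α i => decide (α i.unpair.1 = i.unpair.2)
  have hb : Continuous b := by
    refine continuous_pi fun i => ?_
    exact (continuous_of_discreteTopology (f := fun k : ℕ => decide (k = i.unpair.2))).comp
      (continuous_apply (i.unpair.1))
  have hbi : Injective b := by
    intro α β h
    funext n
    have := congrFun h (Nat.pair n (β n))
    simpa [b] using this
  have hc : Continuous (Cardinal.cantorFunction (1/3)) := by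
    unfold Cardinal.cantorFunction
    refine continuous_tsum (u := fun n => (1/3 : ℝ)^n) (fun i => ?_)
      (summable_geometric_of_lt_one (by norm_num) (by norm_num)) ?_
    · unfold Cardinal.cantorFunctionAux
      exact (continuous_of_discreteTopology (f := fun k : Bool => cond k ((1/3 : ℝ)^i) 0)).comp
        (continuous_apply i)
    · intro n x
      unfold Cardinal.cantorFunctionAux
      cases x n <;> simp
  exact ⟨_, hc.comp hb, (Cardinal.cantorFunction_injective (by norm_num) (by norm_num)).comp hbi⟩

lemma sel_compact {X : Type*} [TopologicalSpace X] [T2Space X] [MeasurableSpace X]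
    [BorelSpace X] [SecondCountableTopology X] (g : (ℕ → ℕ) → X) (hg : Continuous g)
    (K : Set (ℕ → ℕ)) (hK : IsCompact K) :
    ∃ s : X → (ℕ → ℕ), Measurable s ∧ ∀ x ∈ g '' K, g (s x) = x := by
  obtain ⟨r, hr, hri⟩ := exists_cont_inj_real
  let L : Set (ℕ → ℕ) := {α ∈ K | ∀ β ∈ K, g β = g α → r α ≤ r β}
  have hLm : MeasurableSet L := by
    have : L = K \ ⋃ a : ℚ, ({α | (a : ℝ) < r α} ∩ g ⁻¹' (g '' (K ∩ {β | r β ≤ a}))) := by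
      ext α
      simp only [L, mem_ofPred_eq, mem_sdiff, mem_iUnion, mem_inter_iff, mem_preimage, mem_image,
        not_exists, not_and]
      refine and_congr_right fun hα => ⟨fun h a ha β hβ hgβ => ?_, fun h β hβ hgβ => ?_⟩
      · have := h β hβ.1 hgβ
        linarith [hβ.2]
      · by_contra hlt
        push Not at hlt
        obtain ⟨a, h1, h2⟩ := exists_rat_btwn hlt
        exact h a h2 β ⟨hβ, h1.le⟩ hgβ
    rw [this]
    refine hK.measurableSet.diff (MeasurableSet.iUnion fun a => ?_)
    refine (measurableSet_lt measurable_const hr.measurable).inter (hg.measurable ?_)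
    have : IsCompact (K ∩ {β | r β ≤ a}) := hK.inter_right (isClosed_le hr continuous_const)
    exact (this.image hg).isClosed.measurableSet
  have hex : ∀ x ∈ g '' K, ∃ α ∈ L, g α = x := by
    rintro x ⟨α, hα, rfl⟩
    have hc : IsCompact (K ∩ g ⁻¹' {g α}) := hK.inter_right (isClosed_singleton.preimage hg)
    obtain ⟨β, hβ, hmin⟩ := hc.exists_isMinOn ⟨α, hα, rfl⟩ hr.continuousOn
    refine ⟨β, ⟨hβ.1, fun γ hγ h => hmin ⟨hγ, ?_⟩⟩, hβ.2⟩
    rw [mem_preimage, h]; exact hβ.2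
  have hinj : InjOn g L := by
    intro α hα β hβ h
    exact hri (le_antisymm (hα.2 β hβ.1 h.symm) (hβ.2 α hα.1 h))
  have : StandardBorelSpace L := hLm.standardBorel
  have hemb : MeasurableEmbedding (fun a : L => g a) :=
    (hg.measurable.comp measurable_subtype_coe).measurableEmbedding
      (fun a b h => Subtype.ext (hinj a.2 b.2 h))
  obtain ⟨s, hs, hs2⟩ := hemb.exists_measurable_extend
    (g := fun a : L => (a : ℕ → ℕ)) measurable_subtype_coe (fun _ => ⟨0⟩)
  refine ⟨s, hs, fun x hx => ?_⟩
  obtain ⟨α, hα, rfl⟩ := hex x hx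
  have := congrFun hs2 ⟨α, hα⟩
  simp only [comp_apply] at this
  rw [this]

lemma cap_open (j : ℕ → ℕ) (O : Set (ℕ → ℕ)) (hO : IsOpen O)
    (h : {α : ℕ → ℕ | ∀ i, α i ≤ j i} ⊆ O) :
    ∃ n, {α : ℕ → ℕ | ∀ i < n, α i ≤ j i} ⊆ O := by
  by_contra! hcon
  have : ∀ n, ∃ α : ℕ → ℕ, (∀ i < n, α i ≤ j i) ∧ α ∉ O := by
    intro n
    obtain ⟨α, h1, h2⟩ := not_subset.1 (hcon n)
    exact ⟨α, h1, h2⟩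
  choose α hα hαO using this
  have hK : IsCompact {α : ℕ → ℕ | ∀ i, α i ≤ j i} := by
    have := isCompact_univ_pi (s := fun i => Set.Iic (j i))
      (fun i => (Set.finite_Iic (j i)).isCompact)
    convert this using 1
    ext; simp [Pi.le_def]
  obtain ⟨β, hβ, φ, hφ, hlim⟩ := hK.tendsto_subseq
    (x := fun n i => min (α n i) (j i)) (fun n i => min_le_right _ _)
  have hlim2 : Filter.Tendsto (α ∘ φ) Filter.atTop (nhds β) := by
    rw [tendsto_pi_nhds] at hlim ⊢
    intro i
    refine (hlim i).congr' ?_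
    filter_upwards [Filter.eventually_gt_atTop i] with n hn
    have : i < φ n := lt_of_lt_of_le hn (hφ.id_le n)
    simp [hα _ i this]
  obtain ⟨n, hn⟩ := (hlim2.eventually (hO.mem_nhds (h hβ))).exists
  exact hαO _ hn

lemma cap_compact {X : Type*} [TopologicalSpace X] [PolishSpace X] [MeasurableSpace X]
    [BorelSpace X] (μ : Measure X) [IsFiniteMeasure μ] (g : (ℕ → ℕ) → X) (hg : Continuous g)
    (c : ℝ≥0∞) (hc : c < μ (range g)) :
    ∃ K : Set (ℕ → ℕ), IsCompact K ∧ c ≤ μ (g '' K) := by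
  have step : ∀ (n : ℕ) (V : {V : Set (ℕ → ℕ) // c < μ (g '' V)}),
      ∃ j : ℕ, c < μ (g '' (V.1 ∩ {α | α n ≤ j})) := by
    rintro n ⟨V, hV⟩
    have hm : Monotone fun j : ℕ => g '' (V ∩ {α | α n ≤ j}) := by
      intro a b hab
      exact image_mono (inter_subset_inter_right _ fun α (h : α n ≤ a) => h.trans hab)
    have hU : (⋃ j : ℕ, g '' (V ∩ {α | α n ≤ j})) = g '' V := by
      rw [← image_iUnion, ← inter_iUnion]
      congr 1
      ext α
      simp only [mem_inter_iff, mem_iUnion, mem_ofPred_eq, and_iff_left_iff_imp]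
      exact fun _ => ⟨α n, le_rfl⟩
    rw [← hU, hm.measure_iUnion] at hV
    exact lt_iSup_iff.1 hV
  choose J hJ using step
  let V : ℕ → {V : Set (ℕ → ℕ) // c < μ (g '' V)} := fun n =>
    Nat.rec ⟨univ, by rwa [image_univ]⟩ (fun n V => ⟨_, hJ n V⟩) n
  let j : ℕ → ℕ := fun n => J n (V n)
  have hV : ∀ n, (V n).1 = {α | ∀ i < n, α i ≤ j i} := by
    intro n
    induction n with
    | zero => simp [V]
    | succ n ih =>
      have : (V (n+1)).1 = (V n).1 ∩ {α | α n ≤ j n} := rfl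
      rw [this, ih]
      ext α
      simp only [mem_inter_iff, mem_ofPred_eq, Nat.lt_succ_iff_lt_or_eq]
      grind
  have hK : IsCompact {α : ℕ → ℕ | ∀ i, α i ≤ j i} := by
    have := isCompact_univ_pi (s := fun i => Set.Iic (j i))
      (fun i => (Set.finite_Iic (j i)).isCompact)
    convert this using 1
    ext; simp [Pi.le_def]
  refine ⟨_, hK, ?_⟩
  rw [Set.measure_eq_iInf_isOpen]
  refine le_iInf₂ fun O hO => le_iInf fun hOo => ?_
  obtain ⟨n, hn⟩ := cap_open j (g ⁻¹' O) (hOo.preimage hg) (image_subset_iff.1 hO)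
  rw [← hV] at hn
  exact (V n).2.le.trans (measure_mono (image_subset_iff.2 hn))

lemma sel_cont {X : Type*} [TopologicalSpace X] [PolishSpace X] [MeasurableSpace X]
    [BorelSpace X] (μ : Measure X) [IsProbabilityMeasure μ] (g : (ℕ → ℕ) → X) (hg : Continuous g)
    (hc : ∀ᵐ x ∂μ, x ∈ range g) :
    ∃ s : X → (ℕ → ℕ), Measurable s ∧ ∀ᵐ x ∂μ, g (s x) = x := by
  have h1 : μ (range g) = 1 := by
    have : (range g : Set X) =ᵐ[μ] univ := Filter.eventuallyEq_univ.2 hc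
    rw [measure_congr this]; exact measure_univ
  have : ∀ n : ℕ, ∃ K : Set (ℕ → ℕ), IsCompact K ∧ 1 - ((n : ℝ≥0∞) + 1)⁻¹ ≤ μ (g '' K) := by
    intro n
    refine cap_compact μ g hg _ ?_
    rw [h1]
    exact ENNReal.sub_lt_self (by simp) (by simp) (by simp)
  choose K hK hKm using this
  choose s hs hs2 using fun n => sel_compact g hg (K n) (hK n)
  have hGm : ∀ n, MeasurableSet (g '' K n) := fun n => ((hK n).image hg).isClosed.measurableSet
  have hconull : ∀ᵐ x ∂μ, ∃ n, x ∈ g '' K n := by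
    have : μ (⋃ n, g '' K n)ᶜ = 0 := by
      have hle : ∀ n : ℕ, μ (⋃ n, g '' K n)ᶜ ≤ ((n : ℝ≥0∞) + 1)⁻¹ := by
        intro n
        calc μ (⋃ n, g '' K n)ᶜ ≤ μ (g '' K n)ᶜ :=
              measure_mono (compl_subset_compl.2 (subset_iUnion (fun n => g '' K n) n))
          _ = 1 - μ (g '' K n) := prob_compl_eq_one_sub (hGm n)
          _ ≤ 1 - (1 - ((n : ℝ≥0∞) + 1)⁻¹) := tsub_le_tsub_left (hKm n) _
          _ = ((n : ℝ≥0∞) + 1)⁻¹ := ENNReal.sub_sub_cancel (by simp) (by simp)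
      refine le_antisymm (ge_of_tendsto' (x := Filter.atTop) ?_ hle) zero_le
      have := (Filter.tendsto_add_atTop_iff_nat 1).2 ENNReal.tendsto_inv_nat_nhds_zero
      simpa using this
    filter_upwards [compl_mem_ae_iff.2 this] with x hx
    simpa using hx
  classical
  have hex : ∀ x, ∃ n, x ∈ g '' K n ∨ ∀ n, x ∉ g '' K n := by
    intro x
    by_cases h : ∃ n, x ∈ g '' K n
    · obtain ⟨n, hn⟩ := h; exact ⟨n, Or.inl hn⟩
    · push Not at h; exact ⟨0, Or.inr h⟩
  refine ⟨fun x => s (Nat.find (hex x)) x, Measurable.find hs (fun n => ?_) hex, ?_⟩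
  · have : {x | x ∈ g '' K n ∨ ∀ n, x ∉ g '' K n} = g '' K n ∪ ⋂ n, (g '' K n)ᶜ := by
      ext x; simp
    rw [this]
    exact (hGm n).union (MeasurableSet.iInter fun n => (hGm n).compl)
  · filter_upwards [hconull] with x ⟨n, hn⟩
    rcases Nat.find_spec (hex x) with h | h
    · exact hs2 _ x h
    · exact absurd hn (h n)

/-- measurable selection almost everywhere -/
lemma sel_ae {X W : Type*} [MeasurableSpace X] [StandardBorelSpace X]
    [MeasurableSpace W] [StandardBorelSpace W]
    (μ : Measure X) [IsProbabilityMeasure μ] (B : Set (X × W)) (hB : MeasurableSet B)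
    (h : ∀ᵐ x ∂μ, ∃ w, (x, w) ∈ B) :
    ∃ s : X → W, Measurable s ∧ ∀ᵐ x ∂μ, (x, s x) ∈ B := by
  let := upgradeStandardBorel X
  let := upgradeStandardBorel W
  have han := hB.analyticSet
  rw [AnalyticSet] at han
  rcases han with rfl | ⟨γ, hγ, hγr⟩
  · simp at h
    exact absurd h (IsProbabilityMeasure.ne_zero μ)
  obtain ⟨s, hs, hs2⟩ := sel_cont μ (fun a => (γ a).1) (continuous_fst.comp hγ) (by
    filter_upwards [h] with x ⟨w, hw⟩
    rw [← hγr] at hw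
    obtain ⟨a, ha⟩ := hw
    exact ⟨a, by simp [ha]⟩)
  refine ⟨fun x => (γ (s x)).2, (continuous_snd.comp hγ).measurable.comp hs, ?_⟩
  filter_upwards [hs2] with x hx
  rw [← hγr]
  exact ⟨s x, Prod.ext hx rfl⟩
lemma nonconst_dense {E Q : Type*} [MetricSpace E] [TopologicalSpace Q]
    (q : E → Q)
    (hE : ∀ V : Set E, IsOpen V → V.Nonempty → ∃ v ∈ V, ∃ w ∈ V, q v ≠ q w)
    (U : Set (ℕ → Bool)) (hU : IsOpen U) (hne : U.Nonempty) :
    Dense {g : C(ℕ → Bool, E) | ∃ a ∈ U, ∃ b ∈ U, q (g a) ≠ q (g b)} := by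
  classical
  rw [Metric.dense_iff]
  intro g0 ε hε
  by_cases hg0 : ∃ a ∈ U, ∃ b ∈ U, q (g0 a) ≠ q (g0 b)
  · exact ⟨g0, Metric.mem_ball_self hε, hg0⟩
  push Not at hg0
  obtain ⟨c, hc⟩ := hne
  -- second point
  obtain ⟨c1, hc1, hc1c⟩ : ∃ c1 ∈ U, c1 ≠ c := by
    have ht : Filter.Tendsto (fun n : ℕ => Function.update c n (!(c n))) Filter.atTop (nhds c) := by
      rw [tendsto_pi_nhds]
      intro i
      refine tendsto_const_nhds.congr' ?_
      filter_upwards [Filter.eventually_gt_atTop i] with n hn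
      rw [Function.update_of_ne hn.ne]
    obtain ⟨n, hn⟩ := (ht.eventually (hU.mem_nhds hc)).exists
    refine ⟨_, hn, fun h => ?_⟩
    have := congrFun h n
    simp at this
  obtain ⟨v, hv, w, hw, hvw⟩ := hE (Metric.ball (g0 c) (ε/2/2)) Metric.isOpen_ball
    ⟨_, Metric.mem_ball_self (by positivity)⟩
  obtain ⟨w', hw', hqw'⟩ : ∃ w' ∈ Metric.ball (g0 c) (ε/2/2), q w' ≠ q (g0 c) := by
    by_cases h : q v = q (g0 c)
    · exact ⟨w, hw, fun h' => hvw (h.trans h'.symm)⟩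
    · exact ⟨v, hv, h⟩
  have hopen : IsOpen (U ∩ g0 ⁻¹' (Metric.ball (g0 c) (ε/2/2)) ∩ {c1}ᶜ) :=
    (hU.inter (Metric.isOpen_ball.preimage g0.continuous)).inter isOpen_compl_singleton
  obtain ⟨D, hD, hcD, hDs⟩ := (isTopologicalBasis_isClopen (X := ℕ → Bool)).exists_subset_of_mem_open
    (show c ∈ U ∩ g0 ⁻¹' (Metric.ball (g0 c) (ε/2/2)) ∩ {c1}ᶜ from
      ⟨⟨hc, Metric.mem_ball_self (by positivity)⟩, hc1c.symm⟩) hopen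
  have hD : IsClopen D := hD
  let g : C(ℕ → Bool, E) := ⟨D.piecewise (fun _ => w') g0,
    continuous_const.piecewise (by simp [hD.frontier_eq]) g0.continuous⟩
  refine ⟨g, ?_, c, hc, c1, hc1, ?_⟩
  · rw [Metric.mem_ball]
    refine lt_of_le_of_lt ((ContinuousMap.dist_le (by positivity : 0 ≤ ε/2)).2 fun x => ?_)
      (half_lt_self hε)
    by_cases hx : x ∈ D
    · have h1 : g x = w' := by simp [g, hx]
      rw [h1]
      have h2 : dist (g0 x) (g0 c) < ε/2/2 := (hDs hx).1.2
      have h3 : dist w' (g0 c) < ε/2/2 := hw'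
      linarith [dist_triangle_right w' (g0 x) (g0 c)]
    · have h1 : g x = g0 x := by simp [g, hx]
      rw [h1, dist_self]; positivity
  · have h1 : g c = w' := by simp [g, hcD]
    have h2 : g c1 = g0 c1 := by
      have : c1 ∉ D := fun h => (hDs h).2 rfl
      simp [g, this]
    rw [h1, h2, hg0 c1 hc1 c hc]
    exact hqw'

lemma isOpen_nonconst {E Q : Type*} [TopologicalSpace E] [TopologicalSpace Q] [T2Space Q]
    (q : E → Q) (hq : Continuous q) (U : Set (ℕ → Bool)) :
    IsOpen {g : C(ℕ → Bool, E) | ∃ a ∈ U, ∃ b ∈ U, q (g a) ≠ q (g b)} := by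
  have : {g : C(ℕ → Bool, E) | ∃ a ∈ U, ∃ b ∈ U, q (g a) ≠ q (g b)} =
    ⋃ a ∈ U, ⋃ b ∈ U, {g : C(ℕ → Bool, E) | q (g a) ≠ q (g b)} := by
    ext; simp
  rw [this]
  refine isOpen_biUnion fun a _ => isOpen_biUnion fun b _ => ?_
  exact isOpen_ne_fun (hq.comp (ContinuousEvalConst.continuous_eval_const a))
    (hq.comp (ContinuousEvalConst.continuous_eval_const b))

/-- nowhere constant continuous maps out of the Cantor space -/
def NowhereConst {E Q : Type*} [TopologicalSpace E] (q : E → Q) (g : C(ℕ → Bool, E)) : Prop :=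
  ∀ U : TopologicalSpace.countableBasis (ℕ → Bool), ∃ a ∈ U.1, ∃ b ∈ U.1, q (g a) ≠ q (g b)

lemma nonconst_exists {E Q : Type*} [MetricSpace E] [CompleteSpace E] [Nonempty E]
    [TopologicalSpace Q] [T2Space Q]
    (q : E → Q) (hq : Continuous q)
    (hE : ∀ V : Set E, IsOpen V → V.Nonempty → ∃ v ∈ V, ∃ w ∈ V, q v ≠ q w) :
    ∃ g : C(ℕ → Bool, E), NowhereConst q g := by
  have hd := dense_iInter_of_isOpen
    (f := fun U : TopologicalSpace.countableBasis (ℕ → Bool) =>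
      {g : C(ℕ → Bool, E) | ∃ a ∈ U.1, ∃ b ∈ U.1, q (g a) ≠ q (g b)})
    (fun U => isOpen_nonconst q hq U.1)
    (fun U => nonconst_dense q hE U.1
      (TopologicalSpace.isOpen_of_mem_countableBasis U.2)
      (TopologicalSpace.nonempty_of_mem_countableBasis U.2))
  have : Nonempty C(ℕ → Bool, E) := ⟨ContinuousMap.const _ (Classical.arbitrary E)⟩
  obtain ⟨g, hg⟩ := hd.nonempty
  exact ⟨g, fun U => mem_iInter.1 hg U⟩

lemma cantor_exists {P Q : Type*} [TopologicalSpace P] [PolishSpace P]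
    [TopologicalSpace Q] [T2Space Q] (q : P → Q) (hq : Continuous q)
    (C : Set P) (hC : IsClosed C) (hunc : ¬ (q '' C).Countable) :
    ∃ g : C(ℕ → Bool, P), (∀ c, g c ∈ C) ∧ NowhereConst q g := by
  let := TopologicalSpace.upgradeIsCompletelyMetrizable P
  let Bs : Set (Set P) := {U ∈ TopologicalSpace.countableBasis P | (q '' (C ∩ U)).Countable}
  have hBs : Bs.Countable := (TopologicalSpace.countable_countableBasis P).mono (sep_subset _ _)
  let N : Set P := ⋃₀ Bs
  have hNo : IsOpen N := isOpen_sUnion fun U hU => TopologicalSpace.isOpen_of_mem_countableBasis hU.1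
  have hNc : (q '' (C ∩ N)).Countable := by
    have : q '' (C ∩ N) = ⋃ U ∈ Bs, q '' (C ∩ U) := by
      simp only [N, sUnion_eq_biUnion, inter_iUnion, image_iUnion]
    rw [this]
    exact hBs.biUnion fun U hU => hU.2
  let C' : Set P := C \ N
  have hC' : IsClosed C' := hC.sdiff hNo
  have hbig : ∀ V : Set P, IsOpen V → (C' ∩ V).Nonempty → ¬ (q '' (C' ∩ V)).Countable := by
    rintro V hV ⟨a, ha, haV⟩ hcount
    obtain ⟨U, hU, haU, hUV⟩ :=
      (TopologicalSpace.isBasis_countableBasis P).exists_subset_of_mem_open haV hV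
    apply ha.2
    refine ⟨U, ⟨hU, ?_⟩, haU⟩
    refine (hcount.union hNc).mono ?_
    rintro _ ⟨y, ⟨hyC, hyU⟩, rfl⟩
    by_cases hy : y ∈ N
    · exact Or.inr ⟨y, ⟨hyC, hy⟩, rfl⟩
    · exact Or.inl ⟨y, ⟨⟨hyC, hy⟩, hUV hyU⟩, rfl⟩
  have hne : C'.Nonempty := by
    by_contra h
    rw [not_nonempty_iff_eq_empty] at h
    apply hunc
    refine hNc.mono ?_
    rintro _ ⟨y, hy, rfl⟩
    refine ⟨y, ⟨hy, ?_⟩, rfl⟩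
    by_contra hyN
    have : y ∈ C' := ⟨hy, hyN⟩
    rw [h] at this; exact this
  have : CompleteSpace C' := hC'.completeSpace_coe
  have : Nonempty C' := hne.to_subtype
  obtain ⟨g, hg⟩ := nonconst_exists (E := C') (fun a => q a) (hq.comp continuous_subtype_val) (by
    rintro V hV ⟨a, ha⟩
    obtain ⟨O, hO, rfl⟩ := isOpen_induced_iff.1 hV
    have := hbig O hO ⟨a, a.2, ha⟩
    have hnt : (q '' (C' ∩ O)).Nontrivial := by
      by_contra h
      exact this (not_nontrivial_iff.1 h).finite.countable
    obtain ⟨_, ⟨v, hv, rfl⟩, _, ⟨w, hw, rfl⟩, hvw⟩ := hnt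
    exact ⟨⟨v, hv.1⟩, hv.2, ⟨w, hw.1⟩, hw.2, hvw⟩)
  exact ⟨⟨fun c => (g c : P), continuous_subtype_val.comp g.continuous⟩,
    fun c => (g c).2.1, hg⟩

lemma nowhereConst_infinite {P Q : Type*} [TopologicalSpace P]
    [TopologicalSpace Q] [T2Space Q] (q : P → Q) (hq : Continuous q)
    (g : C(ℕ → Bool, P)) (hg : NowhereConst q g) (V : Set Q) (hV : IsOpen V)
    (hne : (range (q ∘ g) ∩ V).Nonempty) : (range (q ∘ g) ∩ V).Infinite := by
  intro hfin
  obtain ⟨_, ⟨c, rfl⟩, hc⟩ := hne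
  have hO : IsOpen (V \ ((range (q ∘ g) ∩ V) \ {(q ∘ g) c})) := by
    exact hV.sdiff (hfin.subset sdiff_subset).isClosed
  have hO2 : IsOpen ((q ∘ g) ⁻¹' (V \ ((range (q ∘ g) ∩ V) \ {(q ∘ g) c}))) :=
    hO.preimage (hq.comp g.continuous)
  obtain ⟨U, hU, hcU, hUV⟩ :=
    (TopologicalSpace.isBasis_countableBasis (ℕ → Bool)).exists_subset_of_mem_open
      (show c ∈ (q ∘ g) ⁻¹' (V \ ((range (q ∘ g) ∩ V) \ {(q ∘ g) c})) from
        ⟨hc, fun h => h.2 rfl⟩) hO2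
  obtain ⟨a, ha, b, hb, hab⟩ := hg ⟨U, hU⟩
  have key : ∀ a ∈ U, q (g a) = q (g c) := by
    intro a ha
    have := hUV ha
    by_contra hne
    exact this.2 ⟨⟨⟨a, rfl⟩, this.1⟩, hne⟩
  exact hab ((key a ha).trans (key b hb).symm)
lemma count_fun {τ : Type*} [Fintype τ] [DecidableEq τ] (S : Finset τ) (b : Bool) :
    (Finset.univ.filter fun l : τ → Bool => ∀ t ∈ S, l t = b).card * 2 ^ S.card
      = 2 ^ Fintype.card τ := by
  have : (Finset.univ.filter fun l : τ → Bool => ∀ t ∈ S, l t = b)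
      = Fintype.piFinset (fun t => if t ∈ S then {b} else Finset.univ) := by
    ext l
    simp only [Finset.mem_filter, Finset.mem_univ, true_and, Fintype.mem_piFinset]
    refine forall_congr' fun t => ?_
    by_cases h : t ∈ S <;> simp [h]
  rw [this, Fintype.card_piFinset]
  have h2 : ∀ t, (if t ∈ S then ({b} : Finset Bool) else Finset.univ).card
      = if t ∈ S then 1 else 2 := by
    intro t; split_ifs <;> simp
  simp only [h2]
  have h3 : (2 : ℕ) ^ S.card = ∏ t, if t ∈ S then 2 else 1 := by
    simp
  rw [h3, ← Finset.prod_mul_distrib]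
  have h4 : ∀ t : τ, ((if t ∈ S then 1 else 2) * if t ∈ S then 2 else 1) = 2 := by
    intro t; split_ifs <;> rfl
  simp [h4]

lemma avg {X τ' τ : Type*} [MeasurableSpace X] (μ : Measure X) [IsProbabilityMeasure μ]
    [Fintype τ'] [Fintype τ] (ρ : τ' → τ) (T : X → Set τ')
    (hT : ∀ t, MeasurableSet {x | t ∈ T x}) (e : X → Bool) (he : Measurable e) (M : ℕ) :
    ∃ l : τ' → Bool, μ ({x | ∃ u ∈ T x, ∀ t ∈ T x, ρ t = ρ u → l t ≠ e x} ∩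
      {x | ∀ u ∈ T x, M ≤ {t ∈ T x | ρ t = ρ u}.ncard}) ≤ Fintype.card τ * (2⁻¹ : ℝ≥0∞) ^ M := by
  classical
  have hTm : Measurable T := measurable_set_iff.2 fun t => measurableSet_setOfPred.1 (hT t)
  let Bd : (τ' → Bool) → Set (Set τ' × Bool) := fun l =>
    {p | ∃ u ∈ p.1, ∀ t ∈ p.1, ρ t = ρ u → l t ≠ p.2} ∩
      {p | ∀ u ∈ p.1, M ≤ {t ∈ p.1 | ρ t = ρ u}.ncard}
  have : MeasurableSingletonClass (Set τ') := inferInstanceAs (MeasurableSingletonClass (τ' → Prop))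
  have hBm : ∀ l, MeasurableSet ((fun x => (T x, e x)) ⁻¹' Bd l) := fun l =>
    (hTm.prodMk he) (Set.toFinite _).measurableSet
  suffices h : ∃ l ∈ (Finset.univ : Finset (τ' → Bool)), μ ((fun x => (T x, e x)) ⁻¹' Bd l)
      ≤ Fintype.card τ * (2⁻¹ : ℝ≥0∞) ^ M by
    obtain ⟨l, -, hl⟩ := h
    exact ⟨l, hl⟩
  by_contra! hcon
  refine absurd (ENNReal.sum_lt_sum_of_nonempty Finset.univ_nonempty hcon) (not_lt.2 ?_)
  calc ∑ l, μ ((fun x => (T x, e x)) ⁻¹' Bd l)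
      = ∑ l, ∫⁻ x, ((fun x => (T x, e x)) ⁻¹' Bd l).indicator 1 x ∂μ := by
        simp_rw [lintegral_indicator_one (hBm _)]
    _ = ∫⁻ x, ∑ l, ((fun x => (T x, e x)) ⁻¹' Bd l).indicator 1 x ∂μ := by
        rw [lintegral_finsetSum]
        exact fun l _ => measurable_one.indicator (hBm l)
    _ ≤ ∫⁻ x, ∑ l : τ' → Bool, Fintype.card τ * (2⁻¹ : ℝ≥0∞) ^ M ∂μ := by
        refine lintegral_mono fun x => ?_
        have hs : (∑ l, ((fun x => (T x, e x)) ⁻¹' Bd l).indicator (1 : X → ℝ≥0∞) x)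
          = ((Finset.univ.filter fun l => (T x, e x) ∈ Bd l).card : ℝ≥0∞) := by
          rw [Finset.card_filter]
          push_cast
          refine Finset.sum_congr rfl fun l _ => ?_
          rw [Set.indicator_apply]
          exact if_congr Iff.rfl rfl rfl
        rw [hs]
        by_cases hG : ∀ u ∈ T x, M ≤ {t ∈ T x | ρ t = ρ u}.ncard
        swap
        · have : (Finset.univ.filter fun l => (T x, e x) ∈ Bd l) = ∅ := by
            ext l
            simp only [Finset.mem_filter, Finset.mem_univ, true_and, Finset.notMem_empty, iff_false]
            exact fun h => hG h.2
          rw [this]; simp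
        let S : τ → Finset τ' := fun v => Finset.univ.filter fun t => t ∈ T x ∧ ρ t = v
        let V : Finset τ := Finset.univ.filter fun v => ∃ u ∈ T x, ρ u = v
        have hsub : (Finset.univ.filter fun l => (T x, e x) ∈ Bd l) ⊆
            V.biUnion fun v => Finset.univ.filter fun l : τ' → Bool => ∀ t ∈ S v, l t = !(e x) := by
          intro l hl
          obtain ⟨⟨u, hu, hul⟩, -⟩ := (Finset.mem_filter.1 hl).2
          refine Finset.mem_biUnion.2 ⟨ρ u, by simpa [V] using ⟨u, hu, rfl⟩, ?_⟩
          simp only [Finset.mem_filter, Finset.mem_univ, true_and, S]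
          rintro t ⟨ht, htu⟩
          have := hul t ht htu
          simp only at this
          revert this
          cases l t <;> cases e x <;> simp
        have hcard : ∀ v ∈ V, ((Finset.univ.filter fun l : τ' → Bool =>
            ∀ t ∈ S v, l t = !(e x)).card : ℝ≥0∞) ≤ 2 ^ Fintype.card τ' * (2⁻¹ : ℝ≥0∞) ^ M := by
          intro v hv
          obtain ⟨u, hu, rfl⟩ := (Finset.mem_filter.1 hv).2
          have hM : M ≤ (S (ρ u)).card := by
            have := hG u hu
            rw [← Set.ncard_coe_finset]
            simpa [S] using this
          have hc := count_fun (S (ρ u)) (!(e x))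
          rw [← ENNReal.inv_pow, ← div_eq_mul_inv, ENNReal.le_div_iff_mul_le (by simp) (by simp)]
          have : (Finset.univ.filter fun l : τ' → Bool =>
            ∀ t ∈ S (ρ u), l t = !(e x)).card * 2 ^ M ≤ 2 ^ Fintype.card τ' := by
            rw [← hc]
            exact Nat.mul_le_mul_left _ (Nat.pow_le_pow_right (by norm_num) hM)
          exact_mod_cast this
        calc ((Finset.univ.filter fun l => (T x, e x) ∈ Bd l).card : ℝ≥0∞)
            ≤ ((∑ v ∈ V, (Finset.univ.filter fun l : τ' → Bool =>
              ∀ t ∈ S v, l t = !(e x)).card : ℕ) : ℝ≥0∞) := by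
              exact_mod_cast (Finset.card_le_card hsub).trans Finset.card_biUnion_le
          _ = ∑ v ∈ V, ((Finset.univ.filter fun l : τ' → Bool =>
              ∀ t ∈ S v, l t = !(e x)).card : ℝ≥0∞) := by push_cast; rfl
          _ ≤ ∑ v ∈ V, 2 ^ Fintype.card τ' * (2⁻¹ : ℝ≥0∞) ^ M := Finset.sum_le_sum hcard
          _ ≤ ∑ v : τ, 2 ^ Fintype.card τ' * (2⁻¹ : ℝ≥0∞) ^ M :=
              Finset.sum_le_sum_of_subset (Finset.subset_univ _)
          _ = _ := by simp; ring
    _ = ∑ l : τ' → Bool, Fintype.card τ * (2⁻¹ : ℝ≥0∞) ^ M := by simp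

/-- restriction to the first k bits -/
def rs (k : ℕ) (z : ℕ → Bool) : Fin k → Bool := fun i => z i

lemma rs_eq_iff {k : ℕ} {z w : ℕ → Bool} : rs k z = rs k w ↔ ∀ i < k, z i = w i := by
  constructor
  · intro h i hi; exact congrFun h ⟨i, hi⟩
  · intro h; funext i; exact h i i.2

lemma rs_cont (k : ℕ) : Continuous (rs k) := continuous_pi fun _ => continuous_apply _

lemma rs_injOn_eventually (F : Finset (ℕ → Bool)) :
    ∀ᶠ k in Filter.atTop, InjOn (rs k) (F : Set (ℕ → Bool)) := by
  have : ∀ a ∈ F, ∀ b ∈ F, ∀ᶠ k in Filter.atTop, rs k a = rs k b → a = b := by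
    intro a _ b _
    by_cases h : a = b
    · simp [h]
    · obtain ⟨i, hi⟩ := Function.ne_iff.1 h
      filter_upwards [Filter.eventually_gt_atTop i] with k hk hab
      exact absurd (rs_eq_iff.1 hab i hk) hi
  have h2 := (Filter.eventually_all_finset F).2 fun a ha =>
    (Filter.eventually_all_finset F).2 fun b hb => this a ha b hb
  filter_upwards [h2] with k hk a ha b hb hab
  exact hk a ha b hb hab

lemma stage {X : Type*} [MeasurableSpace X] (μ : Measure X) [IsProbabilityMeasure μ]
    (K : X → Set (ℕ → Bool))
    (hinf : ∀ x, ∀ V, IsOpen V → (K x ∩ V).Nonempty → (K x ∩ V).Infinite)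
    (hm : ∀ V, IsOpen V → MeasurableSet {x | (K x ∩ V).Nonempty})
    (e : X → Bool) (he : Measurable e) (k : ℕ) (ε : ℝ≥0∞) (hε : ε ≠ 0) :
    ∃ k' > k, ∃ l : (Fin k' → Bool) → Bool,
      μ {x | ∃ z ∈ K x, ∀ w ∈ K x, rs k w = rs k z → l (rs k' w) ≠ e x} ≤ ε := by
  classical
  have hM : ∃ M : ℕ, (Fintype.card (Fin k → Bool) : ℝ≥0∞) * 2⁻¹ ^ M ≤ ε / 2 := by
    have h1 : Filter.Tendsto (fun M : ℕ => (Fintype.card (Fin k → Bool) : ℝ≥0∞) * 2⁻¹ ^ M)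
        Filter.atTop (nhds 0) := by
      have := ENNReal.Tendsto.const_mul (a := (Fintype.card (Fin k → Bool) : ℝ≥0∞))
        (ENNReal.tendsto_pow_atTop_nhds_zero_of_lt_one (r := 2⁻¹) (by simp))
        (Or.inr (ENNReal.natCast_ne_top _))
      simpa using this
    exact ((h1.eventually (gt_mem_nhds (by simpa using hε : (0:ℝ≥0∞) < ε / 2))).exists).imp
      fun _ h => h.le
  obtain ⟨M, hM⟩ := hM
  let T : ∀ k', X → Set (Fin k' → Bool) := fun k' x => rs k' '' K x
  have hT : ∀ k' t, MeasurableSet {x | t ∈ T k' x} := by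
    intro k' t
    have := hm (rs k' ⁻¹' {t}) ((isOpen_discrete _).preimage (rs_cont k'))
    convert this using 1
    ext x
    rfl
  let G : ℕ → Set X := fun k' =>
    {x | ∀ z ∈ K x, M ≤ {t ∈ T k' x | ∃ w ∈ K x, rs k w = rs k z ∧ rs k' w = t}.ncard}
  have hG : ∀ x, ∀ᶠ k' in Filter.atTop, x ∈ G k' := by
    intro x
    have : ∀ v : Fin k → Bool, ∀ᶠ k' in Filter.atTop, ∀ z ∈ K x, rs k z = v →
        M ≤ {t ∈ T k' x | ∃ w ∈ K x, rs k w = rs k z ∧ rs k' w = t}.ncard := by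
      intro v
      by_cases hv : ∃ z ∈ K x, rs k z = v
      · obtain ⟨z, hz, hzv⟩ := hv
        have hi := hinf x (rs k ⁻¹' {v}) ((isOpen_discrete _).preimage (rs_cont k)) ⟨z, hz, hzv⟩
        obtain ⟨F, hF, hFM⟩ := hi.exists_subset_card_eq M
        filter_upwards [rs_injOn_eventually F] with k' hk' y hy hyv
        rw [← hFM, ← Set.ncard_coe_finset, ← hk'.ncard_image]
        refine Set.ncard_le_ncard ?_ (Set.toFinite _)
        rintro _ ⟨w, hw, rfl⟩
        have := hF hw
        exact ⟨⟨w, this.1, rfl⟩, w, this.1, by rw [hyv]; exact this.2, rfl⟩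
      · exact Filter.Eventually.of_forall fun k' z hz hzv => absurd ⟨z, hz, hzv⟩ hv
    filter_upwards [Filter.eventually_all.2 this] with k' h z hz
    exact h _ z hz rfl
  -- projection
  let ρ : ∀ k', k < k' → (Fin k' → Bool) → (Fin k → Bool) := fun k' h t i => t (Fin.castLE h.le i)
  have hρ : ∀ k' h z, ρ k' h (rs k' z) = rs k z := fun _ _ _ => rfl
  have hGeq : ∀ k' (h : k < k'), G k' = {x | ∀ u ∈ T k' x,
      M ≤ {t ∈ T k' x | ρ k' h t = ρ k' h u}.ncard} := by
    intro k' h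
    ext x
    have : ∀ z, {t ∈ T k' x | ∃ w ∈ K x, rs k w = rs k z ∧ rs k' w = t}
        = {t ∈ T k' x | ρ k' h t = ρ k' h (rs k' z)} := by
      intro z
      ext t
      constructor
      · rintro ⟨h1, w, hw, hwz, rfl⟩; exact ⟨h1, hwz⟩
      · rintro ⟨⟨w, hw, rfl⟩, h2⟩; exact ⟨⟨w, hw, rfl⟩, w, hw, h2, rfl⟩
    constructor
    · rintro hx _ ⟨z, hz, rfl⟩
      rw [← this]; exact hx z hz
    · intro hx z hz
      rw [this]; exact hx _ ⟨z, hz, rfl⟩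
  have hGm : ∀ k', k < k' → MeasurableSet (G k') := by
    intro k' h
    rw [hGeq k' h]
    have hTm : Measurable (T k') := measurable_set_iff.2 fun t => measurableSet_setOfPred.1 (hT k' t)
    have : MeasurableSingletonClass (Set (Fin k' → Bool)) :=
      inferInstanceAs (MeasurableSingletonClass ((Fin k' → Bool) → Prop))
    exact hTm (Set.toFinite {p : Set (Fin k' → Bool) |
      ∀ u ∈ p, M ≤ {t ∈ p | ρ k' h t = ρ k' h u}.ncard}).measurableSet
  have hlim : Filter.Tendsto (fun k' => μ (G k')ᶜ) Filter.atTop (nhds 0) := by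
    have h1 : Filter.Tendsto (fun n => μ (G (n + (k+1)))ᶜ) Filter.atTop (nhds (μ ∅)) := by
      refine tendsto_measure_of_tendsto_indicator_of_isFiniteMeasure (L := Filter.atTop) μ
        (fun n => (hGm _ (by omega)).compl) ?_
      intro x
      have := (Filter.tendsto_add_atTop_nat (k+1)).eventually (hG x)
      filter_upwards [this] with n hn
      simpa using hn
    rw [measure_empty] at h1
    exact (Filter.tendsto_add_atTop_iff_nat (f := fun k' => μ (G k')ᶜ) (k+1)).1 h1
  obtain ⟨k', hk', hkk⟩ := ((hlim.eventually
    (gt_mem_nhds (by simpa using hε : (0:ℝ≥0∞) < ε / 2))).and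
    (Filter.eventually_gt_atTop k)).exists
  obtain ⟨l, hl⟩ := avg μ (ρ k' hkk) (T k') (hT k') e he M
  refine ⟨k', hkk, l, ?_⟩
  rw [← hGeq k' hkk] at hl
  calc _ ≤ μ (({x | ∃ u ∈ T k' x, ∀ t ∈ T k' x, ρ k' hkk t = ρ k' hkk u → l t ≠ e x} ∩ G k')
        ∪ (G k')ᶜ) := by
        refine measure_mono ?_
        rintro x ⟨z, hz, hx⟩
        by_cases hxG : x ∈ G k'
        · left
          refine ⟨⟨_, ⟨z, hz, rfl⟩, ?_⟩, hxG⟩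
          rintro _ ⟨w, hw, rfl⟩ hwz
          exact hx w hw hwz
        · exact Or.inr hxG
    _ ≤ _ := measure_union_le _ _
    _ ≤ ε / 2 + ε / 2 := add_le_add (hl.trans hM) hk'.le
    _ = ε := ENNReal.add_halves ε

lemma hit {X : Type*} [MeasurableSpace X] (μ : Measure X) [IsProbabilityMeasure μ]
    (K : X → Set (ℕ → Bool)) (hne : ∀ x, (K x).Nonempty) (hcl : ∀ x, IsClosed (K x))
    (hinf : ∀ x, ∀ V, IsOpen V → (K x ∩ V).Nonempty → (K x ∩ V).Infinite)
    (hm : ∀ V, IsOpen V → MeasurableSet {x | (K x ∩ V).Nonempty})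
    (b : X → ℕ → Bool) (hb : Measurable b) :
    ∃ H : (ℕ → Bool) → (ℕ → Bool), Measurable H ∧
      ∀ᵐ x ∂μ, ∃ z ∈ K x, ∀ᶠ n in Filter.atTop, H z n = b x n := by
  have hst := fun n k => stage μ K hinf hm (fun x => b x n) ((measurable_pi_apply n).comp hb) k
    ((2⁻¹ : ℝ≥0∞) ^ n) (by simp)
  choose k' hk' l hl using hst
  let kk : ℕ → ℕ := fun n => Nat.rec 0 (fun n k => k' n k) n
  have hkk : ∀ n, kk (n+1) = k' n (kk n) := fun _ => rfl
  have hmono : StrictMono kk := strictMono_nat_of_lt_succ fun n => by rw [hkk]; exact hk' _ _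
  let H : (ℕ → Bool) → (ℕ → Bool) := fun z n => l n (kk n) (rs (k' n (kk n)) z)
  refine ⟨H, ?_, ?_⟩
  · refine measurable_pi_iff.2 fun n => ?_
    exact (measurable_of_finite _).comp (rs_cont _).measurable
  have hbc := measure_setOfPred_frequently_eq_zero (μ := μ)
    (p := fun n x => ∃ z ∈ K x, ∀ w ∈ K x, rs (kk n) w = rs (kk n) z →
      l n (kk n) (rs (k' n (kk n)) w) ≠ b x n) (by
      refine ne_top_of_le_ne_top ?_ (ENNReal.tsum_le_tsum fun n => hl n (kk n))
      rw [ENNReal.tsum_geometric]; simp)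
  filter_upwards [compl_mem_ae_iff.2 hbc] with x hx
  have hx' : ∀ᶠ n in Filter.atTop, ∀ z ∈ K x, ∃ w ∈ K x, rs (kk n) w = rs (kk n) z ∧
      H w n = b x n := by
    have : ¬ ∃ᶠ n in Filter.atTop, ∃ z ∈ K x, ∀ w ∈ K x, rs (kk n) w = rs (kk n) z →
      l n (kk n) (rs (k' n (kk n)) w) ≠ b x n := hx
    rw [Filter.not_frequently] at this
    filter_upwards [this] with n hn
    push Not at hn
    exact hn
  obtain ⟨N, hN⟩ := Filter.eventually_atTop.1 hx'
  obtain ⟨z0, hz0⟩ := hne x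
  choose w hwK hw1 hw2 using fun n z hz => hN (N + n) (Nat.le_add_right _ _) z hz
  let z : ℕ → K x := fun n => Nat.rec ⟨z0, hz0⟩ (fun n z => ⟨w n z.1 z.2, hwK n z.1 z.2⟩) n
  have hz1 : ∀ n, rs (kk (N+n)) (z (n+1)).1 = rs (kk (N+n)) (z n).1 := fun n => hw1 n _ (z n).2
  have hz2 : ∀ n, H (z (n+1)).1 (N+n) = b x (N+n) := fun n => hw2 n _ (z n).2
  have hz3 : ∀ n m, n ≤ m → ∀ i < kk (N+n), (z m).1 i = (z n).1 i := by
    intro n m hnm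
    induction m, hnm using Nat.le_induction with
    | base => intros; rfl
    | succ m hm ih =>
      intro i hi
      rw [← ih i hi]
      exact rs_eq_iff.1 (hz1 m) i (hi.trans_le (hmono.monotone (by omega)))
  let y : ℕ → Bool := fun i => (z (i+1)).1 i
  have hy : ∀ n, ∀ i < kk (N+n), y i = (z n).1 i := by
    intro n i hi
    have hi2 : i < kk (N + (i+1)) := lt_of_lt_of_le (by omega : i < N + (i+1)) (hmono.id_le _)
    rcases le_total n (i+1) with h | h
    · exact hz3 n (i+1) h i hi
    · exact (hz3 (i+1) n h i hi2).symm
  have hlim : Filter.Tendsto (fun n => (z n).1) Filter.atTop (nhds y) := by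
    rw [tendsto_pi_nhds]
    intro i
    refine tendsto_const_nhds.congr' ?_
    filter_upwards [Filter.eventually_gt_atTop i] with n hn
    exact hy n i (lt_of_lt_of_le (by omega : i < N + n) (hmono.id_le _))
  refine ⟨y, (hcl x).mem_of_tendsto hlim (Filter.Eventually.of_forall fun n => (z n).2), ?_⟩
  refine Filter.eventually_atTop.2 ⟨N, fun n hn => ?_⟩
  obtain ⟨m, rfl⟩ := Nat.exists_eq_add_of_le hn
  rw [← hz2 m]
  have : rs (kk (N+(m+1))) y = rs (kk (N+(m+1))) (z (m+1)).1 := rs_eq_iff.2 (hy (m+1))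
  exact congrArg (l (N+m) (kk (N+m))) this
lemma polish_cm (P : Type*) [TopologicalSpace P] [PolishSpace P] :
    PolishSpace C(ℕ → Bool, P) := by
  let := TopologicalSpace.upgradeIsCompletelyMetrizable P
  have : SecondCountableTopology C(ℕ → Bool, P) := inferInstance
  have : CompleteSpace C(ℕ → Bool, P) := inferInstance
  infer_instance

/-- Proposition 2.3: Borel selection `φ` with graph in `A` such that
`x ↦ f(x, φ(x))` is injective. -/
theorem statement2 {X Y Z : Type} [MeasurableSpace X] [StandardBorelSpace X]
    [MeasurableSpace Y] [StandardBorelSpace Y]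
    [MeasurableSpace Z] [StandardBorelSpace Z]
    (μ : Measure X) [IsProbabilityMeasure μ]
    (f : X × Y → Z) (hf : Measurable f)
    (A : Set (X × Y)) (hA : MeasurableSet A)
    (hfib : ∀ x : X, ¬ ((fun y => f (x, y)) '' {y : Y | (x, y) ∈ A}).Countable) :
    ∃ X' : Set X, MeasurableSet X' ∧ μ X'ᶜ = 0 ∧
      ∃ φ : X' → Y, Measurable φ ∧ (∀ x : X', ((x : X), φ x) ∈ A) ∧
        Function.Injective (fun x : X' => f ((x : X), φ x)) := by
  obtain ⟨e, he, hei⟩ := MeasurableSpace.measurable_injection_nat_bool_of_countablySeparated X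
  obtain ⟨d, hd, hdi⟩ := MeasurableSpace.measurable_injection_nat_bool_of_countablySeparated Z
  let := upgradeStandardBorel X
  let := upgradeStandardBorel Y
  -- parametrise the graph
  let Γ : Set ((X × Y) × (ℕ → Bool)) := {p | p.1 ∈ A ∧ d (f p.1) = p.2}
  have hΓ : MeasurableSet Γ :=
    (measurable_fst hA).inter
      (measurableSet_eq_fun (hd.comp (hf.comp measurable_fst)) measurable_snd)
  have : ∀ _ : ℕ, TopologicalSpace.IsCompletelyMetrizableSpace Bool := fun _ =>
    TopologicalSpace.IsCompletelyMetrizableSpace.discrete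
  have : TopologicalSpace.IsCompletelyMetrizableSpace (ℕ → Bool) :=
    TopologicalSpace.IsCompletelyMetrizableSpace.pi_countable
  have : PolishSpace (ℕ → Bool) := {}
  have han := hΓ.analyticSet
  rw [AnalyticSet] at han
  have hXne : Nonempty X := by
    by_contra h
    rw [not_nonempty_iff] at h
    exact IsProbabilityMeasure.ne_zero μ (Measure.eq_zero_of_isEmpty μ)
  obtain ⟨γ, hγ, hγr⟩ : ∃ γ : (ℕ → ℕ) → ((X × Y) × (ℕ → Bool)), Continuous γ ∧ range γ = Γ := by
    rcases han with h | h
    · exfalso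
      obtain ⟨x⟩ := hXne
      apply hfib x
      have : {y : Y | (x, y) ∈ A} = ∅ := by
        ext y
        simp only [mem_ofPred_eq, mem_empty_iff_false, iff_false]
        intro hy
        have : ((x, y), d (f (x, y))) ∈ Γ := ⟨hy, rfl⟩
        rw [h] at this; exact this
      rw [this]; simp
    · exact h
  have hγΓ : ∀ a, γ a ∈ Γ := fun a => hγr ▸ mem_range_self a
  let p : (ℕ → ℕ) → X := fun a => (γ a).1.1
  let q : (ℕ → ℕ) → (ℕ → Bool) := fun a => (γ a).2
  have hp : Continuous p := continuous_fst.comp (continuous_fst.comp hγ)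
  have hq : Continuous q := continuous_snd.comp hγ
  -- Cantor maps in each fibre
  have hcan : ∀ x, ∃ g : C(ℕ → Bool, ℕ → ℕ), (∀ c, p (g c) = x) ∧ NowhereConst q g := by
    intro x
    refine cantor_exists q hq (p ⁻¹' {x}) (isClosed_singleton.preimage hp) ?_
    intro hc
    apply hfib x
    refine (hc.preimage hdi).mono ?_
    rintro _ ⟨y, hy, rfl⟩
    have : ((x, y), d (f (x, y))) ∈ Γ := ⟨hy, rfl⟩
    rw [← hγr] at this
    obtain ⟨a, ha⟩ := this
    exact ⟨a, by simp [p, ha], by simp [q, ha]⟩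
  let mC : MeasurableSpace C(ℕ → Bool, ℕ → ℕ) := borel _
  have : BorelSpace C(ℕ → Bool, ℕ → ℕ) := ⟨rfl⟩
  have hPol : PolishSpace C(ℕ → Bool, ℕ → ℕ) := by
    exact polish_cm _
  let B1 : Set (X × C(ℕ → Bool, ℕ → ℕ)) :=
    {w | (∀ c, p (w.2 c) = w.1) ∧ NowhereConst q w.2}
  have hB1 : MeasurableSet B1 := by
    have h1 : IsClosed {w : X × C(ℕ → Bool, ℕ → ℕ) | ∀ c, p (w.2 c) = w.1} := by
      have : {w : X × C(ℕ → Bool, ℕ → ℕ) | ∀ c, p (w.2 c) = w.1}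
        = ⋂ c, {w : X × C(ℕ → Bool, ℕ → ℕ) | p (w.2 c) = w.1} := by ext; simp
      rw [this]
      refine isClosed_iInter fun c => isClosed_eq ?_ continuous_fst
      exact hp.comp ((ContinuousEvalConst.continuous_eval_const c).comp continuous_snd)
    have h2 : MeasurableSet {g : C(ℕ → Bool, ℕ → ℕ) | NowhereConst q g} := by
      have : {g : C(ℕ → Bool, ℕ → ℕ) | NowhereConst q g}
        = ⋂ U : TopologicalSpace.countableBasis (ℕ → Bool),
          {g : C(ℕ → Bool, ℕ → ℕ) | ∃ a ∈ U.1, ∃ b ∈ U.1, q (g a) ≠ q (g b)} := by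
        ext; simp [NowhereConst]
      rw [this]
      have : Countable (TopologicalSpace.countableBasis (ℕ → Bool)) :=
        (TopologicalSpace.countable_countableBasis _).to_subtype
      exact MeasurableSet.iInter fun U => (isOpen_nonconst q hq U.1).measurableSet
    exact h1.measurableSet.inter (measurable_snd h2)
  obtain ⟨g0, hg0, hg0B⟩ := sel_ae μ B1 hB1 (Filter.Eventually.of_forall hcan)
  -- a nowhere constant default map
  obtain ⟨gd, -, hgd⟩ := hcan (Classical.arbitrary X)
  classical
  let g : X → C(ℕ → Bool, ℕ → ℕ) := fun x => if NowhereConst q (g0 x) then g0 x else gd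
  have hNC : MeasurableSet {g : C(ℕ → Bool, ℕ → ℕ) | NowhereConst q g} := by
    have : {g : C(ℕ → Bool, ℕ → ℕ) | NowhereConst q g}
      = ⋂ U : TopologicalSpace.countableBasis (ℕ → Bool),
        {g : C(ℕ → Bool, ℕ → ℕ) | ∃ a ∈ U.1, ∃ b ∈ U.1, q (g a) ≠ q (g b)} := by
      ext; simp [NowhereConst]
    rw [this]
    have : Countable (TopologicalSpace.countableBasis (ℕ → Bool)) :=
      (TopologicalSpace.countable_countableBasis _).to_subtype
    exact MeasurableSet.iInter fun U => (isOpen_nonconst q hq U.1).measurableSet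
  have hg : Measurable g := Measurable.ite (hg0 hNC) hg0 measurable_const
  have hgN : ∀ x, NowhereConst q (g x) := by
    intro x
    by_cases h : NowhereConst q (g0 x)
    · simp only [g, h, if_true]
    · simp only [g, h, if_false]; exact hgd
  have hgp : ∀ᵐ x ∂μ, ∀ c, p (g x c) = x := by
    filter_upwards [hg0B] with x hx c
    have : g x = g0 x := if_pos hx.2
    rw [this]; exact hx.1 c
  -- hitting
  obtain ⟨H, hH, hHx⟩ := hit μ (fun x => range (q ∘ g x)) (fun x => range_nonempty _)
    (fun x => (isCompact_range (hq.comp (g x).continuous)).isClosed)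
    (fun x V hV hne => nowhereConst_infinite q hq (g x) (hgN x) V hV hne)
    (fun V hV => by
      have : {x | (range (q ∘ g x) ∩ V).Nonempty}
          = g ⁻¹' (⋃ c, {h : C(ℕ → Bool, ℕ → ℕ) | q (h c) ∈ V}) := by
        ext x
        simp only [mem_ofPred_eq, mem_preimage, mem_iUnion]
        constructor
        · rintro ⟨_, ⟨c, rfl⟩, hc⟩; exact ⟨c, hc⟩
        · rintro ⟨c, hc⟩; exact ⟨_, ⟨c, rfl⟩, hc⟩
      rw [this]
      refine hg (IsOpen.measurableSet (isOpen_iUnion fun c => ?_))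
      exact hV.preimage (hq.comp (ContinuousEvalConst.continuous_eval_const c)))
    (fun x n => e x n.unpair.1)
    (measurable_pi_iff.2 fun n => (measurable_pi_apply _).comp he)
  -- second selection
  let B2 : Set (X × Y) := {w | w ∈ A ∧ ∀ᶠ n in Filter.atTop, H (d (f w)) n = e w.1 n.unpair.1}
  have hB2 : MeasurableSet B2 := by
    refine hA.inter ?_
    have : {w : X × Y | ∀ᶠ n in Filter.atTop, H (d (f w)) n = e w.1 n.unpair.1}
      = ⋃ N : ℕ, ⋂ n : ℕ, ⋂ _ : N ≤ n, {w : X × Y | H (d (f w)) n = e w.1 n.unpair.1} := by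
      ext w
      simp [Filter.eventually_atTop]
    change MeasurableSet {w : X × Y | ∀ᶠ n in Filter.atTop, H (d (f w)) n = e w.1 n.unpair.1}
    rw [this]
    refine MeasurableSet.iUnion fun N => MeasurableSet.iInter fun n => MeasurableSet.iInter fun _ =>
      measurableSet_eq_fun ?_ ?_
    · exact (measurable_pi_apply n).comp (hH.comp (hd.comp hf))
    · exact (measurable_pi_apply _).comp (he.comp measurable_fst)
  obtain ⟨s, hs, hsB⟩ := sel_ae μ B2 hB2 (by
    filter_upwards [hgp, hHx] with x hx1 ⟨z, ⟨c, hc⟩, hz⟩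
    have h1 := hγΓ (g x c)
    have h2 : (γ (g x c)).1.1 = x := hx1 c
    have h3 : (γ (g x c)).2 = z := hc
    refine ⟨(γ (g x c)).1.2, ?_⟩
    have h4 : (x, (γ (g x c)).1.2) = (γ (g x c)).1 := Prod.ext h2.symm rfl
    rw [h4]
    refine ⟨h1.1, ?_⟩
    rw [h1.2, h3, h2]
    exact hz)
  let X' : Set X := {x | (x, s x) ∈ B2}
  refine ⟨X', (measurable_id.prodMk hs) hB2, hsB, fun x => s x,
    hs.comp measurable_subtype_coe, fun x => x.2.1, ?_⟩
  intro x x' hxx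
  have hxx : f ((x : X), s x) = f ((x' : X), s x') := hxx
  apply Subtype.ext
  apply hei
  funext i
  have h1 := x.2.2
  have h2 := x'.2.2
  simp only at h1 h2
  rw [← hxx] at h2
  obtain ⟨N, hN⟩ := Filter.eventually_atTop.1 (h1.and h2)
  have := hN (Nat.pair i N) (Nat.right_le_pair i N)
  simp only [Nat.unpair_pair] at this
  exact this.1.symm.trans this.2
end

section
/- Let X be a standard Borel space, let G be a countable discrete group acting on X by Borel automorphisms, let Σ be a countably generated sub-σ-algebra of the Borel σ-algebra of X, and let A ⊆ X be Borel. If for every G-invariant ergodic Borel probability measure ν on X there exists B ∈ Σ with ν(A △ B) = 0, then for every G-invariant Borel probability measure μ on X there exists C in the σ-algebra generated by I_G ∪ Σ with μ(A △ C) = 0. -/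
open MeasureTheory Set Function
open scoped ENNReal symmDiff

theorem measurableSet_invSigma_iff {G X : Type*} [Group G] [MulAction G X] [MeasurableSpace X]
    (A : Set X) : MeasurableSet[invSigma G X] A ↔
      MeasurableSet A ∧ ∀ g : G, (fun x => g • x) ⁻¹' A = A := by
  constructor
  · intro h
    refine MeasurableSpace.generateFrom_induction
      (p := fun A _ => MeasurableSet A ∧ ∀ g : G, (fun x => g • x) ⁻¹' A = A) _
      ?_ ?_ ?_ ?_ A h
    · intro t ht _
      exact ht
    · simp
    · rintro t _ ⟨h1, h2⟩
      exact ⟨h1.compl, fun g => by rw [preimage_compl, h2 g]⟩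
    · intro s _ hs
      refine ⟨MeasurableSet.iUnion fun n => (hs n).1, fun g => ?_⟩
      rw [preimage_iUnion]
      exact iUnion_congr fun n => (hs n).2 g
  · intro h
    exact MeasurableSpace.measurableSet_generateFrom h

theorem invSigma_le {G X : Type*} [Group G] [MulAction G X] [mX : MeasurableSpace X] :
    invSigma G X ≤ mX := fun A hA => ((measurableSet_invSigma_iff A).1 hA).1

/-- `κ` is a disintegration of `μ` over the invariant σ-algebra. -/
structure InvDis (G : Type*) {X : Type*} [Group G] [MulAction G X] [MeasurableSpace X]
    (μ : Measure X) (κ : X → Measure X) : Prop where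
  prob : ∀ y, IsProbabilityMeasure (κ y)
  meas : ∀ B, MeasurableSet B → Measurable[invSigma G X] (fun y => κ y B)
  int : ∀ D B, MeasurableSet[invSigma G X] D → MeasurableSet B →
    ∫⁻ y in D, κ y B ∂μ = μ (D ∩ B)

theorem exists_invDis (G : Type*) {X : Type*} [Group G] [MulAction G X] [mX : MeasurableSpace X]
    [StandardBorelSpace X] (μ : Measure X) [IsProbabilityMeasure μ] :
    ∃ κ, InvDis G μ κ := by
  have hm : invSigma G X ≤ mX := invSigma_le
  refine ⟨fun y => ProbabilityTheory.condExpKernel μ (invSigma G X) y, ?_, ?_, ?_⟩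
  · intro y; infer_instance
  · intro B hB
    exact ProbabilityTheory.measurable_condExpKernel hB
  · intro D B hD hB
    have h := ProbabilityTheory.compProd_trim_condExpKernel (μ := μ) hm
    have h2 := congrArg (fun ρ => ρ (D ×ˢ B)) h
    rw [Measure.compProd_apply_prod hD hB, Measure.map_apply, restrict_trim hm _ hD,
      lintegral_trim hm] at h2
    · rw [h2]; congr 1
    · exact ProbabilityTheory.measurable_condExpKernel hB
    · exact (measurable_id'' hm).prodMk measurable_id
    · exact hD.prod hB

namespace InvDis

variable {G X : Type*} [Group G] [MulAction G X] [mX : MeasurableSpace X]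
  {μ : Measure X} {κ : X → Measure X}

theorem measurable' (h : InvDis G μ κ) : Measurable κ :=
  Measure.measurable_of_measurable_coe _ fun B hB => (h.meas B hB).mono invSigma_le le_rfl

theorem bind_eq (h : InvDis G μ κ) : μ.bind κ = μ := by
  ext B hB
  rw [Measure.bind_apply hB h.measurable'.aemeasurable]
  simpa using h.int univ B MeasurableSet.univ hB

theorem lintegral_eq (h : InvDis G μ κ) {F : X → ℝ≥0∞} (hF : Measurable F) :
    ∫⁻ y, ∫⁻ x, F x ∂(κ y) ∂μ = ∫⁻ x, F x ∂μ := by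
  conv_rhs => rw [← h.bind_eq]
  rw [Measure.lintegral_bind h.measurable'.aemeasurable hF.aemeasurable]

/-- uniqueness principle -/
theorem ae_eq (_h : InvDis G μ κ) [IsProbabilityMeasure μ] {F F' : X → ℝ≥0∞}
    (hF : Measurable[invSigma G X] F) (hF' : Measurable[invSigma G X] F')
    (hh : ∀ D, MeasurableSet[invSigma G X] D → ∫⁻ y in D, F y ∂μ = ∫⁻ y in D, F' y ∂μ) :
    ∀ᵐ y ∂μ, F y = F' y := by
  have hm : invSigma G X ≤ mX := invSigma_le
  have : F =ᵐ[μ.trim hm] F' := by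
    refine ae_eq_of_forall_setLIntegral_eq_of_sigmaFinite hF hF' fun D hD _ => ?_
    rw [restrict_trim hm _ hD, lintegral_trim hm hF, lintegral_trim hm hF']
    exact hh D hD
  exact ae_eq_of_ae_eq_trim this

theorem ae_pmp (h : InvDis G μ κ) [IsProbabilityMeasure μ] [Countable G] [StandardBorelSpace X]
    (hmeas : ∀ g : G, Measurable (fun x : X => g • x)) (hμ : IsPmp G μ) :
    ∀ᵐ y ∂μ, IsPmp G (κ y) := by
  let C := generateSetAlgebra (MeasurableSpace.countableGeneratingSet X)
  have hC : C.Countable := countable_generateSetAlgebra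
    (MeasurableSpace.countable_countableGeneratingSet (α := X))
  have hgen : mX = MeasurableSpace.generateFrom C := by
    rw [generateFrom_generateSetAlgebra_eq, MeasurableSpace.generateFrom_countableGeneratingSet]
  have hCm : ∀ B ∈ C, MeasurableSet B := fun B hB => by
    rw [hgen]; exact MeasurableSpace.measurableSet_generateFrom hB
  have key : ∀ g : G, ∀ B ∈ C, ∀ᵐ y ∂μ, κ y ((fun x => g • x) ⁻¹' B) = κ y B := by
    intro g B hB
    refine h.ae_eq (h.meas _ (hmeas g (hCm B hB))) (h.meas _ (hCm B hB)) fun D hD => ?_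
    rw [h.int _ _ hD (hmeas g (hCm B hB)), h.int _ _ hD (hCm B hB)]
    have hD' := (measurableSet_invSigma_iff D).1 hD
    rw [← (hμ g).measure_preimage (hD'.1.inter (hCm B hB)).nullMeasurableSet, preimage_inter,
      hD'.2 g]
  have key2 : ∀ᵐ y ∂μ, ∀ g : G, ∀ B ∈ C, κ y ((fun x => g • x) ⁻¹' B) = κ y B := by
    rw [ae_all_iff]
    intro g
    rw [ae_ball_iff hC]
    exact key g
  filter_upwards [key2] with y hy g
  refine ⟨hmeas g, ?_⟩
  have := h.prob y
  have : IsProbabilityMeasure (Measure.map (fun x => g • x) (κ y)) :=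
    Measure.isProbabilityMeasure_map (hmeas g).aemeasurable
  refine ext_of_generate_finite C hgen ?_ ?_ ?_
  · intro s hs t ht _
    exact isSetAlgebra_generateSetAlgebra.inter_mem hs ht
  · intro B hB
    rw [Measure.map_apply (hmeas g) (hCm B hB)]
    exact hy g B hB
  · simp

theorem ae_const (h : InvDis G μ κ) [IsProbabilityMeasure μ] {v : X → ℝ}
    (hv : Measurable[invSigma G X] v) : ∀ᵐ y ∂μ, ∀ᵐ x ∂(κ y), v x = v y := by
  have h1 : ∀ q : ℚ, ∀ᵐ y ∂μ, κ y {x | v x < q} = {x | v x < q}.indicator 1 y := by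
    intro q
    have hs : MeasurableSet[invSigma G X] {x | v x < q} := hv measurableSet_Iio
    refine h.ae_eq (h.meas _ (invSigma_le _ hs)) ((@measurable_const _ _ _ (invSigma G X) 1).indicator hs) fun D hD => ?_
    rw [h.int _ _ hD (invSigma_le _ hs), lintegral_indicator_one (invSigma_le _ hs),
      Measure.restrict_apply (invSigma_le _ hs), inter_comm]
  filter_upwards [ae_all_iff.2 h1] with y hy
  have := h.prob y
  have h2 : ∀ q : ℚ, ∀ᵐ x ∂(κ y), (v x < q ↔ v y < q) := by
    intro q
    have hs : MeasurableSet {x | v x < q} := invSigma_le (G := G) _ (hv measurableSet_Iio)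
    by_cases hq : v y < q
    · have : κ y {x | v x < q} = 1 := by rw [hy q]; simp [hq]
      have h3 : ∀ᵐ x ∂(κ y), v x < q := by
        rw [← prob_compl_eq_zero_iff hs] at this
        exact this
      filter_upwards [h3] with x hx using by simp [hx, hq]
    · have : κ y {x | v x < q} = 0 := by rw [hy q]; simp [hq]
      have h3 : ∀ᵐ x ∂(κ y), ¬ v x < q := by
        rw [ae_iff]; simpa using this
      filter_upwards [h3] with x hx using by simp [hx, hq]
  filter_upwards [ae_all_iff.2 h2] with x hx
  rcases lt_trichotomy (v x) (v y) with hlt | heq | hgt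
  · obtain ⟨q, hq1, hq2⟩ := exists_rat_btwn hlt
    exact absurd ((hx q).1 hq1) (not_lt.2 hq2.le)
  · exact heq
  · obtain ⟨q, hq1, hq2⟩ := exists_rat_btwn hgt
    exact absurd ((hx q).2 hq1) (not_lt.2 hq2.le)

end InvDis

/-- Functions that integrate to zero over each invariant set for each invariant measure. -/
def IsCobound (G : Type*) {X : Type*} [Group G] [MulAction G X] [MeasurableSpace X]
    (φ : X → ℝ) : Prop :=
  Measurable φ ∧ ∀ ν : Measure X, IsProbabilityMeasure ν → IsPmp G ν →
    Integrable φ ν ∧ ∀ D, MeasurableSet[invSigma G X] D → ∫ x in D, φ x ∂ν = 0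

theorem exists_invariant_approx {G X : Type*} [Group G] [Countable G] [MulAction G X]
    [mX : MeasurableSpace X] (hmeas : ∀ g : G, Measurable (fun x : X => g • x))
    (μ : Measure X) [IsProbabilityMeasure μ] (hμ : IsPmp G μ) {B : Set X}
    (hB : MeasurableSet B) :
    ∃ v : X → ℝ, Measurable[invSigma G X] v ∧ ∀ ε : ℝ, 0 < ε → ∃ φ : X → ℝ, IsCobound G φ ∧
      ∫⁻ x, ‖B.indicator (fun _ => (1 : ℝ)) x - v x - φ x‖ₑ ∂μ ≤ ENNReal.ofReal ε := by
  let U : G → (Lp ℝ 2 μ →ₗᵢ[ℝ] Lp ℝ 2 μ) := fun g =>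
    Lp.compMeasurePreservingₗᵢ ℝ (fun x => g • x) (hμ g)
  have hU : ∀ g (w : Lp ℝ 2 μ), U g w =ᵐ[μ] w ∘ (fun x => g • x) := fun g w =>
    Lp.coeFn_compMeasurePreserving w (hμ g)
  have hUU : ∀ g h (w : Lp ℝ 2 μ), U g (U h w) = U (h * g) w := by
    intro g h w
    apply Lp.ext
    have h1 := (hμ g).quasiMeasurePreserving.ae_eq_comp (hU h w)
    filter_upwards [hU g (U h w), hU (h * g) w, h1] with x hx1 hx2 hx3
    rw [hx1, hx2, hx3]
    simp [mul_smul]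
  have hU1 : ∀ w : Lp ℝ 2 μ, U 1 w = w := by
    intro w
    apply Lp.ext
    filter_upwards [hU 1 w] with x hx
    rw [hx]; simp
  have hBfin : μ B ≠ ∞ := measure_ne_top μ B
  let f : Lp ℝ 2 μ := indicatorConstLp 2 hB hBfin (1 : ℝ)
  let K0 : Submodule ℝ (Lp ℝ 2 μ) := Submodule.span ℝ (range fun g => U g f - f)
  let K : Submodule ℝ (Lp ℝ 2 μ) := K0.topologicalClosure
  have hKc : IsClosed (K : Set (Lp ℝ 2 μ)) := K0.isClosed_topologicalClosure
  have : CompleteSpace K := hKc.completeSpace_coe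
  have hgen : ∀ g, U g f - f ∈ K := fun g =>
    K0.le_topologicalClosure (Submodule.subset_span ⟨g, rfl⟩)
  have hK0 : ∀ g, K0 ≤ K.comap (U g).toLinearMap := by
    intro g
    refine Submodule.span_le.2 ?_
    rintro _ ⟨h, rfl⟩
    change U g (U h f - f) ∈ K
    have : U g (U h f - f) = (U (h * g) f - f) - (U g f - f) := by
      rw [map_sub, hUU]; abel
    rw [this]
    exact K.sub_mem (hgen _) (hgen _)
  have hKinv : ∀ g, ∀ w ∈ K, U g w ∈ K := by
    intro g
    have : K ≤ K.comap (U g).toLinearMap :=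
      K0.topologicalClosure_minimal (hK0 g) (hKc.preimage (U g).continuous)
    exact fun w hw => this hw
  have hKperp : ∀ g, ∀ w ∈ Kᗮ, U g w ∈ Kᗮ := by
    intro g w hw k hk
    have h1 : k = U g (U g⁻¹ k) := by rw [hUU]; simp [hU1]
    rw [h1, LinearIsometry.inner_map_map]
    exact hw _ (hKinv _ _ hk)
  let p : Lp ℝ 2 μ := K.starProjection f
  have hp : p ∈ K := Submodule.starProjection_apply_mem K f
  let w : Lp ℝ 2 μ := f - p
  have hw : w ∈ Kᗮ := Submodule.sub_starProjection_mem_orthogonal f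
  have hwinv : ∀ g, U g w = w := by
    intro g
    have h1 : U g w - w ∈ K := by
      have : U g w - w = (U g f - f) - (U g p - p) := by
        simp only [w, map_sub]; abel
      rw [this]
      exact K.sub_mem (hgen g) (K.sub_mem (hKinv g p hp) hp)
    have h2 : U g w - w ∈ Kᗮ := Kᗮ.sub_mem (hKperp g w hw) hw
    have h3 := h2 _ h1
    rw [inner_self_eq_zero] at h3
    exact sub_eq_zero.1 h3
  -- strictly invariant representative
  have hwm : Measurable (w : X → ℝ) := (Lp.stronglyMeasurable w).measurable
  let Y : Set X := {x | ∀ g : G, w (g • x) = w x}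
  have hYm : MeasurableSet Y := by
    have : Y = ⋂ g : G, {x | w (g • x) = w x} := by ext x; simp [Y]
    rw [this]
    exact MeasurableSet.iInter fun g => measurableSet_eq_fun (hwm.comp (hmeas g)) hwm
  have hYinv : ∀ g : G, ∀ x, g • x ∈ Y ↔ x ∈ Y := by
    have : ∀ g : G, ∀ x ∈ Y, g • x ∈ Y := by
      intro g x hx h
      rw [← mul_smul, hx (h * g), hx g]
    intro g x
    refine ⟨fun hx => ?_, this g x⟩
    simpa using this g⁻¹ _ hx
  have hYae : ∀ᵐ x ∂μ, x ∈ Y := by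
    refine ae_all_iff.2 fun g => ?_
    have h1 := hU g w
    rw [hwinv g] at h1
    filter_upwards [h1] with x hx using hx.symm
  let v : X → ℝ := Y.indicator w
  have hvm : Measurable v := hwm.indicator hYm
  have hvinv : ∀ g : G, ∀ x, v (g • x) = v x := by
    intro g x
    by_cases hx : x ∈ Y
    · have hx' := (hYinv g x).2 hx
      simp only [v, indicator_of_mem hx, indicator_of_mem hx']
      exact hx g
    · have hx' : g • x ∉ Y := fun h => hx ((hYinv g x).1 h)
      simp only [v, indicator_of_notMem hx, indicator_of_notMem hx']
  have hvw : v =ᵐ[μ] w := by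
    filter_upwards [hYae] with x hx using indicator_of_mem hx _
  refine ⟨v, ?_, ?_⟩
  · intro s hs
    refine (measurableSet_invSigma_iff _).2 ⟨hvm hs, fun g => ?_⟩
    ext x
    simp [hvinv]
  -- representatives of elements of the span
  have hind : Measurable (B.indicator (fun _ => (1 : ℝ))) := measurable_const.indicator hB
  have hfe : f =ᵐ[μ] B.indicator (fun _ => (1 : ℝ)) := indicatorConstLp_coeFn
  have hrep : ∀ k ∈ K0, ∃ φ : X → ℝ, IsCobound G φ ∧ k =ᵐ[μ] φ := by
    intro k hk
    induction hk using Submodule.span_induction with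
    | mem k hk =>
      obtain ⟨g, rfl⟩ := hk
      refine ⟨fun x => B.indicator (fun _ => (1 : ℝ)) (g • x) - B.indicator (fun _ => (1 : ℝ)) x,
        ⟨(hind.comp (hmeas g)).sub hind, fun ν hν hνp => ?_⟩, ?_⟩
      · have i1 : Integrable (B.indicator (fun _ => (1 : ℝ))) ν :=
          (integrable_const 1).indicator hB
        have i2 : Integrable (fun x => B.indicator (fun _ => (1 : ℝ)) (g • x)) ν :=
          (hνp g).integrable_comp_of_integrable i1
        refine ⟨i2.sub i1, fun D hD => ?_⟩
        have hD' := (measurableSet_invSigma_iff D).1 hD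
        rw [integral_sub i2.integrableOn i1.integrableOn, sub_eq_zero]
        have e2 : (fun x => B.indicator (fun _ => (1 : ℝ)) (g • x)) =
            ((fun x => g • x) ⁻¹' B).indicator (fun _ => (1 : ℝ)) := by
          ext x; rfl
        rw [e2, setIntegral_indicator (hmeas g hB), setIntegral_indicator hB,
          setIntegral_const, setIntegral_const]
        congr 1
        have := (hνp g).measure_preimage (hD'.1.inter hB).nullMeasurableSet
        rw [preimage_inter, hD'.2 g] at this
        simp only [measureReal_def, this]
      · have h1 := (hμ g).quasiMeasurePreserving.ae_eq_comp hfe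
        filter_upwards [Lp.coeFn_sub (U g f) f, hU g f, h1, hfe] with x h1 h2 h3 h4
        rw [h1, Pi.sub_apply, h2, h3, h4]
        rfl
    | zero =>
      refine ⟨fun _ => 0, ⟨measurable_const, fun ν hν hνp => ⟨by simp, by simp⟩⟩, ?_⟩
      exact Lp.coeFn_zero _ _ _
    | add a b _ _ ha hb =>
      obtain ⟨φ, hφ, hφe⟩ := ha
      obtain ⟨ψ, hψ, hψe⟩ := hb
      refine ⟨fun x => φ x + ψ x, ⟨hφ.1.add hψ.1, fun ν hν hνp => ?_⟩, ?_⟩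
      · obtain ⟨i1, j1⟩ := hφ.2 ν hν hνp
        obtain ⟨i2, j2⟩ := hψ.2 ν hν hνp
        refine ⟨i1.add i2, fun D hD => ?_⟩
        rw [integral_add i1.integrableOn i2.integrableOn, j1 D hD, j2 D hD, add_zero]
      · filter_upwards [Lp.coeFn_add a b, hφe, hψe] with x h1 h2 h3
        rw [h1, Pi.add_apply, h2, h3]
    | smul c a _ ha =>
      obtain ⟨φ, hφ, hφe⟩ := ha
      refine ⟨fun x => c * φ x, ⟨hφ.1.const_mul c, fun ν hν hνp => ?_⟩, ?_⟩
      · obtain ⟨i1, j1⟩ := hφ.2 ν hν hνp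
        refine ⟨i1.const_mul c, fun D hD => ?_⟩
        rw [integral_const_mul, j1 D hD, mul_zero]
      · filter_upwards [Lp.coeFn_smul c a, hφe] with x h1 h2
        rw [h1, Pi.smul_apply, h2, smul_eq_mul]
  intro ε hε
  have hpc : p ∈ closure (K0 : Set (Lp ℝ 2 μ)) := hp
  obtain ⟨k, hk, hdist⟩ := Metric.mem_closure_iff.1 hpc ε hε
  obtain ⟨φ, hφ, hφe⟩ := hrep k hk
  refine ⟨φ, hφ, ?_⟩
  have e1 : (fun x => B.indicator (fun _ => (1 : ℝ)) x - v x - φ x) =ᵐ[μ] (p - k : Lp ℝ 2 μ) := by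
    filter_upwards [Lp.coeFn_sub p k, Lp.coeFn_sub f p, hφe, hfe, hvw] with x h1 h2 h3 h4 h5
    rw [h1, Pi.sub_apply, h3, h5, ← h4]
    simp only [w]
    rw [h2, Pi.sub_apply]
    ring
  have e2 : ∫⁻ x, ‖B.indicator (fun _ => (1 : ℝ)) x - v x - φ x‖ₑ ∂μ
      = eLpNorm (p - k : Lp ℝ 2 μ) 1 μ := by
    rw [eLpNorm_one_eq_lintegral_enorm]
    exact lintegral_congr_ae (e1.mono fun x hx => congrArg (fun t => ‖t‖ₑ) hx)
  rw [e2]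
  calc eLpNorm (p - k : Lp ℝ 2 μ) 1 μ ≤ eLpNorm (p - k : Lp ℝ 2 μ) 2 μ :=
        eLpNorm_le_eLpNorm_of_exponent_le (by norm_num) (Lp.aestronglyMeasurable _)
    _ = ENNReal.ofReal ‖p - k‖ := by
        rw [Lp.norm_def, ENNReal.ofReal_toReal (Lp.eLpNorm_ne_top _)]
    _ ≤ ENNReal.ofReal ε := by
        rw [← dist_eq_norm]
        exact ENNReal.ofReal_le_ofReal hdist.le

namespace InvDis

variable {G X : Type*} [Group G] [MulAction G X] [mX : MeasurableSpace X]
  {μ : Measure X} {κ : X → Measure X}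

theorem ae_indep (h : InvDis G μ κ) [IsProbabilityMeasure μ] [Countable G]
    [StandardBorelSpace X]
    (hmeas : ∀ g : G, Measurable (fun x : X => g • x)) (hμ : IsPmp G μ) {B : Set X}
    (hB : MeasurableSet B) :
    ∀ᵐ y ∂μ, ∀ D, MeasurableSet[invSigma G X] D →
      (κ y).real (D ∩ B) = (κ y).real D * (κ y).real B := by
  obtain ⟨v, hv, happ⟩ := exists_invariant_approx hmeas μ hμ hB
  choose φ hφ hφe using fun n : ℕ => happ (1 / ((n : ℝ) + 1)) (by positivity)
  have hvm : Measurable v := hv.mono invSigma_le le_rfl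
  have hind : Measurable (B.indicator (fun _ => (1 : ℝ))) := measurable_const.indicator hB
  have hFm : ∀ n, Measurable (fun x => ‖B.indicator (fun _ => (1 : ℝ)) x - v x - φ n x‖ₑ) :=
    fun n => ((hind.sub hvm).sub (hφ n).1).enorm
  let F : ℕ → X → ℝ≥0∞ := fun n y =>
    ∫⁻ x, ‖B.indicator (fun _ => (1 : ℝ)) x - v x - φ n x‖ₑ ∂(κ y)
  have hF : ∀ n, Measurable (F n) := fun n =>
    (Measure.measurable_lintegral (hFm n)).comp h.measurable'
  have hFi : ∀ n : ℕ, ∫⁻ y, F n y ∂μ ≤ ENNReal.ofReal (1 / ((n : ℝ) + 1)) := fun n => by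
    simp only [F]
    rw [h.lintegral_eq (hFm n)]
    exact hφe n
  have hinf : ∀ᵐ y ∂μ, ⨅ n, F n y = 0 := by
    have h0 : ∫⁻ y, ⨅ n, F n y ∂μ = 0 := by
      have hle : ∀ n : ℕ, ∫⁻ y, ⨅ n, F n y ∂μ ≤ ENNReal.ofReal (1 / ((n : ℝ) + 1)) :=
        fun n => (lintegral_mono fun y => iInf_le _ n).trans (hFi n)
      have ht : Filter.Tendsto (fun n : ℕ => ENNReal.ofReal (1 / ((n : ℝ) + 1)))
          Filter.atTop (nhds 0) := by
        simpa using ENNReal.tendsto_ofReal (tendsto_one_div_add_atTop_nhds_zero_nat (𝕜 := ℝ))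
      exact le_antisymm (ge_of_tendsto' ht hle) zero_le
    rw [lintegral_eq_zero_iff (Measurable.iInf hF)] at h0
    exact h0
  filter_upwards [hinf, h.ae_pmp hmeas hμ, h.ae_const hv] with y hy1 hy2 hy3
  have hprob := h.prob y
  have key : ∀ D, MeasurableSet[invSigma G X] D →
      (κ y).real (D ∩ B) = v y * (κ y).real D := by
    intro D hD
    have hDm : MeasurableSet D := invSigma_le _ hD
    have hle : ∀ n, ‖(κ y).real (D ∩ B) - v y * (κ y).real D‖ₑ ≤ F n y := by
      intro n
      obtain ⟨i3, j3⟩ := (hφ n).2 (κ y) hprob hy2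
      have i1 : Integrable (B.indicator (fun _ => (1 : ℝ))) (κ y) :=
        (integrable_const 1).indicator hB
      have i2 : Integrable (fun _ : X => v y) (κ y) := integrable_const _
      have i12 : Integrable (fun x => B.indicator (fun _ => (1 : ℝ)) x - v y) (κ y) := i1.sub i2
      have e : ∫ x in D, (B.indicator (fun _ => (1 : ℝ)) x - v y - φ n x) ∂(κ y)
          = (κ y).real (D ∩ B) - v y * (κ y).real D := by
        rw [integral_sub i12.integrableOn i3.integrableOn,
          integral_sub i1.integrableOn i2.integrableOn, j3 D hD, setIntegral_indicator hB,
          setIntegral_const, setIntegral_const]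
        simp [mul_comm]
      rw [← e]
      refine (enorm_integral_le_lintegral_enorm _).trans ((setLIntegral_le_lintegral _ _).trans ?_)
      refine (lintegral_congr_ae ?_).le
      filter_upwards [hy3] with x hx
      rw [hx]
    have h0 : ‖(κ y).real (D ∩ B) - v y * (κ y).real D‖ₑ = 0 :=
      le_antisymm ((le_iInf hle).trans hy1.le) zero_le
    rw [enorm_eq_zero] at h0
    exact sub_eq_zero.1 h0
  intro D hD
  have hu := key univ MeasurableSet.univ
  simp only [univ_inter, probReal_univ, mul_one] at hu
  rw [key D hD, hu, mul_comm]

theorem ae_ergodic (h : InvDis G μ κ) [IsProbabilityMeasure μ] [Countable G]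
    [StandardBorelSpace X]
    (hmeas : ∀ g : G, Measurable (fun x : X => g • x)) (hμ : IsPmp G μ) :
    ∀ᵐ y ∂μ, IsErgodicInv G (κ y) := by
  let C := generateSetAlgebra (MeasurableSpace.countableGeneratingSet X)
  have hC : C.Countable := countable_generateSetAlgebra
    (MeasurableSpace.countable_countableGeneratingSet (α := X))
  have hgen : mX = MeasurableSpace.generateFrom C := by
    rw [generateFrom_generateSetAlgebra_eq, MeasurableSpace.generateFrom_countableGeneratingSet]
  have hCm : ∀ B ∈ C, MeasurableSet B := fun B hB => by
    rw [hgen]; exact MeasurableSpace.measurableSet_generateFrom hB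
  have key := (ae_ball_iff hC).2 fun B hB => h.ae_indep hmeas hμ (hCm B hB)
  filter_upwards [key] with y hy D hDm hDi
  have hprob := h.prob y
  have hD : MeasurableSet[invSigma G X] D := (measurableSet_invSigma_iff D).2 ⟨hDm, hDi⟩
  have e : (κ y).restrict D = (κ y D) • (κ y) := by
    refine ext_of_generate_finite C hgen ?_ ?_ ?_
    · intro s hs t ht _
      exact isSetAlgebra_generateSetAlgebra.inter_mem hs ht
    · intro B hB
      have h1 := hy B hB D hD
      rw [Measure.restrict_apply (hCm B hB), Measure.smul_apply, smul_eq_mul, inter_comm]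
      rw [measureReal_def, measureReal_def, measureReal_def, ← ENNReal.toReal_mul] at h1
      exact (ENNReal.toReal_eq_toReal_iff' (measure_ne_top _ _)
        (ENNReal.mul_ne_top (measure_ne_top _ _) (measure_ne_top _ _))).1 h1
    · simp
  have e2 := congrArg (fun ρ => ρ D) e
  simp only [Measure.restrict_apply_self, Measure.smul_apply, smul_eq_mul] at e2
  by_cases h0 : κ y D = 0
  · exact Or.inl h0
  · right
    have h3 : κ y D * 1 = κ y D * κ y D := by rw [mul_one]; exact e2
    exact ((ENNReal.mul_right_inj h0 (measure_ne_top _ _)).1 h3).symm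

end InvDis

/-- from Lemma 3.4: if a Borel set agrees with a `Σ`-measurable set
modulo null sets for every invariant ergodic measure, then for every invariant measure it
agrees with a set measurable in the σ-algebra generated by `I_G ∪ Σ`. -/
theorem statement3 {G X : Type*} (S : MeasurableSpace X) [Group G] [Countable G]
    [mX : MeasurableSpace X] [StandardBorelSpace X] [MulAction G X]
    (hmeas : ∀ g : G, Measurable (fun x : X => g • x))
    (hS : S ≤ mX) (hScg : CountablyGen S)
    (A : Set X) (hA : MeasurableSet A)
    (herg : ∀ ν : Measure X, IsProbabilityMeasure ν → IsPmp G ν → IsErgodicInv G ν →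
      ∃ B, MeasurableSet[S] B ∧ ν (A ∆ B) = 0) :
    ∀ μ : Measure X, IsProbabilityMeasure μ → IsPmp G μ →
      ∃ C, MeasurableSet[invSigma G X ⊔ S] C ∧ μ (A ∆ C) = 0 := by
  intro μ hμ hpmp
  obtain ⟨κ, h⟩ := exists_invDis G μ
  obtain ⟨S0, hS0, hSgen⟩ := hScg
  have hCc : (generateSetAlgebra S0).Countable := countable_generateSetAlgebra hS0
  have hgen : S = MeasurableSpace.generateFrom (generateSetAlgebra S0) := by
    rw [generateFrom_generateSetAlgebra_eq, hSgen]
  obtain ⟨E, hE⟩ := hCc.exists_eq_range ⟨∅, isSetAlgebra_generateSetAlgebra.empty_mem⟩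
  have hES : ∀ n, MeasurableSet[S] (E n) := fun n => by
    rw [hgen]
    exact MeasurableSpace.measurableSet_generateFrom (hE ▸ mem_range_self n)
  have hEm : ∀ n, MeasurableSet (E n) := fun n => hS _ (hES n)
  have hAE : ∀ n, MeasurableSet (A ∆ E n) := fun n => hA.symmDiff (hEm n)
  have hclose : ∀ᵐ y ∂μ, ∀ ε : ℝ, 0 < ε → ∃ n, κ y (A ∆ E n) < ENNReal.ofReal ε := by
    filter_upwards [h.ae_pmp hmeas hpmp, h.ae_ergodic hmeas hpmp] with y hy1 hy2 ε hε
    have hprob := h.prob y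
    obtain ⟨B, hB, hAB⟩ := herg (κ y) hprob hy1 hy2
    have hdense := @Measure.MeasureDense.of_generateFrom_isSetAlgebra_finite X S
      ((κ y).trim hS) (generateSetAlgebra S0) (isFiniteMeasure_trim hS)
      isSetAlgebra_generateSetAlgebra hgen
    obtain ⟨t, ht, htB⟩ := @Measure.MeasureDense.approx X S _ _ hdense B hB
      (by rw [trim_measurableSet_eq hS hB]; exact measure_ne_top _ _) ε hε
    rw [hE] at ht
    obtain ⟨n, rfl⟩ := ht
    have hBE : MeasurableSet[S] (B ∆ E n) :=
      @MeasurableSet.symmDiff X S _ _ hB (hES n)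
    rw [trim_measurableSet_eq hS hBE] at htB
    refine ⟨n, lt_of_le_of_lt ?_ htB⟩
    calc κ y (A ∆ E n) ≤ κ y (A ∆ B ∪ B ∆ E n) := measure_mono (symmDiff_triangle A B (E n))
      _ ≤ κ y (A ∆ B) + κ y (B ∆ E n) := measure_union_le _ _
      _ = κ y (B ∆ E n) := by rw [hAB, zero_add]
  have happ : ∀ ε : ℝ, 0 < ε → ∃ C, MeasurableSet[invSigma G X ⊔ S] C ∧
      μ (A ∆ C) ≤ ENNReal.ofReal ε := by
    intro ε hε
    let P : ℕ → Set X := fun n => {y | κ y (A ∆ E n) < ENNReal.ofReal ε}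
    have hP : ∀ n, MeasurableSet[invSigma G X] (P n) := fun n =>
      h.meas _ (hAE n) measurableSet_Iio
    let Q : ℕ → Set X := disjointed P
    have hQ : ∀ n, MeasurableSet[invSigma G X] (Q n) := fun n =>
      @MeasurableSet.disjointed X (invSigma G X) P hP n
    have hQm : ∀ n, MeasurableSet (Q n) := fun n => invSigma_le _ (hQ n)
    have hQd : Pairwise (Function.onFun Disjoint Q) := disjoint_disjointed P
    refine ⟨⋃ n, Q n ∩ E n, ?_, ?_⟩
    · refine MeasurableSet.iUnion fun n => ?_
      exact MeasurableSet.inter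
        ((le_sup_left : invSigma G X ≤ invSigma G X ⊔ S) _ (hQ n))
        ((le_sup_right : S ≤ invSigma G X ⊔ S) _ (hES n))
    · have hsub : A ∆ (⋃ n, Q n ∩ E n) ⊆ (⋃ n, P n)ᶜ ∪ ⋃ n, (Q n ∩ A ∆ E n) := by
        intro x hx
        by_cases hxP : x ∈ ⋃ n, P n
        · right
          have hxQ : x ∈ ⋃ n, Q n := by rwa [iUnion_disjointed]
          obtain ⟨n, hn⟩ := mem_iUnion.1 hxQ
          refine mem_iUnion.2 ⟨n, hn, ?_⟩
          have hiff : x ∈ (⋃ n, Q n ∩ E n) ↔ x ∈ E n := by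
            constructor
            · intro hx'
              obtain ⟨m, hm, hmE⟩ := mem_iUnion.1 hx'
              have hmn : m = n := by
                by_contra hne
                exact Set.disjoint_left.1 (hQd hne) hm hn
              exact hmn ▸ hmE
            · exact fun hx' => mem_iUnion.2 ⟨n, hn, hx'⟩
          rw [Set.mem_symmDiff] at hx ⊢
          rwa [hiff] at hx
        · exact Or.inl hxP
      have hnull : μ (⋃ n, P n)ᶜ = 0 := by
        have : ∀ᵐ y ∂μ, y ∈ ⋃ n, P n := by
          filter_upwards [hclose] with y hy
          exact mem_iUnion.2 (hy ε hε)
        exact this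
      have hpiece : ∀ n, μ (Q n ∩ A ∆ E n) ≤ ENNReal.ofReal ε * μ (Q n) := by
        intro n
        rw [← h.int _ _ (hQ n) (hAE n), ← setLIntegral_const]
        refine setLIntegral_mono measurable_const fun y hy => ?_
        have : y ∈ P n := disjointed_le P n hy
        exact le_of_lt this
      calc μ (A ∆ (⋃ n, Q n ∩ E n)) ≤ μ ((⋃ n, P n)ᶜ ∪ ⋃ n, (Q n ∩ A ∆ E n)) :=
            measure_mono hsub
        _ ≤ μ (⋃ n, P n)ᶜ + μ (⋃ n, (Q n ∩ A ∆ E n)) := measure_union_le _ _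
        _ = μ (⋃ n, (Q n ∩ A ∆ E n)) := by rw [hnull, zero_add]
        _ ≤ ∑' n, μ (Q n ∩ A ∆ E n) := measure_iUnion_le _
        _ ≤ ∑' n, ENNReal.ofReal ε * μ (Q n) := ENNReal.tsum_le_tsum hpiece
        _ = ENNReal.ofReal ε * μ (⋃ n, Q n) := by
            rw [ENNReal.tsum_mul_left, measure_iUnion hQd hQm]
        _ ≤ ENNReal.ofReal ε * 1 := by gcongr; exact prob_le_one
        _ = ENNReal.ofReal ε := mul_one _
  choose C hC hCA using fun n : ℕ => happ ((1 / 2 : ℝ) ^ n) (by positivity)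
  have hsum : ∑' n, μ (A ∆ C n) ≠ ∞ := by
    refine ne_top_of_le_ne_top ?_ (ENNReal.tsum_le_tsum hCA)
    rw [← ENNReal.ofReal_tsum_of_nonneg (fun n => by positivity) summable_geometric_two]
    exact ENNReal.ofReal_ne_top
  have hae := ae_eventually_notMem hsum
  refine ⟨⋂ n, ⋃ m, C (n + m), ?_, ?_⟩
  · exact MeasurableSet.iInter fun n => MeasurableSet.iUnion fun m => hC _
  · rw [measure_eq_zero_iff_ae_notMem]
    filter_upwards [hae] with x hx
    obtain ⟨N, hN⟩ := Filter.eventually_atTop.1 hx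
    have hN' : ∀ n ≥ N, (x ∈ A ↔ x ∈ C n) := by
      intro n hn
      have := hN n hn
      rw [Set.mem_symmDiff] at this
      tauto
    have hiff : x ∈ (⋂ n, ⋃ m, C (n + m)) ↔ x ∈ A := by
      simp only [mem_iInter, mem_iUnion]
      constructor
      · intro hx'
        obtain ⟨m, hm⟩ := hx' N
        exact (hN' _ (by omega)).2 hm
      · intro hx' n
        exact ⟨N, (hN' _ (by omega)).1 hx'⟩
    rw [Set.mem_symmDiff, hiff]
    tauto
end

section
/- Let G ↷ (X, μ) be a pmp action of a countable group, and suppose x ↦ π_x is an ergodic decomposition map for μ with τ = π_*μ. Let α = {A_i : i ∈ ℕ} be a countable Borel partition of X and define θ^α : X → ℕ^G by θ^α(x)(g) = i if and only if g⁻¹·x ∈ A_i, where G acts on ℕ^G by (g·y)(t) = y(g⁻¹t). If the map ν ↦ θ^α_*(ν) is injective on a τ-conull set of ergodic measures, then every G-invariant Borel set agrees modulo a μ-null set with a set in σ_G(α). -/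
open MeasureTheory Set Function
open scoped ENNReal symmDiff

/-- Pull-out property, integrated. -/
lemma aux_pull {X : Type*} {m mX : MeasurableSpace X} (hm : m ≤ mX) (μ : Measure X)
    [IsProbabilityMeasure μ] {u v : X → ℝ} (hu : AEStronglyMeasurable[m] u μ)
    (hub : ∀ᵐ x ∂μ, ‖u x‖ ≤ 1) (hv : Integrable v μ) :
    ∫ x, u x * v x ∂μ = ∫ x, u x * (μ[v|m]) x ∂μ := by
  have h := condExp_stronglyMeasurable_mul_of_bound₀ hm hu hv 1 hub
  have h2 : ∫ x, (μ[u * v|m]) x ∂μ = ∫ x, (u * v) x ∂μ := integral_condExp hm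
  calc ∫ x, u x * v x ∂μ = ∫ x, (u * v) x ∂μ := rfl
    _ = ∫ x, (μ[u * v|m]) x ∂μ := h2.symm
    _ = ∫ x, (u * μ[v|m]) x ∂μ := integral_congr_ae h
    _ = _ := rfl

lemma aux_bdd {X : Type*} {m mX : MeasurableSpace X} (μ : Measure X)
    {f : X → ℝ} (hf : ∀ᵐ x ∂μ, ‖f x‖ ≤ 1) : ∀ᵐ x ∂μ, ‖(μ[f|m]) x‖ ≤ 1 := by
  have := ae_bdd_abs_condExp_of_ae_bdd_abs (R := 1) (m := m) (μ := μ) (f := f) (by simpa using hf)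
  simpa using this

/-- Commuting conditional expectations. -/
lemma aux_commute {X : Type*} {S I mX : MeasurableSpace X} (hS : S ≤ mX) (hI : I ≤ mX)
    (μ : Measure X) [IsProbabilityMeasure μ] {f p : X → ℝ}
    (hf : StronglyMeasurable[S] f) (hfb : ∀ x, ‖f x‖ ≤ 1)
    (hp : p =ᵐ[μ] μ[f|I]) (hq : AEStronglyMeasurable[I] (μ[p|S]) μ) :
    p =ᵐ[μ] μ[p|S] := by
  have hfi : Integrable f μ :=
    Integrable.of_bound (hf.mono hS).aestronglyMeasurable 1 (Filter.Eventually.of_forall hfb)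
  have hpi : Integrable p μ := integrable_condExp.congr hp.symm
  have hpI : AEStronglyMeasurable[I] p μ :=
    ⟨μ[f|I], stronglyMeasurable_condExp, hp⟩
  have hpb : ∀ᵐ x ∂μ, ‖p x‖ ≤ 1 := by
    filter_upwards [hp, aux_bdd (m := I) μ (Filter.Eventually.of_forall hfb)] with x h1 h2
    rw [h1]; exact h2
  have hqb : ∀ᵐ x ∂μ, ‖(μ[p|S]) x‖ ≤ 1 := aux_bdd μ hpb
  set q := μ[p|S] with hqdef
  have hqi : Integrable q μ := integrable_condExp
  have e1 : ∫ x, p x * f x ∂μ = ∫ x, p x * p x ∂μ := by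
    rw [aux_pull hI μ hpI hpb hfi]
    exact integral_congr_ae (hp.mono fun x hx => by simp only [hx])
  have e2 : ∫ x, f x * p x ∂μ = ∫ x, f x * q x ∂μ :=
    aux_pull hS μ hf.aestronglyMeasurable (Filter.Eventually.of_forall hfb) hpi
  have e3 : ∫ x, q x * f x ∂μ = ∫ x, q x * p x ∂μ := by
    rw [aux_pull hI μ hq hqb hfi]
    exact integral_congr_ae (hp.mono fun x hx => by simp only [hx])
  have e4 : ∫ x, q x * p x ∂μ = ∫ x, q x * q x ∂μ :=
    aux_pull hS μ stronglyMeasurable_condExp.aestronglyMeasurable hqb hpi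
  have i1 : Integrable (fun x => p x * p x) μ := hpi.bdd_mul hpi.aestronglyMeasurable hpb
  have i2 : Integrable (fun x => q x * p x) μ := hpi.bdd_mul hqi.aestronglyMeasurable hqb
  have i3 : Integrable (fun x => q x * q x) μ := hqi.bdd_mul hqi.aestronglyMeasurable hqb
  have e2' : ∫ x, p x * f x ∂μ = ∫ x, q x * f x ∂μ := by
    simpa only [mul_comm] using e2
  have hz : ∫ x, (p x - q x) ^ 2 ∂μ = 0 := by
    have : (fun x => (p x - q x) ^ 2) =
        fun x => (p x * p x - q x * p x) - (q x * p x - q x * q x) := by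
      funext x; ring
    have j1 : Integrable (fun x => p x * p x - q x * p x) μ := i1.sub i2
    have j2 : Integrable (fun x => q x * p x - q x * q x) μ := i2.sub i3
    rw [this, integral_sub j1 j2, integral_sub i1 i2, integral_sub i2 i3]
    linarith
  have hint : Integrable (fun x => (p x - q x) ^ 2) μ := by
    have : (fun x => (p x - q x) ^ 2) =
        fun x => (p x * p x - q x * p x) - (q x * p x - q x * q x) := by
      funext x; ring
    rw [this]; exact (i1.sub i2).sub (i2.sub i3)
  have := (integral_eq_zero_iff_of_nonneg (fun x => sq_nonneg (p x - q x)) hint).1 hz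
  filter_upwards [this] with x hx
  have : (p x - q x) ^ 2 = 0 := hx
  exact sub_eq_zero.1 (pow_eq_zero_iff (by norm_num) |>.1 this)

/-- A countable π-system. -/
lemma aux_pi (X : Type*) [mX : MeasurableSpace X] [MeasurableSpace.CountablyGenerated X] :
    ∃ K : ℕ → Set X, (∀ n, MeasurableSet (K n)) ∧ IsPiSystem (range K) ∧
      mX = MeasurableSpace.generateFrom (range K) := by
  obtain ⟨b, hb, hbg⟩ := MeasurableSpace.CountablyGenerated.isCountablyGenerated (α := X)
  have hc := countable_generateSetAlgebra hb
  have hne : (generateSetAlgebra b).Nonempty := ⟨∅, isSetAlgebra_generateSetAlgebra.empty_mem⟩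
  obtain ⟨K, hK⟩ := hc.exists_eq_range hne
  have hg : mX = MeasurableSpace.generateFrom (range K) := by
    rw [← hK, generateFrom_generateSetAlgebra_eq, hbg]
  refine ⟨K, fun n => ?_, ?_, hg⟩
  · rw [hg]; exact MeasurableSpace.measurableSet_generateFrom ⟨n, rfl⟩
  · rw [← hK]
    intro s hs t ht _
    exact isSetAlgebra_generateSetAlgebra.inter_mem hs ht

lemma aux_ae_eq {G X : Type*} [Group G]
    [mX : MeasurableSpace X] [StandardBorelSpace X] [MulAction G X]
    {μ : Measure X} {π : X → Measure X} (hπ : IsErgDecomp G μ π) (x : X) :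
    ∀ᵐ y ∂(π x), π y = π x := by
  obtain ⟨hm, hp, -, h4, -⟩ := hπ
  obtain ⟨K, hK, hKpi, hKg⟩ := aux_pi X
  have := (hp x).1
  have hset : {y | π y = π x} = ⋂ n, {y | π y (K n) = π x (K n)} := by
    ext y
    simp only [mem_ofPred_eq, mem_iInter]
    refine ⟨fun h n => by rw [h], fun h => ?_⟩
    have := (hp y).1
    refine ext_of_generate_finite _ hKg hKpi ?_ (by simp)
    rintro _ ⟨n, rfl⟩
    exact h n
  have hmeas : MeasurableSet {y | π y = π x} := by
    rw [hset]
    exact MeasurableSet.iInter fun n =>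
      ((Measure.measurable_coe (hK n)).comp hm) (measurableSet_singleton _)
  exact (mem_ae_iff_prob_eq_one hmeas).2 (h4 _ (hp x).1 (hp x).2.1 (hp x).2.2)

lemma aux_D {G X : Type*} [Group G]
    [mX : MeasurableSpace X] [StandardBorelSpace X] [MulAction G X]
    {μ : Measure X} {π : X → Measure X} (hπ : IsErgDecomp G μ π)
    {B : Set X} (hB : MeasurableSet B) (hBi : ∀ g : G, (fun x => g • x) ⁻¹' B = B) :
    MeasurableSet {x | π x B = 1} ∧ μ (B ∆ {x | π x B = 1}) = 0 := by
  have hD : MeasurableSet {x | π x B = 1} :=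
    ((Measure.measurable_coe hB).comp hπ.1) (measurableSet_singleton _)
  refine ⟨hD, ?_⟩
  have hms : Measurable (fun x => π x (B ∆ {x | π x B = 1})) :=
    (Measure.measurable_coe (hB.symmDiff hD)).comp hπ.1
  rw [hπ.2.2.2.2 _ (hB.symmDiff hD), lintegral_eq_zero_iff hms]
  refine Filter.Eventually.of_forall fun x => ?_
  have := (hπ.2.1 x).1
  rw [Pi.zero_apply, measure_symmDiff_eq_zero_iff]
  have hx := aux_ae_eq hπ x
  rcases (hπ.2.1 x).2.2 B hB hBi with h | h
  · have hB0 : ∀ᵐ y ∂(π x), y ∉ B := measure_eq_zero_iff_ae_notMem.1 h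
    filter_upwards [hx, hB0] with y hy hyB
    apply propext
    change y ∈ B ↔ π y B = 1
    simp [hyB, hy, h]
  · have hB1 : ∀ᵐ y ∂(π x), y ∈ B := (mem_ae_iff_prob_eq_one hB).2 h
    filter_upwards [hx, hB1] with y hy hyB
    apply propext
    change y ∈ B ↔ π y B = 1
    simp [hyB, hy, h]

lemma aux_inv {G X : Type*} [Group G] [mX : MeasurableSpace X] [MulAction G X]
    {J : Set X} (hJ : MeasurableSet[invSigma G X] J) :
    MeasurableSet J ∧ ∀ g : G, (fun x => g • x) ⁻¹' J = J := by
  induction J, hJ using MeasurableSpace.generateFrom_induction with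
  | hC t ht _ => exact ht
  | empty => exact ⟨MeasurableSet.empty, fun g => by simp⟩
  | compl t _ h => exact ⟨h.1.compl, fun g => by rw [preimage_compl, h.2]⟩
  | iUnion s _ h =>
    exact ⟨MeasurableSet.iUnion fun n => (h n).1, fun g => by
      rw [preimage_iUnion]; exact iUnion_congr fun n => (h n).2 g⟩

lemma aux_inv_meas {G X : Type*} [Group G] [mX : MeasurableSpace X] [MulAction G X]
    {k : X → ℝ} (hk : Measurable k) (hki : ∀ (g : G) x, k (g • x) = k x) :
    StronglyMeasurable[invSigma G X] k := by
  refine Measurable.stronglyMeasurable (mα := invSigma G X) ?_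
  intro s hs
  refine MeasurableSpace.measurableSet_generateFrom ⟨hk hs, fun g => ?_⟩
  ext x; simp [hki]

/-- `x ↦ π x A` is the conditional expectation on the invariant algebra. -/
lemma aux_cond {G X : Type*} [Group G]
    [mX : MeasurableSpace X] [StandardBorelSpace X] [MulAction G X]
    {μ : Measure X} [IsProbabilityMeasure μ] {π : X → Measure X} (hπ : IsErgDecomp G μ π)
    {A : Set X} (hA : MeasurableSet A) :
    (fun x => (π x A).toReal) =ᵐ[μ] μ[A.indicator (fun _ => (1 : ℝ)) | invSigma G X] := by
  have hI : invSigma G X ≤ mX := fun J hJ => (aux_inv hJ).1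
  have hpm : Measurable (fun x => π x A) := (Measure.measurable_coe hA).comp hπ.1
  have hle : ∀ x, π x A ≤ 1 := fun x => by
    have := (hπ.2.1 x).1
    exact prob_le_one
  have hpi : Integrable (fun x => (π x A).toReal) μ := by
    refine Integrable.of_bound hpm.ennreal_toReal.aestronglyMeasurable 1
      (Filter.Eventually.of_forall fun x => ?_)
    simpa using ENNReal.toReal_mono ENNReal.one_ne_top (hle x)
  refine ae_eq_condExp_of_forall_setIntegral_eq hI ((integrable_const 1).indicator hA)
    (fun s _ _ => hpi.integrableOn) (fun J hJ _ => ?_)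
    (aux_inv_meas hpm.ennreal_toReal (fun g x => by rw [hπ.2.2.1])).aestronglyMeasurable
  obtain ⟨hJm, hJi⟩ := aux_inv hJ
  obtain ⟨hD, hJD⟩ := aux_D hπ hJm hJi
  set D := {x | π x J = 1} with hDdef
  have hae : J =ᵐ[μ] D := measure_symmDiff_eq_zero_iff.1 hJD
  rw [setIntegral_congr_set hae, setIntegral_congr_set hae]
  rw [integral_indicator_const _ hA]
  rw [integral_toReal hpm.aemeasurable
    (Filter.Eventually.of_forall fun x => (hle x).trans_lt ENNReal.one_lt_top)]
  rw [measureReal_def, smul_eq_mul, mul_one, Measure.restrict_apply hA]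
  congr 1
  rw [hπ.2.2.2.2 _ (hA.inter hD), ← lintegral_indicator hD]
  refine lintegral_congr fun x => ?_
  have hx := aux_ae_eq hπ x
  by_cases hxD : x ∈ D
  · rw [indicator_of_mem hxD]
    refine measure_congr ?_
    filter_upwards [hx] with y hy
    apply propext
    have : y ∈ D := by
      rw [hDdef, mem_ofPred_eq, hy]; exact hxD
    exact ⟨fun h => ⟨h, this⟩, fun h => h.1⟩
  · rw [indicator_of_notMem hxD]
    symm
    rw [measure_eq_zero_iff_ae_notMem]
    filter_upwards [hx] with y hy hyD
    apply hxD
    have := hyD.2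
    rw [hDdef, mem_ofPred_eq, hy] at this
    exact this

/-- Conditional expectation of an invariant function on an invariant algebra is
a.e. equal to an invariant function. -/
lemma aux_equiv {G X : Type*} [Group G] [Countable G]
    {S : MeasurableSpace X} [mX : MeasurableSpace X] [MulAction G X]
    {μ : Measure X} [IsProbabilityMeasure μ] (hpmp : IsPmp G μ)
    (hS : S ≤ mX) (hSi : InvariantAlg G S)
    {p : X → ℝ} (hp : Integrable p μ) (hpi : ∀ (g : G) x, p (g • x) = p x) :
    AEStronglyMeasurable[invSigma G X] (μ[p|S]) μ := by
  have hqm : StronglyMeasurable[S] (μ[p|S]) := stronglyMeasurable_condExp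
  have hqi : Integrable (μ[p|S]) μ := integrable_condExp
  have hset : ∀ s, MeasurableSet[S] s → ∫ x in s, (μ[p|S]) x ∂μ = ∫ x in s, p x ∂μ :=
    fun s hs => setIntegral_condExp hS hp hs
  have key : ∀ g : G, (fun x => (μ[p|S]) (g • x)) =ᵐ[μ] μ[p|S] := by
    intro g
    let e : X ≃ᵐ X :=
      { toEquiv := MulAction.toPerm g
        measurable_toFun := (hpmp g).measurable
        measurable_invFun := (hpmp g⁻¹).measurable }
    have hemb : MeasurableEmbedding (fun x : X => g • x) := e.measurableEmbedding
    have hcomp : StronglyMeasurable[S] (fun x => (μ[p|S]) (g • x)) := by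
      refine Measurable.stronglyMeasurable (mα := S) ?_
      intro s hs
      exact hSi g _ (hqm.measurable hs)
    refine ae_eq_condExp_of_forall_setIntegral_eq hS hp
      (fun s _ _ => ((hpmp g).integrable_comp_of_integrable hqi).integrableOn)
      (fun s hs _ => ?_) hcomp.aestronglyMeasurable
    have hs' : s = (fun x => g • x) ⁻¹' ((fun x => g⁻¹ • x) ⁻¹' s) := by
      ext x; simp
    have h1 := (hpmp g).setIntegral_preimage_emb hemb (μ[p|S]) ((fun x => g⁻¹ • x) ⁻¹' s)
    have h2 := (hpmp g).setIntegral_preimage_emb hemb p ((fun x => g⁻¹ • x) ⁻¹' s)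
    rw [← hs'] at h1 h2
    rw [h1, hset _ (hSi g⁻¹ s hs), ← h2]
    simp only [hpi]
  set q := μ[p|S] with hqdef
  have hqm' : Measurable q := (hqm.mono hS).measurable
  let T : Set X := {x | ∀ g : G, q (g • x) = q x}
  have hT : MeasurableSet T := by
    have : T = ⋂ g : G, {x | q (g • x) = q x} := by ext x; simp [T]
    rw [this]
    exact MeasurableSet.iInter fun g =>
      measurableSet_eq_fun (hqm'.comp (hpmp g).measurable) hqm'
  have hTi : ∀ (g : G) x, g • x ∈ T ↔ x ∈ T := by
    intro g x
    constructor
    · intro h g'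
      have h1 := h (g' * g⁻¹)
      have h2 := h g⁻¹
      simp only [smul_smul, inv_mul_cancel_right, inv_mul_cancel, one_smul] at h1 h2
      rw [h1, h2]
    · intro h g'
      rw [smul_smul, h, h]
  have hTae : ∀ᵐ x ∂μ, x ∈ T := by
    have := ae_all_iff.2 key
    filter_upwards [this] with x hx using hx
  refine ⟨T.indicator q, aux_inv_meas (hqm'.indicator hT) ?_, ?_⟩
  · intro g x
    by_cases hx : x ∈ T
    · rw [indicator_of_mem hx, indicator_of_mem ((hTi g x).2 hx)]
      exact hx g
    · rw [indicator_of_notMem hx, indicator_of_notMem (fun h => hx ((hTi g x).1 h))]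
  · filter_upwards [hTae] with x hx
    rw [indicator_of_mem hx]

lemma aux_main {G X : Type*} [Group G] [Countable G] {S : MeasurableSpace X}
    [mX : MeasurableSpace X] [StandardBorelSpace X] [MulAction G X]
    (μ : Measure X) [IsProbabilityMeasure μ] (hpmp : IsPmp G μ)
    (π : X → Measure X) (hπ : IsErgDecomp G μ π)
    (θ : X → G → ℕ) (hθmeas : Measurable θ)
    (E : Set (Measure X)) (hE : (μ.map π) Eᶜ = 0)
    (hinj : Set.InjOn (fun ν : Measure X => Measure.map θ ν) E)
    (hS : S ≤ mX) (hSi : InvariantAlg G S) (hθS : @Measurable X (G → ℕ) S _ θ)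
    (B : Set X) (hB : MeasurableSet B) (hBi : ∀ g : G, (fun x => g • x) ⁻¹' B = B) :
    ∃ C, MeasurableSet[S] C ∧ μ (B ∆ C) = 0 := by
  have hI : invSigma G X ≤ mX := fun J hJ => (aux_inv hJ).1
  obtain ⟨K, hK, hKpi, hKg⟩ := aux_pi (G → ℕ)
  have hle : ∀ x A, π x A ≤ 1 := fun x A => by
    have := (hπ.2.1 x).1
    exact prob_le_one
  -- the coding map
  let F : X → ℕ → ℝ := fun x n => (π x (θ ⁻¹' K n)).toReal
  have hFn : ∀ n, Measurable (fun x => F x n) := fun n =>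
    ((Measure.measurable_coe (hθmeas (hK n))).comp hπ.1).ennreal_toReal
  have hF : Measurable F := measurable_pi_lambda _ hFn
  let Ψ : X → ℕ → ℝ := fun x n => (μ[fun x => F x n | S]) x
  have hΨ : @Measurable X (ℕ → ℝ) S _ Ψ :=
    @measurable_pi_lambda X ℕ (fun _ => ℝ) S _ Ψ fun n =>
      (stronglyMeasurable_condExp (m := S)).measurable
  have hFΨ : ∀ᵐ x ∂μ, F x = Ψ x := by
    have : ∀ n, (fun x => F x n) =ᵐ[μ] μ[fun x => F x n | S] := by
      intro n
      have hKS : MeasurableSet[S] (θ ⁻¹' K n) := hθS (hK n)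
      refine aux_commute (I := invSigma G X) hS hI μ
        (f := (θ ⁻¹' K n).indicator (fun _ => (1 : ℝ))) ?_ ?_
        (aux_cond hπ (hθmeas (hK n))) ?_
      · exact stronglyMeasurable_const.indicator hKS
      · intro x
        by_cases hx : x ∈ θ ⁻¹' K n
        · rw [indicator_of_mem hx]; simp
        · rw [indicator_of_notMem hx]; simp
      · refine aux_equiv hpmp hS hSi ?_ ?_
        · refine Integrable.of_bound (hFn n).aestronglyMeasurable 1
            (Filter.Eventually.of_forall fun x => ?_)
          simpa [F] using ENNReal.toReal_mono ENNReal.one_ne_top (hle x _)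
        · intro g x
          simp only [F, hπ.2.2.1]
    filter_upwards [ae_all_iff.2 this] with x hx
    exact funext hx
  obtain ⟨hD, hBD⟩ := aux_D hπ hB hBi
  set D := {x | π x B = 1} with hDdef
  -- conull measurable set on which `π x ∈ E`
  have hE' : ∀ᵐ x ∂μ, π x ∈ E := by
    have h : ∀ᵐ ν ∂(μ.map π), ν ∈ E := hE
    exact ae_of_ae_map hπ.1.aemeasurable h
  obtain ⟨X0, hX0E, hX0m, hX0⟩ : ∃ X0 : Set X, (∀ x ∈ X0, π x ∈ E) ∧ MeasurableSet X0 ∧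
      ∀ᵐ x ∂μ, x ∈ X0 := by
    obtain ⟨t, ht, htm, htμ⟩ := exists_measurable_superset_of_null (mem_ae_iff.1 hE')
    refine ⟨tᶜ, fun x hx => ?_, htm.compl, ?_⟩
    · by_contra h
      exact hx (ht h)
    · exact measure_eq_zero_iff_ae_notMem.1 htμ
  have hFinj : ∀ x ∈ X0, ∀ y ∈ X0, F x = F y → π x = π y := by
    intro x hx y hy h
    refine hinj (hX0E x hx) (hX0E y hy) ?_
    have := (hπ.2.1 x).1
    have := (hπ.2.1 y).1
    have h1 : IsProbabilityMeasure ((π x).map θ) :=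
      Measure.isProbabilityMeasure_map hθmeas.aemeasurable
    have h2 : IsProbabilityMeasure ((π y).map θ) :=
      Measure.isProbabilityMeasure_map hθmeas.aemeasurable
    refine ext_of_generate_finite _ hKg hKpi ?_ (by simp)
    rintro _ ⟨n, rfl⟩
    rw [Measure.map_apply hθmeas (hK n), Measure.map_apply hθmeas (hK n)]
    have := congrFun h n
    exact (ENNReal.toReal_eq_toReal_iff' (measure_ne_top _ _) (measure_ne_top _ _)).1 this
  have hA1 : AnalyticSet (F '' (X0 ∩ D)) := (hX0m.inter hD).analyticSet_image hF
  have hA2 : AnalyticSet (F '' (X0 \ D)) := (hX0m.diff hD).analyticSet_image hF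
  have hdisj : Disjoint (F '' (X0 ∩ D)) (F '' (X0 \ D)) := by
    rw [Set.disjoint_left]
    rintro _ ⟨x, hx, rfl⟩ ⟨y, hy, hxy⟩
    have := hFinj y hy.1 x hx.1 hxy
    apply hy.2
    rw [hDdef, mem_ofPred_eq, this]
    exact hx.2
  obtain ⟨T, hT1, hT2, hT⟩ := hA1.measurablySeparable hA2 hdisj
  refine ⟨Ψ ⁻¹' T, hΨ hT, ?_⟩
  rw [measure_symmDiff_eq_zero_iff] at hBD ⊢
  refine hBD.trans ?_
  filter_upwards [hX0, hFΨ] with x hx hxF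
  apply propext
  change x ∈ D ↔ Ψ x ∈ T
  rw [← hxF]
  constructor
  · intro h; exact hT1 ⟨x, ⟨hx, h⟩, rfl⟩
  · intro h
    by_contra hD
    exact Set.disjoint_left.1 hT2 ⟨x, ⟨hx, hD⟩, rfl⟩ h

/-- Lemma 3.7: if the itinerary pushforwards `ν ↦ θ^α_* ν` are injective
on a conull set of ergodic components, then every `G`-invariant Borel set agrees modulo
`μ`-null sets with a set in `σ_G(α)`. -/
theorem statement4 {G X : Type*} [Group G] [Countable G]
    [mX : MeasurableSpace X] [StandardBorelSpace X] [MulAction G X]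
    (μ : Measure X) [IsProbabilityMeasure μ] (hpmp : IsPmp G μ)
    (π : X → Measure X) (hπ : IsErgDecomp G μ π)
    (α : ℕ → Set X) (hα : IsPartition α)
    (θ : X → G → ℕ) (hθmeas : Measurable θ)
    (hθ : ∀ (x : X) (g : G), g⁻¹ • x ∈ α (θ x g))
    (E : Set (Measure X)) (hE : (μ.map π) Eᶜ = 0)
    (hinj : Set.InjOn (fun ν : Measure X => Measure.map θ ν) E) :
    ∀ B : Set X, MeasurableSet B → (∀ g : G, (fun x => g • x) ⁻¹' B = B) →
      ∃ C, MeasurableSet[sigmaG G (Set.range α)] C ∧ μ (B ∆ C) = 0 := by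
  intro B hB hBi
  have hS : sigmaG G (Set.range α) ≤ mX := by
    refine MeasurableSpace.generateFrom_le ?_
    rintro _ ⟨g, _, ⟨i, rfl⟩, rfl⟩
    exact (hpmp g).measurable (hα.1 i)
  have hSi : InvariantAlg G (sigmaG G (Set.range α)) := by
    intro g A hA
    have : @Measurable X X (sigmaG G (Set.range α)) (sigmaG G (Set.range α)) (fun x => g • x) := by
      refine @measurable_generateFrom X X (sigmaG G (Set.range α)) _ _ ?_
      rintro _ ⟨g', A, hA, rfl⟩
      refine MeasurableSpace.measurableSet_generateFrom ⟨g' * g, A, hA, ?_⟩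
      ext x; simp [mul_smul]
    exact this hA
  have hθS : @Measurable X (G → ℕ) (sigmaG G (Set.range α)) _ θ := by
    refine @measurable_pi_lambda X G (fun _ => ℕ) (sigmaG G (Set.range α)) _ θ fun g => ?_
    refine @measurable_to_countable' ℕ X _ _ (sigmaG G (Set.range α)) _ fun i => ?_
    refine MeasurableSpace.measurableSet_generateFrom ⟨g⁻¹, α i, ⟨i, rfl⟩, ?_⟩
    ext x
    simp only [mem_preimage, mem_singleton_iff]
    constructor
    · rintro rfl; exact hθ x g
    · intro h
      by_contra hne
      exact Set.disjoint_left.1 (hα.2.1 hne) (hθ x g) h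
  exact aux_main μ hpmp π hπ θ hθmeas E hE hinj hS hSi hθS B hB hBi
end
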